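/- Let 0 < λ ≤ 1 and 0 < α ≤ 1. Then, as T → ∞, the sum of (β − 1/2) over all nontrivial zeros ρ = β + iγ of the Lerch zeta-function L(λ,α,·) with 0 < γ ≤ T (counted with multiplicity) equals (T/(4π))·log(α/λ) + O(log T). -/

import Mathlib

/-- The Dirichlet series of the Lerch zeta-function, convergent for `1 < re s`. -/
noncomputable def lerchSeries (lam alp : ℝ) (s : ℂ) : ℂ :=
  ∑' m : ℕ, Complex.exp (2 * Real.pi * Complex.I * lam * m) / ((m : ℂ) + alp) ^ s

/-- `F` is the analytic continuation of the Lerch zeta-function with parameters `lam`, `alp`: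
it is complex differentiable away from `1` and agrees with the Dirichlet series on `1 < re s`. -/
def IsLerch (lam alp : ℝ) (F : ℂ → ℂ) : Prop :=
  (∀ s : ℂ, s ≠ 1 → DifferentiableAt ℂ F s) ∧
  ∀ s : ℂ, 1 < s.re → F s = lerchSeries lam alp s

open scoped Classical

/-- The multiplicity (order of vanishing) of `F` at `z` (junk value `0` if `F` is not
analytic at `z` or vanishes to infinite order). -/
noncomputable def zeroOrder (F : ℂ → ℂ) (z : ℂ) : ℕ :=
  if h : AnalyticAt ℂ F z then (analyticOrderAt F z).toNat else 0

section P1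
open MeasureTheory Metric Set Filter

lemma jensen_circle_ge {f : ℂ → ℂ} {c : ℂ} {R : ℝ} (hR : 0 < R)
    (hf : AnalyticOnNhd ℂ f (closedBall c R)) (hc : f c ≠ 0) :
    Real.log ‖f c‖ ≤ Real.circleAverage (fun z => Real.log ‖f z‖) c R := by
  have hf' : AnalyticOnNhd ℂ f (closedBall c |R|) := by rwa [abs_of_pos hR]
  rw [hf'.circleAverage_log_norm hR.ne' hc]
  have : 0 ≤ ∑ᶠ u, (MeromorphicOn.divisor f (closedBall c |R|) u : ℝ) * Real.log (R * ‖c - u‖⁻¹) := by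
    apply finsum_nonneg
    intro u
    by_cases hu : u ∈ closedBall c |R|
    · apply mul_nonneg
      · have := (MeromorphicOn.AnalyticOnNhd.divisor_nonneg hf') u
        exact_mod_cast this
      · by_cases h : c = u
        · simp [h]
        · apply Real.log_nonneg
          rw [abs_of_pos hR, mem_closedBall, dist_comm, dist_eq_norm] at hu
          have : 0 < ‖c - u‖ := norm_pos_iff.mpr (sub_ne_zero.mpr h)
          rw [← div_eq_mul_inv, le_div_iff₀ this]; linarith
    · simp [hu]
  linarith

lemma circle_abs_log_le {f : ℂ → ℂ} {c : ℂ} {R M : ℝ} (hR : 0 < R)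
    (hf : AnalyticOnNhd ℂ f (closedBall c R)) (hc : f c ≠ 0) (hM : 1 ≤ M)
    (hb : ∀ z ∈ closedBall c R, ‖f z‖ ≤ M) :
    IntervalIntegrable (fun θ => |Real.log ‖f (circleMap c R θ)‖|) volume (-Real.pi) Real.pi ∧
    ∫ θ in (-Real.pi)..Real.pi, |Real.log ‖f (circleMap c R θ)‖| ≤
      2 * Real.pi * (2 * Real.log M - Real.log ‖f c‖) := by
  have hci : CircleIntegrable (fun z => Real.log ‖f z‖) c R := by
    apply MeromorphicOn.circleIntegrable_log_norm
    rw [abs_of_pos hR]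
    exact (hf.mono sphere_subset_closedBall).meromorphicOn
  have hper : Function.Periodic (fun θ => Real.log ‖f (circleMap c R θ)‖) (2 * Real.pi) := by
    intro x; simp [periodic_circleMap c R x]
  have hci' : IntervalIntegrable (fun θ => Real.log ‖f (circleMap c R θ)‖) volume (-Real.pi) Real.pi := by
    exact hper.intervalIntegrable (t := 0) (by positivity) (by simpa [CircleIntegrable] using hci) _ _
  refine ⟨hci'.abs, ?_⟩
  have h1 : ∫ θ in (-Real.pi)..Real.pi, Real.log ‖f (circleMap c R θ)‖ =
      2 * Real.pi * Real.circleAverage (fun z => Real.log ‖f z‖) c R := by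
    rw [Real.circleAverage_def]
    have := hper.intervalIntegral_add_eq 0 (-Real.pi)
    rw [show -Real.pi + 2 * Real.pi = Real.pi by ring, zero_add] at this
    rw [← this, smul_eq_mul]
    field_simp
  have h2 := jensen_circle_ge hR hf hc
  have h3 : ∫ θ in (-Real.pi)..Real.pi, |Real.log ‖f (circleMap c R θ)‖| ≤
      ∫ θ in (-Real.pi)..Real.pi, (2 * Real.log M - Real.log ‖f (circleMap c R θ)‖) := by
    apply intervalIntegral.integral_mono_on (by linarith [Real.pi_pos]) hci'.abs
      (intervalIntegrable_const.sub hci')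
    intro θ _
    have hlm := Real.log_nonneg hM
    have : Real.log ‖f (circleMap c R θ)‖ ≤ Real.log M := by
      by_cases h0 : f (circleMap c R θ) = 0
      · simpa [h0] using hlm
      · exact Real.log_le_log (norm_pos_iff.mpr h0) (hb _ (circleMap_mem_closedBall c hR.le θ))
    rw [abs_le]; constructor <;> linarith
  refine h3.trans ?_
  rw [intervalIntegral.integral_sub intervalIntegrable_const hci', h1, intervalIntegral.integral_const]
  simp only [smul_eq_mul]
  nlinarith [Real.pi_pos]

lemma lintegral_log_disc {f : ℂ → ℂ} {c : ℂ} {R M : ℝ} (hR : 0 < R)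
    (hf : AnalyticOnNhd ℂ f (closedBall c R)) (hc : f c ≠ 0) (hM : 1 ≤ M)
    (hb : ∀ z ∈ closedBall c R, ‖f z‖ ≤ M) :
    ∫⁻ z in ball c R, ENNReal.ofReal |Real.log ‖f z‖| ≤
      ENNReal.ofReal (R * R * (2 * Real.pi * (2 * Real.log M - Real.log ‖f c‖))) := by
  set B := 2 * Real.pi * (2 * Real.log M - Real.log ‖f c‖) with hB
  have hgm : Measurable ((ball c R).indicator f) :=
    (hf.continuousOn.mono ball_subset_closedBall).measurable_piecewise continuousOn_const
      measurableSet_ball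
  set h : ℂ → ENNReal := (ball c R).indicator (fun z => ENNReal.ofReal |Real.log ‖f z‖|) with hh
  have hhm : Measurable h := by
    have : h = (ball c R).indicator (fun z => ENNReal.ofReal |Real.log ‖(ball c R).indicator f z‖|) := by
      ext z; rw [hh]; by_cases hz : z ∈ ball c R <;> simp only [indicator_of_mem, hz, indicator_of_notMem, not_false_eq_true]
    rw [this]
    apply Measurable.indicator _ measurableSet_ball
    exact (Real.measurable_log.comp hgm.norm).abs.ennreal_ofReal
  rw [← lintegral_indicator measurableSet_ball, ← hh, ← lintegral_add_right_eq_self h c,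
    ← Complex.lintegral_comp_polarCoord_symm]
  have hpc : ∀ p : ℝ × ℝ, Complex.polarCoord.symm p + c = circleMap c p.1 p.2 := by
    intro p
    rw [Complex.polarCoord_symm_apply, circleMap, Complex.exp_mul_I]; push_cast; ring
  simp only [hpc, smul_eq_mul]
  rw [show polarCoord.target = Ioi (0:ℝ) ×ˢ Ioo (-Real.pi) Real.pi from rfl, Measure.volume_eq_prod,
    ← Measure.prod_restrict, lintegral_prod]
  swap
  · apply Measurable.aemeasurable
    apply Measurable.mul (by fun_prop)
    exact hhm.comp (by unfold circleMap; fun_prop)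
  have key : ∀ ρ ∈ Ioi (0:ℝ), ∫⁻ θ in Ioo (-Real.pi) Real.pi, ENNReal.ofReal ρ * h (circleMap c ρ θ) ≤
      (Iio R).indicator (fun _ => ENNReal.ofReal (R * B)) ρ := by
    intro ρ hρ
    rw [mem_Ioi] at hρ
    by_cases hρR : ρ < R
    · rw [indicator_of_mem (by simpa using hρR)]
      have hsub : closedBall c ρ ⊆ closedBall c R := closedBall_subset_closedBall hρR.le
      obtain ⟨i1, i2⟩ := circle_abs_log_le hρ (hf.mono hsub) hc hM (fun z hz => hb z (hsub hz))
      have e1 : ∀ θ, h (circleMap c ρ θ) = ENNReal.ofReal |Real.log ‖f (circleMap c ρ θ)‖| := by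
        intro θ
        rw [hh, indicator_of_mem]
        rw [mem_ball, dist_eq_norm]; simp [circleMap, abs_of_pos hρ, hρR]
      simp only [e1]
      rw [lintegral_const_mul' _ _ ENNReal.ofReal_ne_top, ← ofReal_integral_eq_lintegral_ofReal,
        ← ENNReal.ofReal_mul hρ.le]
      · apply ENNReal.ofReal_le_ofReal
        rw [← integral_Ioc_eq_integral_Ioo, ← intervalIntegral.integral_of_le (by linarith [Real.pi_pos])]
        have : 0 ≤ ∫ θ in (-Real.pi)..Real.pi, |Real.log ‖f (circleMap c ρ θ)‖| :=
          intervalIntegral.integral_nonneg (by linarith [Real.pi_pos]) (fun _ _ => abs_nonneg _)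
        exact mul_le_mul hρR.le i2 this hR.le
      · rw [intervalIntegrable_iff_integrableOn_Ioo_of_le (by linarith [Real.pi_pos])] at i1
        exact i1
      · exact Eventually.of_forall (fun _ => abs_nonneg _)
    · have e1 : ∀ θ, h (circleMap c ρ θ) = 0 := by
        intro θ
        rw [hh, indicator_of_notMem]
        rw [mem_ball, dist_eq_norm]; simp [circleMap, abs_of_pos hρ]; linarith
      simp [e1]
  refine (setLIntegral_mono' measurableSet_Ioi key).trans ?_
  rw [lintegral_indicator measurableSet_Iio, setLIntegral_const, Measure.restrict_apply measurableSet_Iio,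
    Iio_inter_Ioi, Real.volume_Ioo, sub_zero, mul_comm, ← ENNReal.ofReal_mul hR.le, mul_assoc]

lemma integrableOn_log_disc {f : ℂ → ℂ} {c : ℂ} {R M : ℝ} (hR : 0 < R)
    (hf : AnalyticOnNhd ℂ f (closedBall c R)) (hc : f c ≠ 0) (hM : 1 ≤ M)
    (hb : ∀ z ∈ closedBall c R, ‖f z‖ ≤ M) :
    IntegrableOn (fun z => Real.log ‖f z‖) (ball c R) ∧
    ∫ z in ball c R, |Real.log ‖f z‖| ≤ R * R * (2 * Real.pi * (2 * Real.log M - Real.log ‖f c‖)) := by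
  have hl := lintegral_log_disc hR hf hc hM hb
  have hgm : Measurable ((ball c R).indicator f) :=
    (hf.continuousOn.mono ball_subset_closedBall).measurable_piecewise continuousOn_const
      measurableSet_ball
  have hm : AEStronglyMeasurable (fun z => Real.log ‖f z‖) (volume.restrict (ball c R)) := by
    refine ⟨fun z => Real.log ‖(ball c R).indicator f z‖, (Real.measurable_log.comp hgm.norm).stronglyMeasurable, ?_⟩
    filter_upwards [self_mem_ae_restrict measurableSet_ball] with z hz
    rw [indicator_of_mem hz]
  have hnn : 0 ≤ 2 * Real.log M - Real.log ‖f c‖ := by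
    have := Real.log_le_log (norm_pos_iff.mpr hc) (hb c (mem_closedBall_self hR.le))
    have := Real.log_nonneg hM
    linarith
  have hi : IntegrableOn (fun z => Real.log ‖f z‖) (ball c R) := by
    refine ⟨hm, ?_⟩
    rw [hasFiniteIntegral_iff_norm]
    exact lt_of_le_of_lt hl ENNReal.ofReal_lt_top
  refine ⟨hi, ?_⟩
  rw [integral_eq_lintegral_of_nonneg_ae (Eventually.of_forall (fun _ => abs_nonneg _)) hi.abs.aestronglyMeasurable]
  apply ENNReal.toReal_le_of_le_ofReal _ hl
  have := Real.pi_pos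
  positivity

end P1

section P2
open MeasureTheory Metric Set Filter

/-- logarithmic kernel -/
noncomputable def kerK (r : ℝ) (u : ℂ) : ℝ := Real.posLog (r * ‖u‖⁻¹)

/-- the weight: circle average minus the value -/
noncomputable def wtW (φ : ℂ → ℝ) (r : ℝ) (w : ℂ) : ℝ :=
  (2 * Real.pi)⁻¹ * (∫ θ in (0:ℝ)..(2 * Real.pi), φ (w - circleMap 0 r θ)) - φ w

lemma kerK_nonneg (r : ℝ) (u : ℂ) : 0 ≤ kerK r u := Real.posLog_nonneg

lemma kerK_measurable (r : ℝ) : Measurable (kerK r) := by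
  unfold kerK
  exact Real.continuous_posLog.measurable.comp (by fun_prop)

lemma kerK_eq_zero {r : ℝ} (hr : 0 < r) {u : ℂ} (h : r ≤ ‖u‖) : kerK r u = 0 := by
  unfold kerK
  rw [Real.posLog_eq_zero_iff, abs_of_nonneg (by positivity), ← div_eq_mul_inv]
  exact (div_le_one (hr.trans_le h)).mpr h

lemma kerK_radial {r : ℝ} (hr : 0 < r) :
    IntegrableOn (fun y : ℝ => y * Real.posLog (r * y⁻¹)) (Ioi 0) ∧
    ∫ y in Ioi (0:ℝ), y * Real.posLog (r * y⁻¹) = r ^ 2 / 4 := by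
  have h0 : ∀ y ∈ Ioi r, y * Real.posLog (r * y⁻¹) = 0 := by
    intro y hy
    have hy' : r < y := hy
    have : Real.posLog (r * y⁻¹) = 0 := by
      rw [Real.posLog_eq_zero_iff, abs_of_nonneg (by have := hr.trans hy'; positivity), ← div_eq_mul_inv]
      exact (div_le_one (hr.trans hy')).mpr hy'.le
    simp [this]
  have h1 : ∀ y ∈ Ioc 0 r, y * Real.posLog (r * y⁻¹) = y * Real.log r - y * Real.log y := by
    intro y hy
    have : Real.posLog (r * y⁻¹) = Real.log (r * y⁻¹) := by
      apply Real.posLog_eq_log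
      have := hy.1
      rw [abs_of_nonneg (by positivity), ← div_eq_mul_inv, le_div_iff₀ hy.1]; linarith [hy.2]
    rw [this, Real.log_mul hr.ne' (inv_ne_zero hy.1.ne'), Real.log_inv]; ring
  have hcont : Continuous (fun y : ℝ => y * Real.log r - y * Real.log y) :=
    (continuous_id.mul continuous_const).sub Real.continuous_mul_log
  have i1 : IntegrableOn (fun y : ℝ => y * Real.posLog (r * y⁻¹)) (Ioc 0 r) := by
    rw [integrableOn_congr_fun h1 measurableSet_Ioc]
    exact (hcont.integrableOn_Icc).mono_set Ioc_subset_Icc_self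
  have i2 : IntegrableOn (fun y : ℝ => y * Real.posLog (r * y⁻¹)) (Ioi r) := by
    rw [integrableOn_congr_fun h0 measurableSet_Ioi]
    exact integrableOn_zero
  have hu : Ioi (0:ℝ) = Ioc 0 r ∪ Ioi r := (Ioc_union_Ioi_eq_Ioi hr.le).symm
  refine ⟨by rw [hu]; exact i1.union i2, ?_⟩
  rw [hu, setIntegral_union (by simp) measurableSet_Ioi i1 i2,
    setIntegral_congr_fun measurableSet_Ioc h1, setIntegral_congr_fun measurableSet_Ioi h0]
  simp only [integral_zero, add_zero]
  rw [← intervalIntegral.integral_of_le hr.le]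
  have hd : ∀ y ∈ Ioo (0:ℝ) r, HasDerivAt (fun y : ℝ => y ^ 2 / 2 * Real.log r + y ^ 2 / 4 - y * (y * Real.log y) / 2)
      (y * Real.log r - y * Real.log y) y := by
    intro y hy
    have a1 : HasDerivAt (fun y : ℝ => y ^ 2 / 2 * Real.log r + y ^ 2 / 4) (y * Real.log r + y / 2) y := by
      have := ((hasDerivAt_pow 2 y).div_const 2).mul_const (Real.log r) |>.add ((hasDerivAt_pow 2 y).div_const 4)
      exact this.congr_deriv (by push_cast; ring)
    have a2 := ((hasDerivAt_id y).mul (Real.hasDerivAt_mul_log hy.1.ne')).div_const 2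
    exact (a1.sub a2).congr_deriv (by simp; ring)
  rw [intervalIntegral.integral_eq_sub_of_hasDerivAt_of_le hr.le _ hd (hcont.intervalIntegrable _ _)]
  · simp; ring
  · apply Continuous.continuousOn
    have := Real.continuous_mul_log
    fun_prop

lemma kerK_integral {r : ℝ} (hr : 0 < r) :
    Integrable (kerK r) ∧ ∫ u, kerK r u = Real.pi * r ^ 2 / 2 := by
  obtain ⟨h1, h2⟩ := kerK_radial hr
  constructor
  · unfold kerK
    rw [integrable_fun_norm_addHaar (volume : Measure ℂ) (f := fun y => Real.posLog (r * y⁻¹))]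
    simpa [Complex.finrank_real_complex] using h1
  · unfold kerK
    rw [integral_fun_norm_addHaar (volume : Measure ℂ) (fun y => Real.posLog (r * y⁻¹))]
    simp [Complex.finrank_real_complex, Measure.real, Complex.volume_ball, h2]
    ring

lemma shear_integrable {g : ℂ → ℝ} (hg : Integrable g) (r : ℝ) :
    Integrable (fun p : ℝ × ℂ => g (p.2 + circleMap 0 r p.1))
      ((volume.restrict (Ioc 0 (2 * Real.pi))).prod volume) := by
  have hmp : MeasurePreserving (fun p : ℝ × ℂ => (p.1, p.2 + circleMap 0 r p.1))
      ((volume.restrict (Ioc 0 (2 * Real.pi))).prod volume)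
      ((volume.restrict (Ioc 0 (2 * Real.pi))).prod volume) := by
    apply MeasurePreserving.skew_product (MeasurePreserving.id _)
      (g := fun θ z => z + circleMap 0 r θ)
    · unfold circleMap; fun_prop
    · exact Eventually.of_forall (fun θ => (measurePreserving_add_right volume _).map_eq)
  have h1 : Integrable (fun p : ℝ × ℂ => g p.2) ((volume.restrict (Ioc 0 (2 * Real.pi))).prod volume) :=
    hg.comp_snd _
  exact hmp.integrable_comp_of_integrable h1

lemma fubini_wt {g φ : ℂ → ℝ} (hg : Integrable g) (hφ : Measurable φ) {C : ℝ}
    (hC : ∀ z, |φ z| ≤ C) (r : ℝ) :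
    Integrable (fun z => φ z * ∫ θ in (0:ℝ)..(2 * Real.pi), g (z + circleMap 0 r θ)) ∧
    Integrable (fun w => g w * wtW φ r w) ∧
    ∫ w, g w * wtW φ r w =
      (2 * Real.pi)⁻¹ * (∫ z, φ z * ∫ θ in (0:ℝ)..(2 * Real.pi), g (z + circleMap 0 r θ))
        - ∫ z, φ z * g z := by
  have hpi : (0:ℝ) ≤ 2 * Real.pi := by positivity
  simp only [wtW, intervalIntegral.integral_of_le hpi]
  have j1 : Integrable (fun p : ℝ × ℂ => φ p.2 * g (p.2 + circleMap 0 r p.1))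
      ((volume.restrict (Ioc 0 (2 * Real.pi))).prod volume) := by
    apply (shear_integrable hg r).bdd_mul (c := C)
    · exact (hφ.comp measurable_snd).aestronglyMeasurable
    · exact Eventually.of_forall (fun p => by simpa using hC p.2)
  have j2 : Integrable (fun p : ℝ × ℂ => g p.2 * φ (p.2 - circleMap 0 r p.1))
      ((volume.restrict (Ioc 0 (2 * Real.pi))).prod volume) := by
    have : Integrable (fun p : ℝ × ℂ => φ (p.2 - circleMap 0 r p.1) * g p.2)
      ((volume.restrict (Ioc 0 (2 * Real.pi))).prod volume) := by
      apply (hg.comp_snd _).bdd_mul (c := C)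
      · apply Measurable.aestronglyMeasurable
        exact hφ.comp (by unfold circleMap; fun_prop)
      · exact Eventually.of_forall (fun p => by simpa using hC _)
    simpa [mul_comm] using this
  have j3 : Integrable (fun w => g w * φ w) := by
    have : Integrable (fun w => φ w * g w) := hg.bdd_mul (c := C) hφ.aestronglyMeasurable
      (Eventually.of_forall (fun p => by simpa using hC _))
    simpa [mul_comm] using this
  have k1 := j1.integral_prod_right
  have k2 := j2.integral_prod_right
  simp only [integral_const_mul] at k1 k2
  have k2' : Integrable (fun w => g w * ((2 * Real.pi)⁻¹ * (∫ θ in Ioc 0 (2 * Real.pi), φ (w - circleMap 0 r θ)) - φ w)) := by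
    have := (k2.const_mul (2 * Real.pi)⁻¹).sub j3
    convert this using 2 with w
    simp only [Pi.sub_apply]; ring
  refine ⟨k1, k2', ?_⟩
  have e1 : ∫ z, φ z * ∫ θ in Ioc 0 (2 * Real.pi), g (z + circleMap 0 r θ) =
      ∫ w, g w * ∫ θ in Ioc 0 (2 * Real.pi), φ (w - circleMap 0 r θ) := by
    simp only [← integral_const_mul]
    rw [← integral_integral_swap (f := fun θ z => φ z * g (z + circleMap 0 r θ)) j1,
      ← integral_integral_swap (f := fun θ w => g w * φ (w - circleMap 0 r θ)) j2]
    congr 1; ext θ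
    rw [← integral_add_right_eq_self (fun w => g w * φ (w - circleMap 0 r θ)) (circleMap 0 r θ)]
    congr 1; ext w; simp [mul_comm]
  rw [e1, ← integral_const_mul, ← integral_sub (k2.const_mul _) (by simpa [mul_comm] using j3)]
  congr 1; ext w; ring

lemma jensen_pointwise {f : ℂ → ℂ} {z : ℂ} {r : ℝ} (hr : 0 < r)
    (hf : AnalyticOnNhd ℂ f (closedBall z r)) (hz : f z ≠ 0) (Z : Finset ℂ)
    (hZ : ∀ u ∈ closedBall z r, f u = 0 → u ∈ Z) :
    (2 * Real.pi)⁻¹ * ∫ θ in (0:ℝ)..(2 * Real.pi), Real.log ‖f (z + circleMap 0 r θ)‖ =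
      Real.log ‖f z‖ + ∑ ρ ∈ Z, (zeroOrder f ρ : ℝ) * kerK r (z - ρ) := by
  have hf' : AnalyticOnNhd ℂ f (closedBall z |r|) := by rwa [abs_of_pos hr]
  have := hf'.circleAverage_log_norm hr.ne' hz
  rw [Real.circleAverage_def, smul_eq_mul] at this
  have hcm : ∀ θ, z + circleMap 0 r θ = circleMap z r θ := fun θ => by simp [circleMap]
  simp only [hcm]
  rw [this, add_comm]
  congr 1
  have hpt : ∀ u, ((MeromorphicOn.divisor f (closedBall z |r|)) u : ℝ) * Real.log (r * ‖z - u‖⁻¹) =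
      if u ∈ Z then (zeroOrder f u : ℝ) * kerK r (z - u) else 0 := by
    intro u
    by_cases hu : u ∈ closedBall z |r|
    · have hu' : u ∈ closedBall z r := by rwa [abs_of_pos hr] at hu
      have han := hf' u hu
      rw [MeromorphicOn.AnalyticOnNhd.divisor_apply hf' hu]
      by_cases hfu : f u = 0
      · rw [if_pos (hZ u hu' hfu)]
        have hne : z ≠ u := fun h => hz (h ▸ hfu)
        congr 1
        · rw [zeroOrder, dif_pos han]
          cases h : analyticOrderAt f u <;> simp
        · unfold kerK
          rw [Real.posLog_eq_log]
          rw [mem_closedBall, dist_comm, dist_eq_norm] at hu'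
          have : 0 < ‖z - u‖ := norm_pos_iff.mpr (sub_ne_zero.mpr hne)
          rw [abs_of_nonneg (by positivity), ← div_eq_mul_inv, le_div_iff₀ this]; linarith
      · have h0 : analyticOrderAt f u = 0 := han.analyticOrderAt_eq_zero.mpr hfu
        have : zeroOrder f u = 0 := by rw [zeroOrder, dif_pos han, h0]; rfl
        simp [h0, this]
    · have hu' : ¬ u ∈ closedBall z r := by rwa [abs_of_pos hr] at hu
      rw [mem_closedBall, dist_comm, dist_eq_norm, not_le] at hu'
      have : kerK r (z - u) = 0 := kerK_eq_zero hr hu'.le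
      simp [hu, this]
  simp only [hpt]
  rw [finsum_eq_sum_of_support_subset (s := Z)]
  · exact Finset.sum_congr rfl (fun u hu => if_pos hu)
  · intro u hu
    by_contra h
    exact hu (if_neg h)

theorem key_identity {f : ℂ → ℂ} {S : Set ℂ} (hS : MeasurableSet S) (hf : AnalyticOnNhd ℂ f S)
    {φ : ℂ → ℝ} (hφ : Measurable φ) {C : ℝ} (hC : ∀ z, |φ z| ≤ C) {r : ℝ} (hr : 0 < r)
    (hsub : ∀ z, φ z ≠ 0 → closedBall z r ⊆ S)
    (hInt : IntegrableOn (fun z => Real.log ‖f z‖) S) (Z : Finset ℂ)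
    (hZ : ∀ z ∈ S, f z = 0 → z ∈ Z) :
    IntegrableOn (fun w => Real.log ‖f w‖ * wtW φ r w) S ∧
    ∫ w in S, Real.log ‖f w‖ * wtW φ r w = ∑ ρ ∈ Z, (zeroOrder f ρ : ℝ) * ∫ z, φ z * kerK r (z - ρ) := by
  set g : ℂ → ℝ := S.indicator (fun z => Real.log ‖f z‖) with hg
  have hgi : Integrable g := by rwa [hg, integrable_indicator_iff hS]
  obtain ⟨a1, a2, a3⟩ := fubini_wt hgi hφ hC r
  have e0 : (fun w => g w * wtW φ r w) = S.indicator (fun w => Real.log ‖f w‖ * wtW φ r w) := by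
    ext w; rw [hg]; by_cases h : w ∈ S <;> simp [h]
  refine ⟨by rw [e0, integrable_indicator_iff hS] at a2; exact a2, ?_⟩
  rw [← integral_indicator hS, ← e0, a3]
  have j3 : Integrable (fun w => φ w * g w) := hgi.bdd_mul (c := C) hφ.aestronglyMeasurable
      (Eventually.of_forall (fun p => by simpa using hC _))
  rw [← integral_const_mul, ← integral_sub (a1.const_mul _) j3]
  have hK : ∀ ρ, Integrable (fun z => φ z * kerK r (z - ρ)) := fun ρ =>
    ((kerK_integral hr).1.comp_sub_right ρ).bdd_mul (c := C) hφ.aestronglyMeasurable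
      (Eventually.of_forall (fun p => by simpa using hC _))
  simp only [← integral_const_mul]
  rw [← integral_finsetSum _ (fun ρ _ => (hK ρ).const_mul _)]
  apply integral_congr_ae
  have hnull : ∀ᵐ z : ℂ, z ∉ (Z : Set ℂ) := by
    rw [ae_iff]; simpa using (Z.finite_toSet.measure_zero (μ := volume))
  filter_upwards [hnull] with z hz
  by_cases h : φ z = 0
  · simp [h]
  have hs := hsub z h
  have hzS : z ∈ S := hs (mem_closedBall_self hr.le)
  have hfz : f z ≠ 0 := fun h0 => hz (hZ z hzS h0)
  have hj := jensen_pointwise hr (hf.mono hs) hfz Z (fun u hu => hZ u (hs hu))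
  have e1 : ∀ θ, g (z + circleMap 0 r θ) = Real.log ‖f (z + circleMap 0 r θ)‖ := by
    intro θ
    rw [hg, indicator_of_mem]
    apply hs
    rw [mem_closedBall, dist_eq_norm]; simp [abs_of_pos hr]
  have e2 : g z = Real.log ‖f z‖ := by rw [hg, indicator_of_mem hzS]
  simp only [e1, e2]
  have : (2 * Real.pi)⁻¹ * (φ z * ∫ θ in (0:ℝ)..(2 * Real.pi), Real.log ‖f (z + circleMap 0 r θ)‖) =
    φ z * ((2 * Real.pi)⁻¹ * (∫ θ in (0:ℝ)..(2 * Real.pi), Real.log ‖f (z + circleMap 0 r θ)‖)) := by ring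
  rw [this, hj]
  rw [mul_add, Finset.mul_sum]
  rw [add_sub_cancel_left]
  exact Finset.sum_congr rfl (fun ρ _ => by ring)

end P2

section P3
open Metric Set Filter Topology

/-- coefficients for the twisted Euler-Maclaurin formula -/
structure EMc (e k q q1 q0 : ℂ) : Prop where
  h0 : k * e = k
  h1 : k + q = e * q + e
  h2 : k / 2 + q + q1 = e * q1
  h3 : k / 6 + q / 2 + q1 + q0 = e * q0

/-- antiderivative used in the Euler-Maclaurin formula -/
noncomputable def emH (k q q1 q0 s y x : ℂ) : ℂ :=
  (s - 1) * ((k * x ^ 3 / 6 + q * x ^ 2 / 2 + q1 * x + q0) * (s * (s + 1) * y ^ (-s - 2))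
    + (k * x ^ 2 / 2 + q * x + q1) * (s * y ^ (-s - 1)) + (k * x + q) * y ^ (-s)) + k * y ^ (1 - s)

noncomputable def emT (k q q1 q0 : ℂ) (alp : ℝ) (s : ℂ) (m : ℕ) : ℂ :=
  emH k q q1 q0 s ((m + alp : ℝ) + 1) 1 - emH k q q1 q0 s ((m + alp : ℝ)) 0

noncomputable def emPsi (q q1 q0 s y : ℂ) : ℂ :=
  q0 * (s * (s + 1) * y ^ (-s - 2)) + q1 * (s * y ^ (-s - 1)) + q * y ^ (-s)

noncomputable def emG (e k q q1 q0 : ℂ) (alp : ℝ) (s : ℂ) : ℂ :=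
  (s - 1) * ((alp : ℂ) ^ (-s) + emPsi q q1 q0 s alp) + k * (alp : ℂ) ^ (1 - s)
    + ∑' m : ℕ, e ^ m * emT k q q1 q0 alp s m

lemma hasDerivAt_ofReal_cpow_shift {Y x : ℝ} (h : 0 < Y + x) (c : ℂ) :
    HasDerivAt (fun x : ℝ => ((Y + x : ℝ) : ℂ) ^ c) (c * ((Y + x : ℝ) : ℂ) ^ (c - 1)) x := by
  have h1 : HasDerivAt (fun x : ℝ => ((Y + x : ℝ) : ℂ)) 1 x := by
    have : HasDerivAt (fun x : ℝ => Y + x) 1 x := (hasDerivAt_id x).const_add Y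
    exact_mod_cast this.ofReal_comp
  have hm : ((Y + x : ℝ) : ℂ) ∈ Complex.slitPlane := by
    left; simpa using h
  have h2 : HasDerivAt (fun z : ℂ => z ^ c) (c * ((Y + x : ℝ) : ℂ) ^ (c - 1)) ((Y + x : ℝ) : ℂ) := by
    simpa using (hasDerivAt_id ((Y + x : ℝ) : ℂ)).cpow_const (c := c) hm
  have := HasDerivAt.comp x h2 h1
  simpa using! this

lemma emT_bound (k q q1 q0 : ℂ) {alp : ℝ} (ha : 0 < alp) {s : ℂ} (hs : -3 ≤ s.re) (m : ℕ) :
    ‖emT k q q1 q0 alp s m‖ ≤ (‖k‖ + ‖q‖ + ‖q1‖ + ‖q0‖) * (‖s - 1‖ * ‖s‖ * ‖s + 1‖ * ‖s + 2‖) *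
      (m + alp) ^ (-s.re - 3) := by
  set Y : ℝ := m + alp with hY
  have hYp : 0 < Y := by positivity
  have hder : ∀ x ∈ Icc (0:ℝ) 1, HasDerivWithinAt (fun x : ℝ => emH k q q1 q0 s ((Y + x : ℝ) : ℂ) x)
      ((s - 1) * ((k * x ^ 3 / 6 + q * x ^ 2 / 2 + q1 * x + q0) *
        (-(s * (s + 1) * (s + 2)) * ((Y + x : ℝ) : ℂ) ^ (-s - 3)))) (Icc 0 1) x := by
    intro x hx
    apply HasDerivAt.hasDerivWithinAt
    have hpos : 0 < Y + x := by linarith [hx.1]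
    have d0 : HasDerivAt (fun x : ℝ => (x : ℂ)) 1 x := Complex.ofRealCLM.hasDerivAt
    have c0 := hasDerivAt_ofReal_cpow_shift hpos (-s)
    have c1 := hasDerivAt_ofReal_cpow_shift hpos (-s - 1)
    have c2 := hasDerivAt_ofReal_cpow_shift hpos (-s - 2)
    have cm := hasDerivAt_ofReal_cpow_shift hpos (1 - s)
    have p0 := (((((d0.pow 3).const_mul k).div_const 6).add (((d0.pow 2).const_mul q).div_const 2)).add
      (d0.const_mul q1)).add_const q0
    have p1 := ((((d0.pow 2).const_mul k).div_const 2).add (d0.const_mul q)).add_const q1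
    have p2 := (d0.const_mul k).add_const q
    have tot := (((p0.mul (c2.const_mul (s * (s + 1)))).add (p1.mul (c1.const_mul s))).add
      (p2.mul c0)).const_mul (s - 1) |>.add (cm.const_mul k)
    unfold emH
    refine tot.congr_deriv ?_
    rw [show -s - 2 - 1 = -s - 3 by ring, show -s - 1 - 1 = -s - 2 by ring,
      show 1 - s - 1 = -s by ring]
    simp only [Pi.pow_apply, Pi.add_apply]
    push_cast
    ring
  have hb : ∀ x ∈ Ico (0:ℝ) 1, ‖(s - 1) * ((k * x ^ 3 / 6 + q * x ^ 2 / 2 + q1 * x + q0) *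
        (-(s * (s + 1) * (s + 2)) * ((Y + x : ℝ) : ℂ) ^ (-s - 3)))‖ ≤
        (‖k‖ + ‖q‖ + ‖q1‖ + ‖q0‖) * (‖s - 1‖ * ‖s‖ * ‖s + 1‖ * ‖s + 2‖) * Y ^ (-s.re - 3) := by
    intro x hx
    have hpos : 0 < Y + x := by linarith [hx.1]
    have hx1 : |x| ≤ 1 := by rw [abs_le]; constructor <;> linarith [hx.1, hx.2]
    have n1 : ‖k * x ^ 3 / 6 + q * x ^ 2 / 2 + q1 * x + q0‖ ≤ ‖k‖ + ‖q‖ + ‖q1‖ + ‖q0‖ := by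
      refine (norm_add_le _ _).trans (add_le_add ((norm_add_le _ _).trans (add_le_add ((norm_add_le _ _).trans (add_le_add ?_ ?_)) ?_)) le_rfl)
      · simp only [norm_div, norm_mul, norm_pow, Complex.norm_real, Real.norm_eq_abs, Complex.norm_ofNat]
        have : |x| ^ 3 ≤ 1 := pow_le_one₀ (abs_nonneg _) hx1
        nlinarith [norm_nonneg k]
      · simp only [norm_div, norm_mul, norm_pow, Complex.norm_real, Real.norm_eq_abs, Complex.norm_ofNat]
        have : |x| ^ 2 ≤ 1 := pow_le_one₀ (abs_nonneg _) hx1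
        nlinarith [norm_nonneg q]
      · simp only [norm_mul, Complex.norm_real, Real.norm_eq_abs]
        nlinarith [norm_nonneg q1]
    have n2 : ‖((Y + x : ℝ) : ℂ) ^ (-s - 3)‖ ≤ Y ^ (-s.re - 3) := by
      rw [Complex.norm_cpow_eq_rpow_re_of_pos hpos]
      simp only [Complex.sub_re, Complex.neg_re, Complex.re_ofNat]
      exact Real.rpow_le_rpow_of_nonpos hYp (by linarith [hx.1]) (by linarith)
    rw [norm_mul, norm_mul, norm_mul, norm_neg, norm_mul, norm_mul]
    calc _ ≤ ‖s - 1‖ * ((‖k‖ + ‖q‖ + ‖q1‖ + ‖q0‖) * (‖s‖ * ‖s + 1‖ * ‖s + 2‖ * Y ^ (-s.re - 3))) := by gcongr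
      _ = _ := by ring
  have := norm_image_sub_le_of_norm_deriv_le_segment_01' hder hb
  simpa [emT, hY] using this

lemma em_telescope {e k q q1 q0 : ℂ} (h : EMc e k q q1 q0) (alp : ℝ) (s : ℂ) (N : ℕ) :
    ∑ m ∈ Finset.range N, e ^ m * emT k q q1 q0 alp s m =
      (s - 1) * (e ^ N * emPsi q q1 q0 s ((N + alp : ℝ)) - emPsi q q1 q0 s alp
        + ∑ m ∈ Finset.range N, e ^ (m + 1) * (((m + 1 : ℕ) + alp : ℝ) : ℂ) ^ (-s))
      + k * (((N + alp : ℝ) : ℂ) ^ (1 - s) - (alp : ℂ) ^ (1 - s)) := by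
  induction N with
  | zero => simp
  | succ N ih =>
    rw [Finset.sum_range_succ, ih, Finset.sum_range_succ]
    have hk : ∀ n : ℕ, e ^ n * k = k := by
      intro n
      induction n with
      | zero => simp
      | succ n ih => rw [pow_succ, mul_assoc, mul_comm e k, h.h0, ih]
    have e1 : ((N + 1 : ℕ) + alp : ℝ) = ((N + alp : ℝ) : ℂ) + 1 := by push_cast; ring
    have hkN := hk N
    rw [emT, e1]
    generalize ((N + alp : ℝ) : ℂ) + 1 = y1
    generalize ((N + alp : ℝ) : ℂ) = y0
    simp only [emH, emPsi]
    generalize ∑ m ∈ Finset.range N, e ^ (m + 1) * (((m + 1 : ℕ) + alp : ℝ) : ℂ) ^ (-s) = A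
    generalize y1 ^ (-s) = u0
    generalize y1 ^ (-s - 1) = u1
    generalize y1 ^ (-s - 2) = u2
    generalize y1 ^ (1 - s) = um
    generalize y0 ^ (-s) = v0
    generalize y0 ^ (-s - 1) = v1
    generalize y0 ^ (-s - 2) = v2
    generalize y0 ^ (1 - s) = vm
    rw [pow_succ e N]
    have h1 := h.h1
    have h2 := h.h2
    have h3 := h.h3
    generalize e ^ N = E at *
    linear_combination (s - 1) * E * (u0 * h1 + s * u1 * h2 + s * (s + 1) * u2 * h3) + (um - vm) * hkN

lemma rpow_shift_le {alp : ℝ} (h0 : 0 < alp) (h1 : alp ≤ 1) {x a b : ℝ} (hax : a ≤ x) (hxb : x ≤ b)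
    (ha : 0 ≤ a) (m : ℕ) :
    (m + alp) ^ (-x) ≤ alp ^ (-b) * ((m : ℝ) + 1) ^ (-a) := by
  have e1 : alp * ((m : ℝ) + 1) ≤ m + alp := by
    have : (0:ℝ) ≤ m := Nat.cast_nonneg m
    nlinarith
  have hm : (1:ℝ) ≤ (m:ℝ) + 1 := by have : (0:ℝ) ≤ m := Nat.cast_nonneg m; linarith
  calc (m + alp) ^ (-x) ≤ (alp * ((m : ℝ) + 1)) ^ (-x) :=
        Real.rpow_le_rpow_of_nonpos (by positivity) e1 (by linarith)
    _ = alp ^ (-x) * ((m : ℝ) + 1) ^ (-x) := Real.mul_rpow h0.le (by positivity)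
    _ ≤ _ := by
        apply mul_le_mul
        · exact Real.rpow_le_rpow_of_exponent_ge h0 h1 (by linarith)
        · exact Real.rpow_le_rpow_of_exponent_le hm (by linarith)
        · positivity
        · positivity

lemma summable_nat_succ_rpow {a : ℝ} (ha : 1 < a) : Summable (fun m : ℕ => ((m : ℝ) + 1) ^ (-a)) := by
  have := (summable_nat_add_iff 1).mpr (Real.summable_nat_rpow.mpr (show -a < -1 by linarith))
  simpa using this

/-- uniform bound on the terms -/
lemma emT_bound' {e k q q1 q0 : ℂ} (he : ‖e‖ ≤ 1) {alp : ℝ} (h0 : 0 < alp) (h1 : alp ≤ 1) {s : ℂ} {δ B : ℝ}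
    (hδ : 0 < δ) (hs : -2 + δ ≤ s.re) (hB : s.re ≤ B) (m : ℕ) :
    ‖e ^ m * emT k q q1 q0 alp s m‖ ≤ (‖k‖ + ‖q‖ + ‖q1‖ + ‖q0‖) * (‖s‖ + 2) ^ 4 * alp ^ (-(B + 3)) *
      ((m : ℝ) + 1) ^ (-(1 + δ)) := by
  rw [norm_mul, norm_pow]
  have b1 := emT_bound k q q1 q0 h0 (s := s) (by linarith) m
  have b2 := rpow_shift_le h0 h1 (x := s.re + 3) (a := 1 + δ) (b := B + 3) (by linarith) (by linarith) (by linarith) m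
  have b3 : ‖s - 1‖ * ‖s‖ * ‖s + 1‖ * ‖s + 2‖ ≤ (‖s‖ + 2) ^ 4 := by
    have n0 := norm_nonneg s
    have n1 : ‖s - 1‖ ≤ ‖s‖ + 2 := (norm_sub_le _ _).trans (by simp)
    have n2 : ‖s + 1‖ ≤ ‖s‖ + 2 := (norm_add_le _ _).trans (by simp)
    have n3 : ‖s + 2‖ ≤ ‖s‖ + 2 := (norm_add_le _ _).trans (by simp)
    calc _ ≤ (‖s‖ + 2) * (‖s‖ + 2) * (‖s‖ + 2) * (‖s‖ + 2) := by gcongr; linarith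
      _ = _ := by ring
  calc ‖e‖ ^ m * ‖emT k q q1 q0 alp s m‖ ≤ 1 * ‖emT k q q1 q0 alp s m‖ := by
        gcongr; exact pow_le_one₀ (norm_nonneg _) he
    _ ≤ (‖k‖ + ‖q‖ + ‖q1‖ + ‖q0‖) * (‖s - 1‖ * ‖s‖ * ‖s + 1‖ * ‖s + 2‖) * (m + alp) ^ (-s.re - 3) := by
        rw [one_mul]; exact b1
    _ ≤ (‖k‖ + ‖q‖ + ‖q1‖ + ‖q0‖) * (‖s‖ + 2) ^ 4 * (alp ^ (-(B + 3)) * ((m : ℝ) + 1) ^ (-(1 + δ))) := by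
        rw [show -s.re - 3 = -(s.re + 3) by ring]
        gcongr
    _ = _ := by ring

lemma emG_differentiable {e k q q1 q0 : ℂ} (he : ‖e‖ ≤ 1) {alp : ℝ} (h0 : 0 < alp) (h1 : alp ≤ 1) :
    DifferentiableOn ℂ (emG e k q q1 q0 alp) {s | -2 < s.re} := by
  intro s0 hs0
  have hs0' : -2 < s0.re := hs0
  apply DifferentiableAt.differentiableWithinAt
  have hcp : ∀ (y : ℝ) (c : ℂ), 0 < y → ∀ s : ℂ, DifferentiableAt ℂ (fun s : ℂ => (y : ℂ) ^ (c - s)) s := by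
    intro y c hy s
    apply DifferentiableAt.const_cpow (by fun_prop)
    left; exact_mod_cast hy.ne'
  have hcp0 : ∀ (y : ℝ), 0 < y → ∀ s : ℂ, DifferentiableAt ℂ (fun s : ℂ => (y : ℂ) ^ (- s)) s := by
    intro y hy s
    simpa using hcp y 0 hy s
  have hcp1 : ∀ (y : ℝ), 0 < y → ∀ s : ℂ, DifferentiableAt ℂ (fun s : ℂ => (y : ℂ) ^ (- s - 1)) s := by
    intro y hy s
    simpa only [show ∀ s : ℂ, -1 - s = -s - 1 from fun s => by ring] using hcp y (-1) hy s
  have hcp2 : ∀ (y : ℝ), 0 < y → ∀ s : ℂ, DifferentiableAt ℂ (fun s : ℂ => (y : ℂ) ^ (- s - 2)) s := by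
    intro y hy s
    simpa only [show ∀ s : ℂ, -2 - s = -s - 2 from fun s => by ring] using hcp y (-2) hy s
  have hH : ∀ (y : ℝ) (x : ℂ), 0 < y → ∀ s : ℂ, DifferentiableAt ℂ (fun s => emH k q q1 q0 s y x) s := by
    intro y x hy s
    have := hcp0 y hy s
    have := hcp1 y hy s
    have := hcp2 y hy s
    have := hcp y 1 hy s
    unfold emH
    fun_prop
  have hT : ∀ m, ∀ s : ℂ, DifferentiableAt ℂ (fun s => emT k q q1 q0 alp s m) s := by
    intro m s
    unfold emT
    have a1 := hH (m + alp + 1) 1 (by positivity) s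
    have a2 := hH (m + alp) 0 (by positivity) s
    have : ((m + alp + 1 : ℝ) : ℂ) = ((m + alp : ℝ) : ℂ) + 1 := by push_cast; ring
    rw [this] at a1
    exact a1.sub a2
  have hsum : DifferentiableAt ℂ (fun s => ∑' m : ℕ, e ^ m * emT k q q1 q0 alp s m) s0 := by
    set δ := (s0.re + 2) / 2 with hδ
    have hδ0 : 0 < δ := by rw [hδ]; linarith
    set U : Set ℂ := {s | -2 + δ < s.re} ∩ ball s0 1 with hU
    have hUo : IsOpen U := (isOpen_lt continuous_const Complex.continuous_re).inter isOpen_ball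
    have hmem : s0 ∈ U := ⟨by simp only [mem_ofPred_eq]; rw [hδ]; linarith, mem_ball_self one_pos⟩
    have := Complex.differentiableOn_tsum_of_summable_norm (F := fun m s => e ^ m * emT k q q1 q0 alp s m)
      (U := U)
      (u := fun m : ℕ => (‖k‖ + ‖q‖ + ‖q1‖ + ‖q0‖) * (‖s0‖ + 1 + 2) ^ 4 * alp ^ (-(s0.re + 1 + 3)) *
      ((m : ℝ) + 1) ^ (-(1 + δ))) ((summable_nat_succ_rpow (by linarith)).mul_left _)
      (fun m s hs => ((hT m s).const_mul _).differentiableWithinAt) hUo ?_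
    · exact this.differentiableAt (hUo.mem_nhds hmem)
    · intro m s hs
      have hd : ‖s - s0‖ < 1 := by simpa [dist_eq_norm] using hs.2
      have hre : s.re ≤ s0.re + 1 := by
        have := (Complex.re_le_norm (s - s0)); simp at this; linarith
      have hno : ‖s‖ ≤ ‖s0‖ + 1 := by
        have := norm_add_le (s - s0) s0; simp at this; linarith
      refine (emT_bound' he h0 h1 hδ0 (le_of_lt hs.1) hre m).trans ?_
      gcongr
  unfold emG emPsi
  have := hcp0 alp h0 s0
  have := hcp1 alp h0 s0
  have := hcp2 alp h0 s0
  have := hcp alp 1 h0 s0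
  refine DifferentiableAt.add ?_ hsum
  fun_prop

end P3

section P4
open Metric Set Filter Topology

lemma emG_growth {e k q q1 q0 : ℂ} (he : ‖e‖ ≤ 1) {alp : ℝ} (h0 : 0 < alp) (h1 : alp ≤ 1) {δ B : ℝ}
    (hδ : 0 < δ) : ∃ C, 0 ≤ C ∧ ∀ s : ℂ, -2 + δ ≤ s.re → s.re ≤ B →
      ‖emG e k q q1 q0 alp s‖ ≤ C * (‖s‖ + 2) ^ 4 := by
  set A := alp ^ (-(B + 3)) with hA
  have hA0 : 0 ≤ A := by positivity
  set S := ∑' m : ℕ, ((m : ℝ) + 1) ^ (-(1 + δ)) with hS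
  have hS0 : 0 ≤ S := tsum_nonneg (fun m => by positivity)
  set Q := ‖k‖ + ‖q‖ + ‖q1‖ + ‖q0‖ with hQ
  have hQ0 : 0 ≤ Q := by positivity
  refine ⟨A * (1 + 4 * Q) + Q * A * S, by positivity, ?_⟩
  intro s hs hB
  have hcp : ∀ c : ℂ, -3 ≤ c.re → ‖(alp : ℂ) ^ (c - s)‖ ≤ A := by
    intro c hc
    rw [Complex.norm_cpow_eq_rpow_re_of_pos h0, hA]
    exact Real.rpow_le_rpow_of_exponent_ge h0 h1 (by simp; linarith)
  have c0 := hcp 0 (by simp)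
  have c1 := hcp (-1) (by simp)
  have c2 := hcp (-2) (by norm_num)
  have cm := hcp 1 (by norm_num)
  rw [zero_sub] at c0
  rw [show -1 - s = -s - 1 by ring] at c1
  rw [show -2 - s = -s - 2 by ring] at c2
  have hn := norm_nonneg s
  set X := ‖s‖ + 2 with hX
  have hX1 : 1 ≤ X := by linarith
  have hX0 : 0 ≤ X := by linarith
  have n0 : ‖s‖ ≤ X := by linarith
  have n1 : ‖s - 1‖ ≤ X := (norm_sub_le _ _).trans (by simp; linarith)
  have n2 : ‖s + 1‖ ≤ X := (norm_add_le _ _).trans (by simp; linarith)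
  have hsum : ‖∑' m : ℕ, e ^ m * emT k q q1 q0 alp s m‖ ≤ Q * X ^ 4 * A * S := by
    rw [hS, ← tsum_mul_left]
    exact tsum_of_norm_bounded ((summable_nat_succ_rpow (by linarith)).mul_left _).hasSum
      (fun m => emT_bound' he h0 h1 hδ hs hB m)
  have kQ : ‖k‖ ≤ Q := by have := norm_nonneg q; have := norm_nonneg q1; have := norm_nonneg q0; linarith
  have qQ : ‖q‖ ≤ Q := by have := norm_nonneg k; have := norm_nonneg q1; have := norm_nonneg q0; linarith
  have q1Q : ‖q1‖ ≤ Q := by have := norm_nonneg q; have := norm_nonneg k; have := norm_nonneg q0; linarith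
  have q0Q : ‖q0‖ ≤ Q := by have := norm_nonneg q; have := norm_nonneg q1; have := norm_nonneg k; linarith
  have hpsi : ‖emPsi q q1 q0 s alp‖ ≤ Q * (X * X * A) + Q * (X * A) + Q * A := by
    unfold emPsi
    refine (norm_add_le _ _).trans (add_le_add ((norm_add_le _ _).trans (add_le_add ?_ ?_)) ?_)
    · simp only [norm_mul]; gcongr
    · simp only [norm_mul]; gcongr
    · simp only [norm_mul]; gcongr
  have hX3 : X ^ 3 ≤ X ^ 4 := pow_le_pow_right₀ hX1 (by norm_num)
  have hX2 : X ^ 2 ≤ X ^ 4 := pow_le_pow_right₀ hX1 (by norm_num)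
  have hX1' : X ≤ X ^ 4 := by simpa using pow_le_pow_right₀ hX1 (show 1 ≤ 4 by norm_num)
  have hX0' : 1 ≤ X ^ 4 := one_le_pow₀ hX1
  unfold emG
  calc _ ≤ (X * (A + (Q * (X * X * A) + Q * (X * A) + Q * A)) + Q * A) + Q * X ^ 4 * A * S := by
        refine (norm_add_le _ _).trans (add_le_add ((norm_add_le _ _).trans (add_le_add ?_ ?_)) hsum)
        · rw [norm_mul]
          refine mul_le_mul n1 ((norm_add_le _ _).trans (add_le_add c0 hpsi)) (norm_nonneg _) hX0
        · rw [norm_mul]; gcongr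
    _ = A * X + Q * A * X ^ 3 + Q * A * X ^ 2 + Q * A * X + Q * A * 1 + Q * A * S * X ^ 4 := by ring
    _ ≤ A * X ^ 4 + Q * A * X ^ 4 + Q * A * X ^ 4 + Q * A * X ^ 4 + Q * A * X ^ 4 + Q * A * S * X ^ 4 := by
        gcongr
    _ = _ := by ring

lemma em_limit {e k q q1 q0 : ℂ} (h : EMc e k q q1 q0) (he : ‖e‖ ≤ 1) {alp : ℝ} (h0 : 0 < alp)
    (h1 : alp ≤ 1) {s : ℂ} (hs : -2 < s.re)
    (hl : ∀ c : ℂ, c.re ≤ 0 → Tendsto (fun N : ℕ => e ^ N * ((N + alp : ℝ) : ℂ) ^ (c - s)) atTop (𝓝 0))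
    (hk : Tendsto (fun N : ℕ => k * ((N + alp : ℝ) : ℂ) ^ (1 - s)) atTop (𝓝 0)) :
    Tendsto (fun N : ℕ => (s - 1) * ∑ m ∈ Finset.range (N + 1), e ^ m * ((m + alp : ℝ) : ℂ) ^ (-s)) atTop
      (𝓝 (emG e k q q1 q0 alp s)) := by
  have hsm : Summable (fun m : ℕ => e ^ m * emT k q q1 q0 alp s m) := by
    apply Summable.of_norm_bounded ((summable_nat_succ_rpow (a := 1 + (s.re + 2)) (by linarith)).mul_left _)
    intro m
    exact emT_bound' he h0 h1 (δ := s.re + 2) (by linarith) (by linarith) le_rfl m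
  have ht := hsm.hasSum.tendsto_sum_nat
  have hpsi : Tendsto (fun N : ℕ => e ^ N * emPsi q q1 q0 s ((N + alp : ℝ))) atTop (𝓝 0) := by
    have a0 := (hl 0 (by simp)).const_mul q
    have a1 := (hl (-1) (by simp)).const_mul (q1 * s)
    have a2 := (hl (-2) (by simp)).const_mul (q0 * (s * (s + 1)))
    have := (a2.add a1).add a0
    simp only [mul_zero, add_zero] at this
    refine this.congr (fun N => ?_)
    rw [emPsi, zero_sub, show -1 - s = -s - 1 by ring, show -2 - s = -s - 2 by ring]
    ring
  have hall := ((ht.sub (hpsi.const_mul (s - 1))).sub hk).add_const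
    ((s - 1) * ((alp : ℂ) ^ (-s) + emPsi q q1 q0 s alp) + k * (alp : ℂ) ^ (1 - s))
  have e1 : emG e k q q1 q0 alp s = (∑' m : ℕ, e ^ m * emT k q q1 q0 alp s m - (s - 1) * 0) - 0 +
    ((s - 1) * ((alp : ℂ) ^ (-s) + emPsi q q1 q0 s alp) + k * (alp : ℂ) ^ (1 - s)) := by
    unfold emG; ring
  rw [e1]
  refine hall.congr (fun N => ?_)
  rw [em_telescope h, Finset.sum_range_succ']
  simp only [pow_zero, one_mul, Nat.cast_zero, zero_add]
  ring

lemma tendsto_shift_cpow {e : ℂ} (he : ‖e‖ ≤ 1) (alp : ℝ) (h0 : 0 < alp) {c : ℂ} (hc : c.re < 0) :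
    Tendsto (fun N : ℕ => e ^ N * ((N + alp : ℝ) : ℂ) ^ c) atTop (𝓝 0) := by
  rw [tendsto_zero_iff_norm_tendsto_zero]
  have h1 : Tendsto (fun N : ℕ => ((N : ℝ) + alp) ^ c.re) atTop (𝓝 0) := by
    have := (tendsto_rpow_neg_atTop (y := -c.re) (by linarith))
    rw [neg_neg] at this
    exact this.comp (tendsto_atTop_add_const_right _ _ tendsto_natCast_atTop_atTop)
  refine squeeze_zero (fun _ => norm_nonneg _) (fun N => ?_) h1
  rw [norm_mul, Complex.norm_cpow_eq_rpow_re_of_pos (by positivity), norm_pow]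
  have : ‖e‖ ^ N ≤ 1 := pow_le_one₀ (norm_nonneg _) he
  have : 0 ≤ ((N : ℝ) + alp) ^ c.re := by positivity
  nlinarith

lemma norm_geom_cpow_le {e : ℂ} {alp : ℝ} (h0 : 0 < alp) (h1 : alp ≤ 1) {c : ℂ} (hc : c.re ≤ 2) (N : ℕ)
    (hN : 1 ≤ N) : ‖e ^ N * ((N + alp : ℝ) : ℂ) ^ c‖ ≤ 4 * ((N : ℝ) ^ 2 * ‖e‖ ^ N) := by
  rw [norm_mul, Complex.norm_cpow_eq_rpow_re_of_pos (by positivity), norm_pow]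
  have hN' : (1:ℝ) ≤ N := by exact_mod_cast hN
  have : ((N : ℝ) + alp) ^ c.re ≤ 4 * (N : ℝ) ^ 2 := by
    calc ((N : ℝ) + alp) ^ c.re ≤ ((N : ℝ) + alp) ^ (2:ℝ) :=
          Real.rpow_le_rpow_of_exponent_le (by linarith) hc
      _ = ((N : ℝ) + alp) ^ 2 := by norm_cast
      _ ≤ (2 * N) ^ 2 := by gcongr; linarith
      _ = _ := by ring
  have h2 : 0 ≤ ‖e‖ ^ N := by positivity
  nlinarith

lemma tendsto_geom_cpow {e : ℂ} (he : ‖e‖ < 1) {alp : ℝ} (h0 : 0 < alp) (h1 : alp ≤ 1) {c : ℂ} (hc : c.re ≤ 2) :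
    Tendsto (fun N : ℕ => e ^ N * ((N + alp : ℝ) : ℂ) ^ c) atTop (𝓝 0) := by
  rw [tendsto_zero_iff_norm_tendsto_zero]
  have := (tendsto_pow_const_mul_const_pow_of_abs_lt_one 2 (r := ‖e‖) (by simpa using he)).const_mul 4
  rw [mul_zero] at this
  refine squeeze_zero' (Eventually.of_forall fun _ => norm_nonneg _) ?_ this
  filter_upwards [eventually_ge_atTop 1] with N hN
  exact norm_geom_cpow_le h0 h1 hc N hN

lemma summable_geom_cpow {e : ℂ} (he : ‖e‖ < 1) {alp : ℝ} (h0 : 0 < alp) (h1 : alp ≤ 1) {c : ℂ} (hc : c.re ≤ 2) :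
    Summable (fun N : ℕ => e ^ N * ((N + alp : ℝ) : ℂ) ^ c) := by
  apply Summable.of_norm_bounded_eventually_nat (g := fun N : ℕ => 4 * ((N : ℝ) ^ 2 * ‖e‖ ^ N))
  · have := summable_pow_mul_geometric_of_norm_lt_one 2 (r := ‖e‖) (by simpa using he)
    exact this.mul_left 4
  · filter_upwards [eventually_ge_atTop 1] with N hN
    exact norm_geom_cpow_le h0 h1 hc N hN

/-- the case `‖e‖ < 1` -/
lemma em_geom {e q q1 q0 : ℂ} (h : EMc e 0 q q1 q0) (he : ‖e‖ < 1) {alp : ℝ} (h0 : 0 < alp)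
    (h1 : alp ≤ 1) {s : ℂ} (hs : -2 < s.re) :
    (s - 1) * ∑' m : ℕ, e ^ m * ((m + alp : ℝ) : ℂ) ^ (-s) = emG e 0 q q1 q0 alp s := by
  have hl := em_limit h he.le h0 h1 hs
    (fun c hc => tendsto_geom_cpow he h0 h1 (by simp; linarith)) (by simp)
  have hsum := (summable_geom_cpow he h0 h1 (c := -s) (by simp; linarith)).hasSum.tendsto_sum_nat
  have := ((tendsto_add_atTop_iff_nat 1).mpr hsum).const_mul (s - 1)
  exact tendsto_nhds_unique this hl

/-- the case `1 < re s` -/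
lemma em_abs {e k q q1 q0 : ℂ} (h : EMc e k q q1 q0) (he : ‖e‖ ≤ 1) {alp : ℝ} (h0 : 0 < alp)
    (h1 : alp ≤ 1) {s : ℂ} (hs : 1 < s.re) :
    Summable (fun m : ℕ => e ^ m * ((m + alp : ℝ) : ℂ) ^ (-s)) ∧
    (s - 1) * ∑' m : ℕ, e ^ m * ((m + alp : ℝ) : ℂ) ^ (-s) = emG e k q q1 q0 alp s := by
  have hk := (tendsto_shift_cpow (e := 1) (by simp) alp h0 (c := 1 - s) (by simp; linarith)).const_mul k
  simp only [one_pow, one_mul, mul_zero] at hk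
  have hl := em_limit h he h0 h1 (s := s) (by linarith)
    (fun c hc => tendsto_shift_cpow he alp h0 (by simp; linarith)) hk
  have hsm : Summable (fun m : ℕ => e ^ m * ((m + alp : ℝ) : ℂ) ^ (-s)) := by
    apply Summable.of_norm_bounded ((summable_nat_succ_rpow hs).mul_left (alp ^ (-s.re)))
    intro m
    have := rpow_shift_le h0 h1 (x := s.re) le_rfl le_rfl (by linarith) m
    refine le_trans ?_ this
    rw [norm_mul, Complex.norm_cpow_eq_rpow_re_of_pos (by positivity), norm_pow]
    have h1 : ‖e‖ ^ m ≤ 1 := pow_le_one₀ (norm_nonneg _) he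
    simpa using mul_le_of_le_one_left (by positivity) h1
  refine ⟨hsm, ?_⟩
  have := ((tendsto_add_atTop_iff_nat 1).mpr hsm.hasSum.tendsto_sum_nat).const_mul (s - 1)
  exact tendsto_nhds_unique this hl

noncomputable def cq (e : ℂ) : ℂ := e / (1 - e)
noncomputable def cq1 (e : ℂ) : ℂ := cq e / (e - 1)
noncomputable def cq0 (e : ℂ) : ℂ := (cq e / 2 + cq1 e) / (e - 1)

lemma emc_ne {e : ℂ} (he : e ≠ 1) : EMc e 0 (cq e) (cq1 e) (cq0 e) := by
  have h1 : 1 - e ≠ 0 := sub_ne_zero.mpr he.symm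
  have h2 : e - 1 ≠ 0 := sub_ne_zero.mpr he
  have a1 : cq e * (1 - e) = e := div_mul_cancel₀ _ h1
  have a2 : cq1 e * (e - 1) = cq e := div_mul_cancel₀ _ h2
  have a3 : cq0 e * (e - 1) = cq e / 2 + cq1 e := div_mul_cancel₀ _ h2
  refine ⟨by simp, ?_, ?_, ?_⟩
  · linear_combination a1
  · linear_combination -a2
  · linear_combination -a3

lemma emc_one : EMc 1 1 (-1/2) (1/12) 0 := by
  refine ⟨by norm_num, by norm_num, by norm_num, by norm_num⟩

/-- the multiplier `e(lam)` -/
noncomputable def eR (x : ℝ) : ℂ := Complex.exp (2 * Real.pi * Complex.I * x)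

lemma norm_eR (x : ℝ) : ‖eR x‖ = 1 := by
  unfold eR
  rw [show (2 * Real.pi * Complex.I * x : ℂ) = ((2 * Real.pi * x : ℝ) : ℂ) * Complex.I by push_cast; ring]
  exact Complex.norm_exp_ofReal_mul_I _

lemma eR_pow (x : ℝ) (m : ℕ) : eR x ^ m = Complex.exp (2 * Real.pi * Complex.I * x * m) := by
  unfold eR; rw [← Complex.exp_nat_mul]; ring_nf

lemma lerchSeries_eq (lam alp : ℝ) (s : ℂ) :
    lerchSeries lam alp s = ∑' m : ℕ, eR lam ^ m * ((m + alp : ℝ) : ℂ) ^ (-s) := by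
  unfold lerchSeries
  congr 1; ext m
  rw [eR_pow, Complex.cpow_neg, div_eq_mul_inv]; push_cast; rfl

lemma eR_ne_one {lam : ℝ} (h0 : 0 < lam) (h1 : lam < 1) : eR lam ≠ 1 := by
  unfold eR
  rw [Ne, Complex.exp_eq_one_iff]
  rintro ⟨n, hn⟩
  have hpi : (2 * Real.pi * Complex.I : ℂ) ≠ 0 := Complex.two_pi_I_ne_zero
  have : (lam : ℂ) = n := by
    apply mul_left_cancel₀ hpi; rw [hn]; ring
  have h2 : lam = n := by exact_mod_cast this
  rw [h2] at h0 h1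
  have a : (0:ℤ) < n := by exact_mod_cast h0
  have b : n < (1:ℤ) := by exact_mod_cast h1
  omega

lemma exists_emc (lam : ℝ) (h0 : 0 < lam) (h1 : lam ≤ 1) : ∃ k q q1 q0, EMc (eR lam) k q q1 q0 := by
  rcases h1.lt_or_eq with h | h
  · exact ⟨_, _, _, _, emc_ne (eR_ne_one h0 h)⟩
  · have : eR lam = 1 := by rw [h]; unfold eR; simp
    rw [this]; exact ⟨_, _, _, _, emc_one⟩

lemma lerch_eq_emG {lam alp : ℝ} (h0 : 0 < alp) (h1 : alp ≤ 1) {F : ℂ → ℂ} (hF : IsLerch lam alp F)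
    {k q q1 q0 : ℂ} (h : EMc (eR lam) k q q1 q0) {s : ℂ} (hs : -2 < s.re) (hi : 0 < s.im) :
    (s - 1) * F s = emG (eR lam) k q q1 q0 alp s := by
  set U : Set ℂ := {s | -2 < s.re} ∩ {s | 0 < s.im} with hU
  have hUo : IsOpen U := (isOpen_lt continuous_const Complex.continuous_re).inter
    (isOpen_lt continuous_const Complex.continuous_im)
  have hUc : Convex ℝ U := (convex_halfSpace_re_gt _).inter (convex_halfSpace_im_gt _)
  have d1 : DifferentiableOn ℂ (fun s => (s - 1) * F s) U := by
    intro z hz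
    have hz1 : z ≠ 1 := by rintro rfl; exact absurd hz.2 (by simp)
    have := hF.1 z hz1
    exact DifferentiableAt.differentiableWithinAt (by fun_prop)
  have d2 : DifferentiableOn ℂ (emG (eR lam) k q q1 q0 alp) U :=
    (emG_differentiable (norm_eR lam).le h0 h1).mono inter_subset_left
  have hz0 : (2 + Complex.I) ∈ U := by constructor <;> simp
  have heq : (fun s => (s - 1) * F s) =ᶠ[𝓝 (2 + Complex.I)] (emG (eR lam) k q q1 q0 alp) := by
    have : {s : ℂ | 1 < s.re} ∈ 𝓝 (2 + Complex.I) :=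
      (isOpen_lt continuous_const Complex.continuous_re).mem_nhds (by simp)
    filter_upwards [this] with z hz
    have hz' : 1 < z.re := hz
    rw [hF.2 z hz', lerchSeries_eq]
    exact (em_abs h (norm_eR lam).le h0 h1 hz').2
  exact (d1.analyticOnNhd hUo).eqOn_of_preconnected_of_eventuallyEq (d2.analyticOnNhd hUo)
    hUc.isPreconnected hz0 heq ⟨hs, hi⟩

end P4

section P5
open Metric Set Filter Topology MeasureTheory

lemma integrableOn_rpow_exp {x b : ℝ} (hx : -1 < x) (hb : 0 < b) :
    IntegrableOn (fun t : ℝ => t ^ x * Real.exp (-b * t)) (Ioi 0) := by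
  have := integrableOn_rpow_mul_exp_neg_mul_rpow (p := 1) (s := x) (b := b) hx one_pos hb
  simpa using this

lemma norm_gamma_integrand {a : ℂ} {r : ℂ} {t : ℝ} (ht : 0 < t) :
    ‖(t : ℂ) ^ (a - 1) * Complex.exp (-(r * t))‖ = t ^ (a.re - 1) * Real.exp (-r.re * t) := by
  rw [norm_mul, Complex.norm_cpow_eq_rpow_re_of_pos ht, Complex.norm_exp]; simp

lemma gamma_integrand_meas (a r : ℂ) : AEStronglyMeasurable
    (fun t : ℝ => (t : ℂ) ^ (a - 1) * Complex.exp (-(r * t))) (volume.restrict (Ioi 0)) := by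
  apply ContinuousOn.aestronglyMeasurable _ measurableSet_Ioi
  intro t ht
  have ht' : (0:ℝ) < t := ht
  apply ContinuousAt.continuousWithinAt
  apply ContinuousAt.mul
  · exact Complex.continuousAt_ofReal_cpow_const _ _ (Or.inr ht'.ne')
  · fun_prop

lemma gamma_integral_complex {a r : ℂ} (ha : 1 < a.re) (hr : 0 < r.re) :
    ∫ t : ℝ in Ioi 0, (t : ℂ) ^ (a - 1) * Complex.exp (-(r * t)) = (1 / r) ^ a * Complex.Gamma a := by
  set U : Set ℂ := {r | 0 < r.re} with hU
  have hUo : IsOpen U := isOpen_lt continuous_const Complex.continuous_re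
  have d1 : DifferentiableOn ℂ (fun r : ℂ => ∫ t : ℝ in Ioi 0, (t : ℂ) ^ (a - 1) * Complex.exp (-(r * t))) U := by
    intro r0 hr0
    have hr0' : 0 < r0.re := hr0
    apply DifferentiableAt.differentiableWithinAt
    have := hasDerivAt_integral_of_dominated_loc_of_deriv_le (μ := volume.restrict (Ioi (0:ℝ)))
      (F := fun (r : ℂ) (t : ℝ) => (t : ℂ) ^ (a - 1) * Complex.exp (-(r * t)))
      (F' := fun (r : ℂ) (t : ℝ) => (t : ℂ) ^ (a - 1) * (Complex.exp (-(r * t)) * (-t)))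
      (x₀ := r0) (bound := fun t => t ^ a.re * Real.exp (-(r0.re / 2) * t)) (s := ball r0 (r0.re / 2))
      (ball_mem_nhds _ (by linarith)) (Eventually.of_forall fun r => gamma_integrand_meas a r)
      ?_ ?_ ?_ (integrableOn_rpow_exp (by linarith) (by linarith)) ?_
    · exact this.2.differentiableAt
    · have := (integrableOn_rpow_exp (x := a.re - 1) (b := r0.re) (by linarith) hr0')
      refine Integrable.mono' this (gamma_integrand_meas a r0) ?_
      filter_upwards [self_mem_ae_restrict measurableSet_Ioi] with t ht
      exact (norm_gamma_integrand ht).le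
    · have h1 := gamma_integrand_meas a r0
      have h2 : AEStronglyMeasurable (fun t : ℝ => (-(t:ℂ))) (volume.restrict (Ioi 0)) := by
        apply Continuous.aestronglyMeasurable; fun_prop
      refine (h1.mul h2).congr (Eventually.of_forall fun t => ?_)
      simp only [Pi.mul_apply, mul_assoc]
    · filter_upwards [self_mem_ae_restrict measurableSet_Ioi] with t ht r hrb
      have ht' : (0:ℝ) < t := ht
      have : r0.re / 2 ≤ r.re := by
        have h1 : ‖r - r0‖ < r0.re / 2 := by simpa [dist_eq_norm] using hrb
        have h2 := Complex.abs_re_le_norm (r - r0)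
        rw [abs_le] at h2; simp at h2; linarith [h2.1]
      rw [← mul_assoc, norm_mul, norm_gamma_integrand ht, norm_neg, Complex.norm_real, Real.norm_eq_abs,
        abs_of_pos ht']
      calc t ^ (a.re - 1) * Real.exp (-r.re * t) * t = t ^ a.re * Real.exp (-r.re * t) := by
            rw [Real.rpow_sub_one ht'.ne']; field_simp
        _ ≤ _ := by gcongr
    · filter_upwards with t r _
      have h1 : HasDerivAt (fun r : ℂ => -(r * t)) (-(t:ℂ)) r := by
        exact (((hasDerivAt_id r).mul_const (t:ℂ)).neg).congr_deriv (by simp)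
      exact h1.cexp.const_mul _
  have d2 : DifferentiableOn ℂ (fun r : ℂ => (1 / r) ^ a * Complex.Gamma a) U := by
    intro r0 hr0
    have hr0' : 0 < r0.re := hr0
    have hne : r0 ≠ 0 := by rintro rfl; simp at hr0'
    apply DifferentiableAt.differentiableWithinAt
    apply DifferentiableAt.mul_const
    apply DifferentiableAt.cpow_const (by fun_prop (disch := exact hne))
    left
    rw [one_div, Complex.inv_re]
    exact div_pos hr0' (Complex.normSq_pos.mpr hne)
  have hfreq : ∃ᶠ z in 𝓝[≠] (1:ℂ), ∫ t : ℝ in Ioi 0, (t : ℂ) ^ (a - 1) * Complex.exp (-(z * t)) =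
      (1 / z) ^ a * Complex.Gamma a := by
    have ht : Tendsto (fun x : ℝ => (x : ℂ)) (𝓝[>] 1) (𝓝[≠] (1:ℂ)) := by
      apply tendsto_nhdsWithin_iff.mpr
      constructor
      · have : Tendsto (fun x : ℝ => (x : ℂ)) (𝓝 1) (𝓝 ((1:ℝ):ℂ)) := Complex.continuous_ofReal.tendsto 1
        simpa using this.mono_left nhdsWithin_le_nhds
      · filter_upwards [self_mem_nhdsWithin] with x hx
        have : (1:ℝ) < x := hx
        simp; exact this.ne'
    apply ht.frequently
    apply Eventually.frequently
    filter_upwards [self_mem_nhdsWithin] with x hx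
    have : (1:ℝ) < x := hx
    exact Complex.integral_cpow_mul_exp_neg_mul_Ioi (by linarith) (by linarith)
  exact (d1.analyticOnNhd hUo).eqOn_of_preconnected_of_frequently_eq (d2.analyticOnNhd hUo)
    (convex_halfSpace_re_gt 0).isPreconnected (show (1:ℂ) ∈ U by simp [hU]) hfreq hr

end P5

section P6
open Metric Set Filter Topology MeasureTheory Asymptotics

noncomputable def fP (s : ℂ) (lam ε : ℝ) (y : ℝ) : ℂ :=
  ((max y 0 : ℝ) : ℂ) ^ (-s) * Complex.exp ((2 * Real.pi * Complex.I * lam - ε) * y)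

/-- the frequency variable -/
noncomputable def rP (lam ε : ℝ) (ξ : ℝ) : ℂ := ε + 2 * Real.pi * Complex.I * (ξ - lam)

lemma fP_cont {s : ℂ} (hs : s.re < 0) (lam ε : ℝ) : Continuous (fP s lam ε) := by
  unfold fP
  have h1 : Continuous (fun x : ℝ => (x : ℂ) ^ (-s)) := Complex.continuous_ofReal_cpow_const (by simpa using hs)
  have h2 : Continuous (fun y : ℝ => ((max y 0 : ℝ) : ℂ) ^ (-s)) := h1.comp (by fun_prop)
  fun_prop

lemma fP_neg {s : ℂ} (hs : s.re < 0) (lam ε : ℝ) {y : ℝ} (hy : y ≤ 0) : fP s lam ε y = 0 := by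
  unfold fP
  have : -s ≠ 0 := by intro h; rw [neg_eq_zero] at h; simp [h] at hs
  rw [max_eq_right hy]; simp [this]

lemma fP_pos (s : ℂ) (lam ε : ℝ) {y : ℝ} (hy : 0 < y) : fP s lam ε y =
    (y : ℂ) ^ (-s) * Complex.exp ((2 * Real.pi * Complex.I * lam - ε) * y) := by
  unfold fP; rw [max_eq_left hy.le]

lemma fP_decay {s : ℂ} (hs : s.re < 0) (lam : ℝ) {ε : ℝ} (hε : 0 < ε) :
    fP s lam ε =O[cocompact ℝ] (fun x => |x| ^ (-2:ℝ)) := by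
  rw [cocompact_eq_atBot_atTop, isBigO_sup]
  constructor
  · apply IsBigO.of_bound 0
    filter_upwards [eventually_le_atBot 0] with y hy
    simp [fP_neg hs lam ε hy]
  · have h1 := (isLittleO_exp_neg_mul_rpow_atTop hε (-2 + s.re)).isBigO
    have h2 : (fun x : ℝ => x ^ (-s.re)) =O[atTop] (fun x : ℝ => x ^ (-s.re)) := isBigO_refl _ _
    have h3 := h2.mul h1
    refine IsBigO.trans (IsBigO.of_bound 1 ?_) (h3.trans (IsBigO.of_bound 1 ?_))
    · filter_upwards [eventually_gt_atTop 0] with y hy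
      rw [fP_pos s lam ε hy, norm_mul, Complex.norm_cpow_eq_rpow_re_of_pos hy, Complex.norm_exp, one_mul,
        norm_mul, Real.norm_of_nonneg (by positivity), Real.norm_of_nonneg (by positivity)]
      simp
    · filter_upwards [eventually_gt_atTop 0] with y hy
      rw [← Real.rpow_add hy, abs_of_pos hy]; simp

lemma fP_fourier {s : ℂ} (hs : s.re < 0) (lam : ℝ) {ε : ℝ} (hε : 0 < ε) (ξ : ℝ) :
    FourierTransform.fourier (fP s lam ε) ξ = (1 / rP lam ε ξ) ^ (1 - s) * Complex.Gamma (1 - s) := by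
  rw [Real.fourier_real_eq_integral_exp_smul]
  rw [← gamma_integral_complex (by simp; linarith) (by simp [rP, hε])]
  rw [← setIntegral_eq_integral_of_forall_compl_eq_zero (s := Ioi 0)]
  · apply setIntegral_congr_fun measurableSet_Ioi
    intro t ht
    have ht' : (0:ℝ) < t := ht
    simp only [smul_eq_mul]
    rw [fP_pos s lam ε ht', show 1 - s - 1 = -s by ring, mul_left_comm, ← Complex.exp_add]
    congr 2
    unfold rP; push_cast; ring
  · intro t ht
    rw [fP_neg hs lam ε (by simpa using ht)]; simp

lemma rP_norm_ge (lam : ℝ) {ε : ℝ} (ξ : ℝ) : 2 * Real.pi * |ξ - lam| ≤ ‖rP lam ε ξ‖ := by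
  have h := Complex.abs_im_le_norm (rP lam ε ξ)
  have : (rP lam ε ξ).im = 2 * Real.pi * (ξ - lam) := by simp [rP]
  rw [this, abs_mul, abs_of_pos (by positivity)] at h
  exact h

lemma rP_cpow_bound {a : ℂ} (ha : 0 ≤ a.re) {lam ε : ℝ} (hε : 0 ≤ ε) {ξ : ℝ} (hξ : ξ ≠ lam) :
    ‖(1 / rP lam ε ξ) ^ a‖ ≤ Real.exp (Real.pi * |a.im|) * (1 / |ξ - lam| ^ a.re) := by
  have hd : 0 < |ξ - lam| := abs_pos.mpr (sub_ne_zero.mpr hξ)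
  have h1 := rP_norm_ge lam (ε := ε) ξ
  have hpi := Real.pi_gt_three
  have h2 : |ξ - lam| ≤ ‖rP lam ε ξ‖ := by nlinarith
  have hne : rP lam ε ξ ≠ 0 := by rw [← norm_pos_iff]; linarith
  refine (Complex.norm_cpow_le _ _).trans ?_
  rw [div_eq_mul_inv, ← Real.exp_neg, mul_comm]
  apply mul_le_mul
  · apply Real.exp_le_exp.mpr
    have h3 := Complex.abs_arg_le_pi (1 / rP lam ε ξ)
    calc -((1 / rP lam ε ξ).arg * a.im) ≤ |(1 / rP lam ε ξ).arg * a.im| := neg_le_abs _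
      _ = |(1 / rP lam ε ξ).arg| * |a.im| := abs_mul _ _
      _ ≤ _ := by gcongr
  · rw [norm_div, norm_one, one_div, one_div, Real.inv_rpow (norm_nonneg _)]
    gcongr
  · positivity
  · positivity

lemma fP_fourier_decay {s : ℂ} (hs : s.re ≤ -1) (lam : ℝ) {ε : ℝ} (hε : 0 < ε) :
    FourierTransform.fourier (fP s lam ε) =O[cocompact ℝ] (fun x => |x| ^ (-2:ℝ)) := by
  apply IsBigO.of_bound (Real.exp (Real.pi * |(1 - s).im|) * (2:ℝ) ^ (1 - s).re * ‖Complex.Gamma (1 - s)‖)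
  have hev : ∀ᶠ x : ℝ in cocompact ℝ, 2 * |lam| + 2 ≤ ‖x‖ :=
    tendsto_norm_cocompact_atTop.eventually (eventually_ge_atTop _)
  filter_upwards [hev] with x hx
  rw [Real.norm_eq_abs] at hx
  have hl := abs_nonneg lam
  have h1 : |x| / 2 ≤ |x - lam| := by
    have := abs_sub_abs_le_abs_sub x lam; linarith
  have hne : x ≠ lam := by intro h; rw [h] at hx; linarith
  have hre : 2 ≤ (1 - s).re := by simp; linarith
  rw [fP_fourier (by linarith) lam hε, norm_mul]
  have h2 := rP_cpow_bound (a := 1 - s) (by linarith) hε.le hne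
  have hx1 : 1 ≤ |x| := by linarith
  have hx0 : 0 < |x| := by linarith
  have h3 : 1 / |x - lam| ^ (1 - s).re ≤ (2:ℝ) ^ (1 - s).re * |x| ^ (-2:ℝ) := by
    calc 1 / |x - lam| ^ (1 - s).re ≤ 1 / (|x| / 2) ^ (1 - s).re := by gcongr
      _ = (2:ℝ) ^ (1 - s).re * |x| ^ (-(1 - s).re) := by
          rw [Real.div_rpow hx0.le (by norm_num), Real.rpow_neg hx0.le]; field_simp
      _ ≤ _ := by gcongr
  rw [Real.norm_of_nonneg (by positivity)]
  calc _ ≤ (Real.exp (Real.pi * |(1 - s).im|) * ((2:ℝ) ^ (1 - s).re * |x| ^ (-2:ℝ))) * ‖Complex.Gamma (1 - s)‖ := by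
        gcongr
        exact h2.trans (by gcongr)
    _ = _ := by ring

lemma fP_poisson {s : ℂ} (hs : s.re ≤ -1) (hs2 : -2 < s.re) (lam : ℝ) {alp ε : ℝ} (h0 : 0 < alp) (h1 : alp ≤ 1) (hε : 0 < ε) :
    Complex.exp ((2 * Real.pi * Complex.I * lam - ε) * alp) *
      ∑' m : ℕ, (eR lam * Complex.exp (-ε)) ^ m * ((m + alp : ℝ) : ℂ) ^ (-s) =
    Complex.Gamma (1 - s) * ∑' n : ℤ, (1 / rP lam ε n) ^ (1 - s) * eR alp ^ n := by
  have hs0 : s.re < 0 := by linarith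
  have hp := Real.tsum_eq_tsum_fourier_of_rpow_decay (fP_cont hs0 lam ε) (b := 2) (by norm_num)
    (fP_decay hs0 lam hε) (fP_fourier_decay hs lam hε) alp
  have hterm : ∀ m : ℕ, fP s lam ε (alp + ((m : ℤ) : ℝ)) = Complex.exp ((2 * Real.pi * Complex.I * lam - ε) * alp) *
      ((eR lam * Complex.exp (-ε)) ^ m * ((m + alp : ℝ) : ℂ) ^ (-s)) := by
    intro m
    rw [fP_pos _ _ _ (by positivity), mul_pow, eR_pow, ← Complex.exp_nat_mul, ← Complex.exp_add, ← mul_assoc,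
      ← Complex.exp_add, mul_comm, add_comm alp]
    push_cast
    congr 2
    ring
  have hterm2 : ∀ m : ℕ, fP s lam ε (alp + ((-((m : ℤ) + 1) : ℤ) : ℝ)) = 0 := by
    intro m
    apply fP_neg hs0
    push_cast
    have : (0:ℝ) ≤ m := Nat.cast_nonneg m
    linarith
  have he : ‖eR lam * Complex.exp (-ε)‖ < 1 := by
    rw [norm_mul, norm_eR, one_mul, Complex.norm_exp]; simpa using hε
  have hsm := summable_geom_cpow he h0 h1 (c := -s) (by simp; linarith)
  rw [tsum_of_nat_of_neg_add_one] at hp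
  · simp only [hterm, hterm2, tsum_zero, add_zero] at hp
    rw [tsum_mul_left] at hp
    rw [hp, ← tsum_mul_left]
    congr 1; ext n
    rw [fP_fourier hs0 lam hε, fourier_coe_apply]
    have : Complex.exp (2 * Real.pi * Complex.I * n * alp / (1:ℝ)) = eR alp ^ n := by
      unfold eR; rw [← Complex.exp_int_mul]; push_cast; ring_nf
    rw [this]; ring
  · simp only [hterm]; exact hsm.mul_left _
  · simp only [hterm2]; exact summable_zero

end P6

section P7
open Metric Set Filter Topology MeasureTheory Asymptotics

/-- the universal factor of the functional equation -/
noncomputable def chiL (s : ℂ) : ℂ :=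
  Complex.Gamma (1 - s) * ((2 * Real.pi : ℝ) : ℂ) ^ (s - 1) * Complex.exp (-Real.pi * Complex.I * (s - 1) / 2)

lemma cq_cont {e : ℂ} (he : e ≠ 1) : ContinuousAt cq e := by
  unfold cq
  exact continuousAt_id.div (by fun_prop) (sub_ne_zero.mpr he.symm)

lemma cq1_cont {e : ℂ} (he : e ≠ 1) : ContinuousAt cq1 e := by
  have := cq_cont he
  unfold cq1
  exact this.div (by fun_prop) (sub_ne_zero.mpr he)

lemma cq0_cont {e : ℂ} (he : e ≠ 1) : ContinuousAt cq0 e := by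
  have := cq_cont he
  have := cq1_cont he
  unfold cq0
  exact ContinuousAt.div (by fun_prop) (by fun_prop) (sub_ne_zero.mpr he)

lemma emG_tendsto {e : ℂ} (he1 : e ≠ 1) {alp : ℝ} (h0 : 0 < alp) (h1 : alp ≤ 1)
    {s : ℂ} (hs : -2 < s.re) {l : Filter ℝ} {E : ℝ → ℂ} (hE : Tendsto E l (𝓝 e)) (hE1 : ∀ᶠ x in l, ‖E x‖ ≤ 1) :
    Tendsto (fun x => emG (E x) 0 (cq (E x)) (cq1 (E x)) (cq0 (E x)) alp s) l
      (𝓝 (emG e 0 (cq e) (cq1 e) (cq0 e) alp s)) := by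
  have t0 : Tendsto (fun x => cq (E x)) l (𝓝 (cq e)) := (cq_cont he1).tendsto.comp hE
  have t1 : Tendsto (fun x => cq1 (E x)) l (𝓝 (cq1 e)) := (cq1_cont he1).tendsto.comp hE
  have t2 : Tendsto (fun x => cq0 (E x)) l (𝓝 (cq0 e)) := (cq0_cont he1).tendsto.comp hE
  unfold emG
  apply Tendsto.add
  · apply Tendsto.add
    · apply Tendsto.const_mul
      apply Tendsto.const_add
      unfold emPsi
      exact ((t2.mul_const _).add (t1.mul_const _)).add (t0.mul_const _)
    · simp only [zero_mul]
      exact tendsto_const_nhds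
  · have hb : ∀ᶠ x in l, ‖(0:ℂ)‖ + ‖cq (E x)‖ + ‖cq1 (E x)‖ + ‖cq0 (E x)‖ ≤ ‖cq e‖ + ‖cq1 e‖ + ‖cq0 e‖ + 1 := by
      have := ((t0.norm.add t1.norm).add t2.norm).eventually (ge_mem_nhds (lt_add_one _))
      filter_upwards [this] with x hx
      simpa using hx
    apply tendsto_tsum_of_dominated_convergence
      (bound := fun m : ℕ => (‖cq e‖ + ‖cq1 e‖ + ‖cq0 e‖ + 1) * (‖s‖ + 2) ^ 4 * alp ^ (-(s.re + 3)) *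
      ((m : ℝ) + 1) ^ (-(1 + (s.re + 2))))
    · exact (summable_nat_succ_rpow (by linarith)).mul_left _
    · intro m
      apply (hE.pow m).mul
      unfold emT emH
      have k0 : ∀ (x y : ℂ), Tendsto (fun t => (s - 1) * ((0 * x ^ 3 / 6 + cq (E t) * x ^ 2 / 2 + cq1 (E t) * x + cq0 (E t)) * (s * (s + 1) * y ^ (-s - 2))
         + (0 * x ^ 2 / 2 + cq (E t) * x + cq1 (E t)) * (s * y ^ (-s - 1)) + (0 * x + cq (E t)) * y ^ (-s)) + 0 * y ^ (1 - s)) l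
         (𝓝 ((s - 1) * ((0 * x ^ 3 / 6 + cq e * x ^ 2 / 2 + cq1 e * x + cq0 e) * (s * (s + 1) * y ^ (-s - 2))
         + (0 * x ^ 2 / 2 + cq e * x + cq1 e) * (s * y ^ (-s - 1)) + (0 * x + cq e) * y ^ (-s)) + 0 * y ^ (1 - s))) := by
        intro x y
        apply Tendsto.add_const
        apply Tendsto.const_mul
        apply Tendsto.add
        · apply Tendsto.add
          · apply Tendsto.mul_const
            exact ((((t0.mul_const _).div_const _).const_add _).add (t1.mul_const _)).add t2
          · apply Tendsto.mul_const
            exact ((t0.mul_const _).const_add _).add t1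
        · apply Tendsto.mul_const
          exact t0.const_add _
      exact (k0 _ _).sub (k0 _ _)
    · filter_upwards [hE1, hb] with x hx hbx m
      refine (emT_bound' hx h0 h1 (δ := s.re + 2) (by linarith) (by linarith) le_rfl m).trans ?_
      gcongr

lemma eR_zpow_norm (x : ℝ) (n : ℤ) : ‖eR x ^ n‖ = 1 := by
  rw [norm_zpow, norm_eR, one_zpow]

lemma fe_limit {lam alp : ℝ} (hl0 : 0 < lam) (hl1 : lam < 1) (h0 : 0 < alp) (h1 : alp ≤ 1)
    {F : ℂ → ℂ} (hF : IsLerch lam alp F) {s : ℂ} (hs : s.re ≤ -1) (hs2 : -2 < s.re) (hi : 0 < s.im) :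
    eR (lam * alp) * F s = Complex.Gamma (1 - s) * ∑' n : ℤ, (1 / rP lam 0 n) ^ (1 - s) * eR alp ^ n := by
  have hne := eR_ne_one hl0 hl1
  have hs1 : s - 1 ≠ 0 := by intro h; have := congrArg Complex.im h; simp at this; linarith
  have hInt : ∀ n : ℤ, (n : ℝ) ≠ lam := by
    intro n hn
    rw [← hn] at hl0 hl1
    have a : (0:ℤ) < n := by exact_mod_cast hl0
    have b : n < (1:ℤ) := by exact_mod_cast hl1
    omega
  set E : ℝ → ℂ := fun ε => eR lam * Complex.exp (-ε) with hE
  have tE : Tendsto E (𝓝[>] 0) (𝓝 (eR lam)) := by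
    have : ContinuousAt E 0 := by rw [hE]; fun_prop
    have h2 := this.tendsto.mono_left (nhdsWithin_le_nhds (s := Ioi 0))
    simpa [hE] using h2
  have hpos : ∀ᶠ ε : ℝ in 𝓝[>] 0, 0 < ε := self_mem_nhdsWithin
  have nE : ∀ ε : ℝ, 0 < ε → ‖E ε‖ < 1 := by
    intro ε hε
    simp only [hE]
    rw [norm_mul, norm_eR, one_mul, Complex.norm_exp]; simpa using hε
  have L1 := emG_tendsto hne h0 h1 hs2 tE (hpos.mono fun ε hε => (nE ε hε).le)
  have L2 : Tendsto (fun ε : ℝ => Complex.exp ((2 * Real.pi * Complex.I * lam - ε) * alp)) (𝓝[>] 0) (𝓝 (eR (lam * alp))) := by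
    have : ContinuousAt (fun ε : ℝ => Complex.exp ((2 * Real.pi * Complex.I * lam - ε) * alp)) 0 := by fun_prop
    have h2 := this.tendsto.mono_left (nhdsWithin_le_nhds (s := Ioi 0))
    convert h2 using 2
    unfold eR; push_cast; ring_nf
  have L3 := (L2.mul L1).div_const (s - 1)
  rw [← lerch_eq_emG h0 h1 hF (emc_ne hne) hs2 hi] at L3
  have R1 : Tendsto (fun ε : ℝ => Complex.Gamma (1 - s) * ∑' n : ℤ, (1 / rP lam ε n) ^ (1 - s) * eR alp ^ n) (𝓝[>] 0)
      (𝓝 (Complex.Gamma (1 - s) * ∑' n : ℤ, (1 / rP lam 0 n) ^ (1 - s) * eR alp ^ n)) := by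
    apply Tendsto.const_mul
    apply tendsto_tsum_of_dominated_convergence
      (bound := fun n : ℤ => Real.exp (Real.pi * |(1 - s).im|) * (1 / |(n : ℝ) - lam| ^ (1 - s).re))
    · have := (Real.summable_one_div_int_add_rpow (-lam) (1 - s).re).mpr (by simp; linarith)
      exact (this.mul_left _)
    · intro n
      apply Tendsto.mul_const
      have hr0 : rP lam 0 n ≠ 0 := by
        intro h
        have := rP_norm_ge lam (ε := 0) n
        rw [h, norm_zero] at this
        have h3 := abs_pos.mpr (sub_ne_zero.mpr (hInt n))
        have := Real.pi_pos
        nlinarith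
      have : ContinuousAt (fun ε : ℝ => (1 / rP lam ε n) ^ (1 - s)) 0 := by
        refine ContinuousAt.cpow (f := fun ε : ℝ => 1 / rP lam ε n) (g := fun _ => 1 - s) ?_ continuousAt_const ?_
        · unfold rP at *
          exact continuousAt_const.div (by fun_prop) hr0
        · right
          rw [one_div, Complex.inv_im]
          have him : (rP lam 0 n).im = 2 * Real.pi * (n - lam) := by simp [rP]
          have := Complex.normSq_pos.mpr hr0
          rw [him]
          apply div_ne_zero _ this.ne'
          have := Real.pi_pos
          have h3 := sub_ne_zero.mpr (hInt n)
          simp [h3, this.ne']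
      exact this.tendsto.mono_left (nhdsWithin_le_nhds (s := Ioi 0))
    · filter_upwards [hpos] with ε hε n
      rw [norm_mul, eR_zpow_norm, mul_one]
      exact rP_cpow_bound (by simp; linarith) hε.le (hInt n)
  have : eR (lam * alp) * ((s - 1) * F s) / (s - 1) = eR (lam * alp) * F s := by field_simp
  rw [this] at L3
  refine tendsto_nhds_unique L3 (R1.congr' ?_)
  filter_upwards [hpos] with ε hε
  rw [← fP_poisson hs hs2 lam h0 h1 hε]
  have hne' : E ε ≠ 1 := by intro h; have := nE ε hε; rw [h] at this; simp at this
  rw [← em_geom (emc_ne hne') (nE ε hε) h0 h1 hs2]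
  field_simp
  simp only [hE]

lemma inv_I_cpow {x : ℝ} (hx : 0 < x) (a : ℂ) : (1 / (2 * Real.pi * Complex.I * (-x)) : ℂ) ^ a =
    ((2 * Real.pi : ℝ) : ℂ) ^ (-a) * (x : ℂ) ^ (-a) * Complex.exp (Real.pi * Complex.I * a / 2) := by
  have hx' : (x : ℂ) ≠ 0 := by exact_mod_cast hx.ne'
  have hp : (Real.pi : ℂ) ≠ 0 := by exact_mod_cast Real.pi_ne_zero
  have hp2 : ((2 * Real.pi : ℝ) : ℂ) ≠ 0 := by exact_mod_cast (by positivity)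
  have e1 : (1 / (2 * Real.pi * Complex.I * (-x)) : ℂ) = ((1 / (2 * Real.pi * x) : ℝ) : ℂ) * Complex.I := by
    have hI := Complex.I_sq
    push_cast; field_simp; rw [hI]
  have hpos : 0 < 1 / (2 * Real.pi * x) := by positivity
  have hne : ((1 / (2 * Real.pi * x) : ℝ) : ℂ) * Complex.I ≠ 0 :=
    mul_ne_zero (by exact_mod_cast hpos.ne') Complex.I_ne_zero
  rw [e1, Complex.cpow_def_of_ne_zero hne, Complex.cpow_def_of_ne_zero hx', Complex.cpow_def_of_ne_zero hp2,
    Complex.log_ofReal_mul hpos Complex.I_ne_zero, Complex.log_I, ← Complex.exp_add, ← Complex.exp_add,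
    ← Complex.ofReal_log (by positivity), ← Complex.ofReal_log hx.le]
  rw [one_div, Real.log_inv, Real.log_mul (by positivity) hx.ne']
  push_cast
  congr 1
  ring

lemma inv_I_cpow' {x : ℝ} (hx : 0 < x) (a : ℂ) : (1 / (2 * Real.pi * Complex.I * x) : ℂ) ^ a =
    ((2 * Real.pi : ℝ) : ℂ) ^ (-a) * (x : ℂ) ^ (-a) * Complex.exp (-Real.pi * Complex.I * a / 2) := by
  have hx' : (x : ℂ) ≠ 0 := by exact_mod_cast hx.ne'
  have hp : (Real.pi : ℂ) ≠ 0 := by exact_mod_cast Real.pi_ne_zero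
  have hp2 : ((2 * Real.pi : ℝ) : ℂ) ≠ 0 := by exact_mod_cast (by positivity)
  have e1 : (1 / (2 * Real.pi * Complex.I * x) : ℂ) = ((1 / (2 * Real.pi * x) : ℝ) : ℂ) * (-Complex.I) := by
    have hI := Complex.I_sq
    push_cast; field_simp; rw [hI]; ring
  have hpos : 0 < 1 / (2 * Real.pi * x) := by positivity
  have hI0 : -Complex.I ≠ 0 := neg_ne_zero.mpr Complex.I_ne_zero
  have hne : ((1 / (2 * Real.pi * x) : ℝ) : ℂ) * (-Complex.I) ≠ 0 :=
    mul_ne_zero (by exact_mod_cast hpos.ne') hI0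
  rw [e1, Complex.cpow_def_of_ne_zero hne, Complex.cpow_def_of_ne_zero hx', Complex.cpow_def_of_ne_zero hp2,
    Complex.log_ofReal_mul hpos hI0, Complex.log_neg_I, ← Complex.exp_add, ← Complex.exp_add,
    ← Complex.ofReal_log (by positivity), ← Complex.ofReal_log hx.le]
  rw [one_div, Real.log_inv, Real.log_mul (by positivity) hx.ne']
  push_cast
  congr 1
  ring

end P7

section P8
open Metric Set Filter Topology MeasureTheory Asymptotics

lemma dirS {a : ℝ} (h0 : 0 < a) (h1 : a ≤ 1) {c : ℕ → ℂ} (hc : ∀ m, ‖c m‖ ≤ 1) {w : ℂ}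
    (hw : 2 ≤ w.re) (hw3 : w.re ≤ 3) :
    Summable (fun m : ℕ => c m * ((m + a : ℝ) : ℂ) ^ (-w)) ∧
    ‖∑' m : ℕ, c m * ((m + a : ℝ) : ℂ) ^ (-w)‖ ≤ a ^ (-3 : ℝ) * ∑' m : ℕ, ((m : ℝ) + 1) ^ (-2 : ℝ) := by
  have hb : ∀ m : ℕ, ‖c m * ((m + a : ℝ) : ℂ) ^ (-w)‖ ≤ a ^ (-3 : ℝ) * ((m : ℝ) + 1) ^ (-2 : ℝ) := by
    intro m
    have hpos : (0:ℝ) < m + a := by positivity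
    rw [norm_mul, Complex.norm_cpow_eq_rpow_re_of_pos hpos]
    calc _ ≤ 1 * ((m:ℝ) + a) ^ (-w).re := by gcongr; exact hc m
      _ ≤ _ := by
        rw [one_mul]
        exact rpow_shift_le h0 h1 hw hw3 (by norm_num) m
  have hs : Summable (fun m : ℕ => a ^ (-3 : ℝ) * ((m : ℝ) + 1) ^ (-2 : ℝ)) :=
    (summable_nat_succ_rpow (by norm_num)).mul_left _
  refine ⟨Summable.of_norm_bounded hs hb, ?_⟩
  rw [← tsum_mul_left]
  exact tsum_of_norm_bounded hs.hasSum hb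

lemma eR_neg (x : ℝ) : eR (-x) = (eR x)⁻¹ := by
  unfold eR; rw [← Complex.exp_neg]; congr 1; push_cast; ring

lemma norm_exp_eta (s : ℂ) : ‖Complex.exp (-Real.pi * Complex.I * (1 - s))‖ = Real.exp (-Real.pi * s.im) := by
  rw [Complex.norm_exp]; congr 1; simp

lemma lerch_FE_lt {lam alp : ℝ} (hl0 : 0 < lam) (hl1 : lam < 1) (h0 : 0 < alp) (h1 : alp ≤ 1)
    {F : ℂ → ℂ} (hF : IsLerch lam alp F) : ∃ C, 0 ≤ C ∧ ∀ s : ℂ, -2 < s.re → s.re ≤ -1 → 0 < s.im →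
    ∃ η : ℂ, ‖η‖ ≤ C * Real.exp (-Real.pi * s.im) ∧
      eR (lam * alp) * F s = chiL s * (lerchSeries (-alp) lam (1 - s) + η) := by
  refine ⟨(1 - lam) ^ (-3 : ℝ) * ∑' m : ℕ, ((m : ℝ) + 1) ^ (-2 : ℝ), ?_, ?_⟩
  · have : 0 < 1 - lam := by linarith
    exact mul_nonneg (Real.rpow_nonneg this.le _) (tsum_nonneg fun m => by positivity)
  intro s hs2 hs1 hi
  obtain ⟨S2, B2⟩ := dirS (a := 1 - lam) (by linarith) (by linarith) (c := fun m => eR alp ^ (m + 1))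
    (fun m => by rw [norm_pow, norm_eR, one_pow]) (w := 1 - s) (by simp; linarith) (by simp; linarith)
  obtain ⟨S1, -⟩ := dirS (a := lam) (by linarith) (by linarith) (c := fun m => eR (-alp) ^ m)
    (fun m => by rw [norm_pow, norm_eR, one_pow]) (w := 1 - s) (by simp; linarith) (by simp; linarith)
  refine ⟨Complex.exp (-Real.pi * Complex.I * (1 - s)) *
    ∑' m : ℕ, eR alp ^ (m + 1) * ((m + (1 - lam) : ℝ) : ℂ) ^ (-(1 - s)), ?_, ?_⟩
  · rw [norm_mul, norm_exp_eta, mul_comm]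
    gcongr
  rw [fe_limit hl0 hl1 h0 h1 hF hs1 hs2 hi, lerchSeries_eq]
  set K : ℂ := ((2 * Real.pi : ℝ) : ℂ) ^ (-(1 - s)) * Complex.exp (Real.pi * Complex.I * (1 - s) / 2) with hK
  have g1 : ∀ m : ℕ, (1 / rP lam 0 ((-(m : ℤ) : ℤ) : ℝ)) ^ (1 - s) * eR alp ^ (-(m : ℤ)) =
      K * (eR (-alp) ^ m * ((m + lam : ℝ) : ℂ) ^ (-(1 - s))) := by
    intro m
    have e1 : rP lam 0 ((-(m : ℤ) : ℤ) : ℝ) = 2 * Real.pi * Complex.I * (-((m + lam : ℝ) : ℂ)) := by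
      unfold rP; push_cast; ring
    rw [e1, inv_I_cpow (by positivity), eR_neg, zpow_neg, zpow_natCast, inv_pow, hK]
    ring
  have g2 : ∀ m : ℕ, (1 / rP lam 0 ((-(-((m : ℤ) + 1)) : ℤ) : ℝ)) ^ (1 - s) * eR alp ^ (-(-((m : ℤ) + 1))) =
      K * Complex.exp (-Real.pi * Complex.I * (1 - s)) *
        (eR alp ^ (m + 1) * ((m + (1 - lam) : ℝ) : ℂ) ^ (-(1 - s))) := by
    intro m
    have e1 : rP lam 0 ((-(-((m : ℤ) + 1)) : ℤ) : ℝ) = 2 * Real.pi * Complex.I * (((m + (1 - lam) : ℝ) : ℂ)) := by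
      unfold rP; push_cast; ring
    have e2 : Complex.exp (-Real.pi * Complex.I * (1 - s) / 2) =
        Complex.exp (Real.pi * Complex.I * (1 - s) / 2) * Complex.exp (-Real.pi * Complex.I * (1 - s)) := by
      rw [← Complex.exp_add]; congr 1; ring
    have e3 : -(-((m : ℤ) + 1)) = ((m + 1 : ℕ) : ℤ) := by push_cast; ring
    have hp : (0:ℝ) < m + (1 - lam) := by have : (0:ℝ) ≤ m := Nat.cast_nonneg m; linarith
    rw [e1, inv_I_cpow' hp, e3, zpow_natCast, e2, hK]
    ring
  have e : ∑' n : ℤ, (1 / rP lam 0 n) ^ (1 - s) * eR alp ^ n =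
      ∑' n : ℤ, (1 / rP lam 0 ((-n : ℤ) : ℝ)) ^ (1 - s) * eR alp ^ (-n) :=
    ((Equiv.neg ℤ).tsum_eq (fun n : ℤ => (1 / rP lam 0 n) ^ (1 - s) * eR alp ^ n)).symm
  rw [e, tsum_of_nat_of_neg_add_one]
  · simp_rw [g1, g2]
    rw [tsum_mul_left, tsum_mul_left, hK]
    unfold chiL
    rw [show -(1 - s) = s - 1 by ring, show (Real.pi : ℂ) * Complex.I * (1 - s) / 2 = -Real.pi * Complex.I * (s - 1) / 2 by ring]
    ring
  · simp_rw [g1]; exact S1.mul_left _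
  · simp_rw [g2]; exact S2.mul_left _

lemma lerch_FE_one {alp : ℝ} (h0 : 0 < alp) (h1 : alp ≤ 1)
    {F : ℂ → ℂ} (hF : IsLerch 1 alp F) : ∃ C, 0 ≤ C ∧ ∀ s : ℂ, -2 < s.re → s.re ≤ -1 → 0 < s.im →
    ∃ η : ℂ, ‖η‖ ≤ C * Real.exp (-Real.pi * s.im) ∧
      eR (1 * alp) * F s = chiL s * (lerchSeries (-alp) 1 (1 - s) + η) := by
  refine ⟨1 ^ (-3 : ℝ) * ∑' m : ℕ, ((m : ℝ) + 1) ^ (-2 : ℝ), ?_, ?_⟩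
  · exact mul_nonneg (by positivity) (tsum_nonneg fun m => by positivity)
  intro s hs2 hs1 hi
  have hexp : ∀ x : ℝ, HurwitzZeta.expZeta x (1 - s) = ∑' m : ℕ, eR x ^ (m + 1) * ((m + 1 : ℝ) : ℂ) ^ (-(1 - s)) := by
    intro x
    have := HurwitzZeta.hasSum_expZeta_of_one_lt_re x (s := 1 - s) (by simp; linarith)
    have h2 := ((hasSum_nat_add_iff' 1).mpr this).tsum_eq
    have h3 : (1 - s) ≠ 0 := by intro h; have := congrArg Complex.re h; simp at this; linarith
    simp only [Finset.range_one, Finset.sum_singleton, Nat.cast_zero, Complex.zero_cpow h3, div_zero, sub_zero] at h2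
    rw [← h2]
    apply tsum_congr
    intro m
    rw [eR_pow, Complex.cpow_neg, div_eq_mul_inv]
    push_cast; rfl
  have hFH : F s = HurwitzZeta.hurwitzZeta (alp : UnitAddCircle) s := by
    set U : Set ℂ := {s | 0 < s.im} with hU
    have hUo : IsOpen U := (isOpen_lt continuous_const Complex.continuous_im)
    have hUc : Convex ℝ U := (convex_halfSpace_im_gt _)
    have hne : ∀ z ∈ U, z ≠ 1 := by rintro z hz rfl; exact absurd hz (by simp [hU])
    have d1 : DifferentiableOn ℂ F U := fun z hz => (hF.1 z (hne z hz)).differentiableWithinAt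
    have d2 : DifferentiableOn ℂ (HurwitzZeta.hurwitzZeta (alp : UnitAddCircle)) U := fun z hz =>
      (HurwitzZeta.differentiableAt_hurwitzZeta _ (hne z hz)).differentiableWithinAt
    have hz0 : (2 + Complex.I) ∈ U := by simp [hU]
    have heq : F =ᶠ[𝓝 (2 + Complex.I)] (HurwitzZeta.hurwitzZeta (alp : UnitAddCircle)) := by
      have : {s : ℂ | 1 < s.re} ∈ 𝓝 (2 + Complex.I) :=
        (isOpen_lt continuous_const Complex.continuous_re).mem_nhds (by simp)
      filter_upwards [this] with z hz
      have hz' : 1 < z.re := hz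
      rw [hF.2 z hz', ← (HurwitzZeta.hasSum_hurwitzZeta_of_one_lt_re ⟨h0.le, h1⟩ hz').tsum_eq]
      unfold lerchSeries
      apply tsum_congr
      intro m
      congr 1
      rw [show (2 * Real.pi * Complex.I * ((1:ℝ):ℂ) * m : ℂ) = m * (2 * Real.pi * Complex.I) by push_cast; ring]
      exact Complex.exp_nat_mul_two_pi_mul_I m
    exact (d1.analyticOnNhd hUo).eqOn_of_preconnected_of_eventuallyEq (d2.analyticOnNhd hUo)
      hUc.isPreconnected hz0 heq hi
  have hFE := HurwitzZeta.hurwitzZeta_one_sub (alp : UnitAddCircle) (s := 1 - s)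
    (fun n h => by
      have := congrArg Complex.re h; simp at this
      have h2 : (0:ℝ) ≤ n := Nat.cast_nonneg n
      linarith)
    (Or.inr (fun h => by have := congrArg Complex.im h; simp at this; linarith))
  rw [sub_sub_cancel, ← hFH] at hFE
  have hn : (-(alp : UnitAddCircle)) = ((-alp : ℝ) : UnitAddCircle) := by push_cast; rfl
  rw [hn, hexp, hexp] at hFE
  obtain ⟨S2, B2⟩ := dirS (a := 1) (by linarith) (by linarith) (c := fun m => eR alp ^ (m + 1))
    (fun m => by rw [norm_pow, norm_eR, one_pow]) (w := 1 - s) (by simp; linarith) (by simp; linarith)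
  refine ⟨eR (1 * alp) * Complex.exp (-Real.pi * Complex.I * (1 - s)) *
    ∑' m : ℕ, eR alp ^ (m + 1) * ((m + 1 : ℝ) : ℂ) ^ (-(1 - s)), ?_, ?_⟩
  · rw [norm_mul, norm_mul, norm_eR, one_mul, norm_exp_eta, mul_comm]
    gcongr
  rw [hFE, lerchSeries_eq]
  have e0 : ∑' m : ℕ, eR (-alp) ^ (m + 1) * ((m + 1 : ℝ) : ℂ) ^ (-(1 - s)) =
    (eR alp)⁻¹ * ∑' m : ℕ, eR (-alp) ^ m * ((m + 1 : ℝ) : ℂ) ^ (-(1 - s)) := by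
    rw [← tsum_mul_left]; apply tsum_congr; intro m; rw [pow_succ, eR_neg]; ring
  have e2 : Complex.exp (-Real.pi * Complex.I * (1 - s) / 2) =
        Complex.exp (Real.pi * Complex.I * (1 - s) / 2) * Complex.exp (-Real.pi * Complex.I * (1 - s)) := by
      rw [← Complex.exp_add]; congr 1; ring
  have e3 : eR alp ≠ 0 := Complex.exp_ne_zero _
  rw [e0, e2]
  unfold chiL
  rw [show -(1 - s) = s - 1 by ring, show (Real.pi : ℂ) * Complex.I * (1 - s) / 2 = -Real.pi * Complex.I * (s - 1) / 2 by ring, one_mul]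
  push_cast
  field_simp
  ring

theorem lerch_FE {lam alp : ℝ} (hl0 : 0 < lam) (hl1 : lam ≤ 1) (h0 : 0 < alp) (h1 : alp ≤ 1)
    {F : ℂ → ℂ} (hF : IsLerch lam alp F) : ∃ C, 0 ≤ C ∧ ∀ s : ℂ, -2 < s.re → s.re ≤ -1 → 0 < s.im →
    ∃ η : ℂ, ‖η‖ ≤ C * Real.exp (-Real.pi * s.im) ∧
      eR (lam * alp) * F s = chiL s * (lerchSeries (-alp) lam (1 - s) + η) := by
  rcases hl1.lt_or_eq with h | rfl
  · exact lerch_FE_lt hl0 h h0 h1 hF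
  · exact lerch_FE_one h0 h1 hF

end P8

section P9
open Metric Set Filter Topology MeasureTheory Asymptotics

/-- normalised Dirichlet series -/
noncomputable def dP (lam alp : ℝ) (s : ℂ) : ℂ := (alp : ℂ) ^ s * lerchSeries lam alp s

noncomputable def dq (alp : ℝ) : ℝ := ∑' m : ℕ, (alp / (m + 1 + alp)) ^ (1 + alp)

lemma telescope_step {a : ℝ} (h0 : 0 < a) (m : ℕ) :
    a * ((m : ℝ) + 1 + a) ^ (-(1 + a)) < ((m : ℝ) + a) ^ (-a) - ((m : ℝ) + 1 + a) ^ (-a) := by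
  have hm : (0:ℝ) ≤ m := Nat.cast_nonneg m
  set y : ℝ := (m : ℝ) + 1 + a with hy
  have hy1 : 1 < y := by linarith
  have hy0 : 0 < y := by linarith
  have e1 : (m : ℝ) + a = y * (1 - 1 / y) := by field_simp; linarith
  have ht : 0 < 1 - 1 / y := by rw [sub_pos, div_lt_one hy0]; exact hy1
  have hlog : Real.log (1 - 1 / y) < - (1 / y) := by
    have := Real.log_lt_sub_one_of_pos ht (by have : 0 < 1 / y := by positivity
                                              linarith)
    linarith
  have h2 : 1 + a / y < (1 - 1 / y) ^ (-a) := by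
    rw [Real.rpow_def_of_pos ht]
    have := Real.add_one_le_exp (Real.log (1 - 1 / y) * (-a))
    have h3 : a / y < Real.log (1 - 1 / y) * (-a) := by
      have : a / y = a * (1 / y) := by ring
      rw [this]; nlinarith
    linarith
  rw [e1, Real.mul_rpow hy0.le ht.le]
  have h3 : a * y ^ (-(1 + a)) = y ^ (-a) * (a / y) := by
    rw [show -(1 + a) = -a - 1 by ring, Real.rpow_sub_one hy0.ne']; ring
  rw [h3]
  have : 0 < y ^ (-a) := by positivity
  nlinarith

lemma telescope_sum {a : ℝ} (h0 : 0 < a) :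
    HasSum (fun m : ℕ => ((m : ℝ) + a) ^ (-a) - ((m : ℝ) + 1 + a) ^ (-a)) (a ^ (-a)) := by
  rw [hasSum_iff_tendsto_nat_of_nonneg]
  · have : ∀ n : ℕ, ∑ m ∈ Finset.range n, (((m : ℝ) + a) ^ (-a) - ((m : ℝ) + 1 + a) ^ (-a)) =
        a ^ (-a) - ((n : ℝ) + a) ^ (-a) := by
      intro n
      have := Finset.sum_range_sub' (fun m : ℕ => ((m : ℝ) + a) ^ (-a)) n
      simpa using this
    simp_rw [this]
    have h2 : Tendsto (fun n : ℕ => ((n : ℝ) + a) ^ (-a)) atTop (𝓝 0) :=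
      (tendsto_rpow_neg_atTop h0).comp (tendsto_atTop_add_const_right _ _ tendsto_natCast_atTop_atTop)
    simpa using h2.const_sub (a ^ (-a))
  · intro m
    have := telescope_step h0 m
    have h2 : 0 < a * ((m : ℝ) + 1 + a) ^ (-(1 + a)) := by positivity
    linarith

lemma dq_term {a : ℝ} (h0 : 0 < a) (m : ℕ) : (a / (m + 1 + a)) ^ (1 + a) =
    a ^ a * (a * ((m : ℝ) + 1 + a) ^ (-(1 + a))) := by
  rw [Real.div_rpow h0.le (by positivity), Real.rpow_neg (by positivity), Real.rpow_add h0, Real.rpow_one]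
  ring

lemma dq_summable {a : ℝ} (h0 : 0 < a) : Summable (fun m : ℕ => (a / ((m : ℝ) + 1 + a)) ^ (1 + a)) := by
  simp_rw [dq_term h0]
  apply Summable.mul_left
  exact Summable.of_nonneg_of_le (fun m => by positivity) (fun m => (telescope_step h0 m).le) (telescope_sum h0).summable

lemma dq_lt {a : ℝ} (h0 : 0 < a) : dq a < 1 := by
  have e : (1:ℝ) = a ^ a * a ^ (-a) := by rw [← Real.rpow_add h0]; simp
  unfold dq
  have hs := (telescope_sum h0).summable.mul_left (a ^ a)
  have := Summable.tsum_lt_tsum (f := fun m : ℕ => (a / ((m : ℝ) + 1 + a)) ^ (1 + a)) (i := 0) (fun m => by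
      exact (dq_term h0 m).trans_le (mul_le_mul_of_nonneg_left (telescope_step h0 m).le (by positivity))) (by
      exact (dq_term h0 0).trans_lt (mul_lt_mul_of_pos_left (telescope_step h0 0) (by positivity)))
      (dq_summable h0) hs
  rw [tsum_mul_left, (telescope_sum h0).tsum_eq, ← e] at this
  exact this

lemma dq_nonneg {a : ℝ} (h0 : 0 < a) : 0 ≤ dq a := tsum_nonneg fun m => by positivity

lemma dP_sub_one {lam alp : ℝ} (h0 : 0 < alp) (h1 : alp ≤ 1) {s : ℂ} (hs : 1 + alp ≤ s.re) :
    ‖dP lam alp s - 1‖ ≤ dq alp * (1 / 2) ^ (s.re - (1 + alp)) := by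
  have ha : (alp : ℂ) ≠ 0 := by exact_mod_cast h0.ne'
  obtain ⟨S, -⟩ : Summable (fun m : ℕ => eR lam ^ m * ((m + alp : ℝ) : ℂ) ^ (-s)) ∧ True := by
    by_cases h : eR lam = 1
    · have := emc_one; rw [← h] at this
      exact ⟨(em_abs this (norm_eR lam).le h0 h1 (s := s) (by linarith)).1, trivial⟩
    · exact ⟨(em_abs (emc_ne h) (norm_eR lam).le h0 h1 (s := s) (by linarith)).1, trivial⟩
  have e1 : dP lam alp s - 1 = ∑' m : ℕ, (alp : ℂ) ^ s * (eR lam ^ (m + 1) * (((m + 1 : ℕ) + alp : ℝ) : ℂ) ^ (-s)) := by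
    unfold dP
    rw [lerchSeries_eq, S.tsum_eq_zero_add, mul_add, tsum_mul_left]
    have : (alp : ℂ) ^ s * (eR lam ^ 0 * (((0 : ℕ) + alp : ℝ) : ℂ) ^ (-s)) = 1 := by
      simp only [pow_zero, one_mul, Nat.cast_zero, zero_add]
      rw [← Complex.cpow_add _ _ ha]; simp
    rw [this]; ring
  rw [e1]
  have hsum := (dq_summable h0).mul_right ((1 / 2 : ℝ) ^ (s.re - (1 + alp)))
  have hval : dq alp * (1 / 2) ^ (s.re - (1 + alp)) = ∑' m : ℕ, (alp / ((m : ℝ) + 1 + alp)) ^ (1 + alp) * (1 / 2 : ℝ) ^ (s.re - (1 + alp)) := by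
    rw [tsum_mul_right]; rfl
  rw [hval]
  refine tsum_of_norm_bounded hsum.hasSum ?_
  intro m
  have hm : (0:ℝ) ≤ m := Nat.cast_nonneg m
  have hp : (0:ℝ) < (m + 1 : ℕ) + alp := by positivity
  rw [norm_mul, norm_mul, norm_pow, norm_eR, one_pow, one_mul, Complex.norm_cpow_eq_rpow_re_of_pos h0,
    Complex.norm_cpow_eq_rpow_re_of_pos hp, Complex.neg_re, Real.rpow_neg hp.le, ← div_eq_mul_inv, ← Real.div_rpow h0.le hp.le]
  push_cast
  have hx : 0 < alp / ((m : ℝ) + 1 + alp) := by positivity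
  have hx2 : alp / ((m : ℝ) + 1 + alp) ≤ 1 / 2 := by
    rw [div_le_div_iff₀ (by positivity) (by norm_num)]; linarith
  calc _ = (alp / ((m : ℝ) + 1 + alp)) ^ (1 + alp) * (alp / ((m : ℝ) + 1 + alp)) ^ (s.re - (1 + alp)) := by
        rw [← Real.rpow_add hx]; congr 1; ring
    _ ≤ _ := by
      gcongr

lemma dP_sub_one' {lam alp : ℝ} (h0 : 0 < alp) (h1 : alp ≤ 1) {s : ℂ} (hs : 1 + alp ≤ s.re) :
    ‖dP lam alp s - 1‖ ≤ dq alp := by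
  refine (dP_sub_one h0 h1 hs).trans ?_
  have : (1 / 2 : ℝ) ^ (s.re - (1 + alp)) ≤ 1 := Real.rpow_le_one (by norm_num) (by norm_num) (by linarith)
  nlinarith [dq_nonneg h0]

lemma dP_ge {lam alp : ℝ} (h0 : 0 < alp) (h1 : alp ≤ 1) {s : ℂ} (hs : 1 + alp ≤ s.re) :
    1 - dq alp ≤ ‖dP lam alp s‖ := by
  have h := dP_sub_one' (lam := lam) h0 h1 hs
  have := norm_sub_norm_le (1:ℂ) (1 - dP lam alp s)
  rw [sub_sub_cancel, norm_one, norm_sub_rev 1] at this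
  linarith

lemma lerchSeries_eq_dP {lam alp : ℝ} (h0 : 0 < alp) (s : ℂ) : lerchSeries lam alp s = (alp : ℂ) ^ (-s) * dP lam alp s := by
  have ha : (alp : ℂ) ≠ 0 := by exact_mod_cast h0.ne'
  unfold dP
  rw [← mul_assoc, ← Complex.cpow_add _ _ ha]; simp

lemma lerchSeries_diff (lam : ℝ) {alp : ℝ} (h0 : 0 < alp) (h1 : alp ≤ 1) {s : ℂ} (hs : 1 < s.re) :
    DifferentiableAt ℂ (lerchSeries lam alp) s := by
  obtain ⟨k, q, q1, q0, h⟩ : ∃ k q q1 q0, EMc (eR lam) k q q1 q0 := by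
    by_cases h : eR lam = 1
    · rw [h]; exact ⟨_, _, _, _, emc_one⟩
    · exact ⟨_, _, _, _, emc_ne h⟩
  have ho : IsOpen {s : ℂ | 1 < s.re} := isOpen_lt continuous_const Complex.continuous_re
  have ho2 : IsOpen {s : ℂ | -2 < s.re} := isOpen_lt continuous_const Complex.continuous_re
  have hd : DifferentiableAt ℂ (emG (eR lam) k q q1 q0 alp) s :=
    (emG_differentiable (norm_eR lam).le h0 h1).differentiableAt (ho2.mem_nhds (show -2 < s.re by linarith))
  have hs1 : s - 1 ≠ 0 := by intro h; have := congrArg Complex.re h; simp at this; linarith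
  have : DifferentiableAt ℂ (fun z => emG (eR lam) k q q1 q0 alp z / (z - 1)) s :=
    hd.div (by fun_prop) hs1
  apply this.congr_of_eventuallyEq
  filter_upwards [ho.mem_nhds hs] with z hz
  have hz' : 1 < z.re := hz
  have hz1 : z - 1 ≠ 0 := by intro h; have := congrArg Complex.re h; simp at this; linarith
  rw [lerchSeries_eq, ← (em_abs h (norm_eR lam).le h0 h1 hz').2]
  field_simp

lemma dP_diff (lam : ℝ) {alp : ℝ} (h0 : 0 < alp) (h1 : alp ≤ 1) {s : ℂ} (hs : 1 < s.re) :
    DifferentiableAt ℂ (dP lam alp) s := by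
  have ha : (alp : ℂ) ≠ 0 := by exact_mod_cast h0.ne'
  unfold dP
  exact (DifferentiableAt.const_cpow differentiableAt_id (Or.inl ha)).mul (lerchSeries_diff lam h0 h1 hs)

end P9

section P10
open Metric Set Filter Topology MeasureTheory Asymptotics

/-- shift of a vertical integral to the far right -/
lemma vert_bound {h : ℂ → ℂ} {x0 C : ℝ} (hC : 0 ≤ C) (hd : ∀ s : ℂ, x0 ≤ s.re → DifferentiableAt ℂ h s)
    (hb : ∀ s : ℂ, x0 ≤ s.re → ‖h s‖ ≤ C * Real.exp (-(1/2) * (s.re - x0))) {x : ℝ} (hx : x0 ≤ x) {A B : ℝ} (hAB : A ≤ B) :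
    ‖∫ y in A..B, h (x + y * Complex.I)‖ ≤ 4 * C := by
  have key : ∀ X : ℝ, x ≤ X → ‖∫ y in A..B, h (x + y * Complex.I)‖ ≤ 4 * C + C * Real.exp (-(1/2) * (X - x0)) * (B - A) := by
    intro X hX
    have hrect := Complex.integral_boundary_rect_eq_zero_of_differentiableOn h (x + A * Complex.I) (X + B * Complex.I)
      (by
        intro z hz
        apply (hd z _).differentiableWithinAt
        have := hz.1
        simp at this
        rw [uIcc_of_le hX] at this
        exact hx.trans this.1)
    simp only [Complex.add_re, Complex.add_im, Complex.mul_re, Complex.mul_im, Complex.ofReal_re, Complex.ofReal_im,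
      Complex.I_re, Complex.I_im, mul_zero, mul_one, sub_zero, zero_mul, add_zero, zero_add, sub_self] at hrect
    have hor : ∀ c : ℝ, ‖∫ t in x..X, h (t + c * Complex.I)‖ ≤ 2 * C := by
      intro c
      have hi : ∀ t : ℝ, HasDerivAt (fun t => -(2 * C) * Real.exp (-(1/2) * (t - x0))) (C * Real.exp (-(1/2) * (t - x0))) t := by
        intro t
        have h1 : HasDerivAt (fun t : ℝ => -(1/2) * (t - x0)) (-(1/2) * 1) t :=
          ((hasDerivAt_id t).sub_const x0).const_mul _
        exact (h1.exp.const_mul (-(2 * C))).congr_deriv (by ring)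
      have hcont : Continuous (fun t : ℝ => C * Real.exp (-(1/2) * (t - x0))) := by fun_prop
      have := intervalIntegral.norm_integral_le_of_norm_le hX (f := fun t : ℝ => h (t + c * Complex.I))
        (g := fun t => C * Real.exp (-(1/2) * (t - x0))) (μ := volume)
        (Eventually.of_forall fun t ht => by
          have := hb (t + c * Complex.I) (by simp; linarith [ht.1])
          simpa using this) (hcont.intervalIntegrable _ _)
      refine this.trans ?_
      rw [intervalIntegral.integral_eq_sub_of_hasDerivAt (fun t _ => hi t) (hcont.intervalIntegrable _ _)]
      have e1 : Real.exp (-(1/2) * (x - x0)) ≤ 1 := Real.exp_le_one_iff.mpr (by linarith)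
      have e2 := Real.exp_pos (-(1/2) * (X - x0))
      nlinarith
    have hver : ‖∫ y in A..B, h (X + y * Complex.I)‖ ≤ C * Real.exp (-(1/2) * (X - x0)) * (B - A) := by
      have := intervalIntegral.norm_integral_le_of_norm_le_const (a := A) (b := B) (f := fun y : ℝ => h (X + y * Complex.I))
        (C := C * Real.exp (-(1/2) * (X - x0))) (fun y _ => by
          have := hb (X + y * Complex.I) (by simp; linarith)
          simpa using this)
      rwa [abs_of_nonneg (by linarith : 0 ≤ B - A)] at this
    have e : Complex.I • ∫ y in A..B, h (x + y * Complex.I) =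
      (∫ t in x..X, h (t + A * Complex.I)) - (∫ t in x..X, h (t + B * Complex.I)) + Complex.I • ∫ y in A..B, h (X + y * Complex.I) := by
      linear_combination -hrect
    have e2 : ‖∫ y in A..B, h (x + y * Complex.I)‖ = ‖Complex.I • ∫ y in A..B, h (x + y * Complex.I)‖ := by
      rw [norm_smul]; simp
    rw [e2, e]
    refine (norm_add_le _ _).trans (add_le_add ((norm_sub_le _ _).trans ?_) ?_)
    · linarith [hor A, hor B]
    · rw [norm_smul]; simpa using hver
  have lim : Tendsto (fun X : ℝ => 4 * C + C * Real.exp (-(1/2) * (X - x0)) * (B - A)) atTop (𝓝 (4 * C + C * 0 * (B - A))) := by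
    apply Tendsto.const_add
    apply Tendsto.mul_const
    apply Tendsto.const_mul
    apply Real.tendsto_exp_atBot.comp
    exact (tendsto_atTop_add_const_right _ (-x0) tendsto_id).const_mul_atTop_of_neg (by norm_num)
  have := ge_of_tendsto lim (eventually_atTop.mpr ⟨x, key⟩)
  simpa using this

lemma abs_log_norm_one_add {z : ℂ} {q : ℝ} (hz : ‖z‖ ≤ q) (hq : q < 1) :
    |Real.log ‖1 + z‖| ≤ ‖z‖ * (1 + (1 - q)⁻¹) := by
  have h1 := Complex.norm_log_one_add_le (lt_of_le_of_lt hz hq)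
  have h2 : Real.log ‖1 + z‖ = (Complex.log (1 + z)).re := by rw [Complex.log_re]
  rw [h2]
  refine (Complex.abs_re_le_norm _).trans (h1.trans ?_)
  have h3 : (1 - ‖z‖)⁻¹ ≤ (1 - q)⁻¹ := inv_anti₀ (by linarith) (by linarith)
  have h4 : 0 < (1 - ‖z‖)⁻¹ := inv_pos.mpr (by linarith)
  have h5 := norm_nonneg z
  have h6 : ‖z‖ ^ 2 ≤ ‖z‖ := by nlinarith
  nlinarith [mul_le_mul h6 h3 h4.le h5]

lemma norm_clog_one_add {z : ℂ} {q : ℝ} (hz : ‖z‖ ≤ q) (hq : q < 1) :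
    ‖Complex.log (1 + z)‖ ≤ ‖z‖ * (1 + (1 - q)⁻¹) := by
  have h1 := Complex.norm_log_one_add_le (lt_of_le_of_lt hz hq)
  refine (h1.trans ?_)
  have h3 : (1 - ‖z‖)⁻¹ ≤ (1 - q)⁻¹ := inv_anti₀ (by linarith) (by linarith)
  have h4 : 0 < (1 - ‖z‖)⁻¹ := inv_pos.mpr (by linarith)
  have h5 := norm_nonneg z
  have h6 : ‖z‖ ^ 2 ≤ ‖z‖ := by nlinarith
  nlinarith [mul_le_mul h6 h3 h4.le h5]

lemma half_rpow_le {t : ℝ} (ht : 0 ≤ t) : (1 / 2 : ℝ) ^ t ≤ Real.exp (-(1/2) * t) := by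
  rw [Real.rpow_def_of_pos (by norm_num)]
  apply Real.exp_le_exp.mpr
  have : Real.log (1 / 2) ≤ -(1/2) := by
    have := Real.log_le_sub_one_of_pos (show (0:ℝ) < 1 / 2 by norm_num)
    linarith
  nlinarith

lemma dP_slit {lam alp : ℝ} (h0 : 0 < alp) (h1 : alp ≤ 1) {s : ℂ} (hs : 1 + alp ≤ s.re) :
    dP lam alp s ∈ Complex.slitPlane := by
  have := Complex.mem_slitPlane_of_norm_lt_one (z := dP lam alp s - 1) ((dP_sub_one' h0 h1 hs).trans_lt (dq_lt h0))
  simpa using this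

theorem J_bound (lam : ℝ) {alp : ℝ} (h0 : 0 < alp) (h1 : alp ≤ 1) : ∃ C, 0 ≤ C ∧ ∀ x : ℝ, 2 ≤ x → ∀ A B : ℝ, A ≤ B →
    |∫ y in A..B, Real.log ‖dP lam alp (x + y * Complex.I)‖| ≤ C := by
  have hq := dq_lt h0
  have hq0 := dq_nonneg h0
  set D : ℝ := dq alp * (1 + (1 - dq alp)⁻¹) with hD
  have hi : 0 < (1 - dq alp)⁻¹ := inv_pos.mpr (by linarith)
  have hD0 : 0 ≤ D := by positivity
  refine ⟨4 * D, by positivity, ?_⟩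
  intro x hx A B hAB
  have hdiff : ∀ s : ℂ, 1 + alp ≤ s.re → DifferentiableAt ℂ (fun s => Complex.log (dP lam alp s)) s := fun s hs =>
    (dP_diff lam h0 h1 (by linarith)).clog (dP_slit h0 h1 hs)
  have := vert_bound (h := fun s => Complex.log (dP lam alp s)) (x0 := 1 + alp) (C := D) hD0 hdiff (by
      intro s hs
      have b1 := norm_clog_one_add (dP_sub_one' (lam := lam) h0 h1 hs) hq
      have b2 := dP_sub_one (lam := lam) h0 h1 hs
      have b3 := half_rpow_le (t := s.re - (1 + alp)) (by linarith)
      rw [add_sub_cancel] at b1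
      refine b1.trans ?_
      rw [hD]
      calc _ ≤ (dq alp * Real.exp (-(1/2) * (s.re - (1 + alp)))) * (1 + (1 - dq alp)⁻¹) := by
            gcongr
            exact b2.trans (by gcongr)
        _ = _ := by ring) (x := x) (by linarith) hAB
  refine le_trans ?_ this
  have hcont : Continuous (fun y : ℝ => Complex.log (dP lam alp (x + y * Complex.I))) := by
    rw [continuous_iff_continuousAt]
    intro y
    exact (hdiff (x + y * Complex.I) (by simp; linarith)).continuousAt.comp (f := fun y : ℝ => (x + y * Complex.I : ℂ)) (by fun_prop)
  have e : ∫ y in A..B, Real.log ‖dP lam alp (x + y * Complex.I)‖ = (∫ y in A..B, Complex.log (dP lam alp (x + y * Complex.I))).re := by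
    have := (Complex.reCLM).intervalIntegral_comp_comm (hcont.intervalIntegrable A B) (μ := volume)
    simp only [Complex.reCLM_apply] at this
    rw [← this]
    simp only [Complex.log_re]
  rw [e]
  exact Complex.abs_re_le_norm _

end P10

section P11
open Metric Set Filter Topology MeasureTheory Asymptotics

lemma dP_ne_zero {lam alp : ℝ} (h0 : 0 < alp) (h1 : alp ≤ 1) {s : ℂ} (hs : 1 + alp ≤ s.re) : dP lam alp s ≠ 0 := by
  have := dP_ge (lam := lam) h0 h1 hs
  have := dq_lt h0
  exact norm_pos_iff.mp (by linarith)

lemma F_right_ne {lam alp : ℝ} (h0 : 0 < alp) (h1 : alp ≤ 1) {F : ℂ → ℂ} (hF : IsLerch lam alp F) {s : ℂ}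
    (hs : 1 + alp ≤ s.re) : F s ≠ 0 := by
  have ha : (alp : ℂ) ≠ 0 := by exact_mod_cast h0.ne'
  rw [hF.2 s (by linarith), lerchSeries_eq_dP h0]
  exact mul_ne_zero (by simp [Complex.cpow_eq_zero_iff, ha]) (dP_ne_zero h0 h1 hs)

lemma F_right_log {lam alp : ℝ} (h0 : 0 < alp) (h1 : alp ≤ 1) {F : ℂ → ℂ} (hF : IsLerch lam alp F) {s : ℂ}
    (hs : 1 + alp ≤ s.re) : Real.log ‖F s‖ = - s.re * Real.log alp + Real.log ‖dP lam alp s‖ := by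
  rw [hF.2 s (by linarith), lerchSeries_eq_dP h0, norm_mul, Complex.norm_cpow_eq_rpow_re_of_pos h0,
    Real.log_mul (by positivity) (norm_ne_zero_iff.mpr (dP_ne_zero h0 h1 hs)), Real.log_rpow h0, Complex.neg_re]

lemma chiL_ne {s : ℂ} (hs : s.re < 1) : chiL s ≠ 0 := by
  unfold chiL
  refine mul_ne_zero (mul_ne_zero (Complex.Gamma_ne_zero_of_re_pos (by simp; linarith)) ?_) (Complex.exp_ne_zero _)
  have : ((2 * Real.pi : ℝ) : ℂ) ≠ 0 := by exact_mod_cast (by positivity)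
  rw [Ne, Complex.cpow_eq_zero_iff]; tauto

theorem F_left {lam alp : ℝ} (hl0 : 0 < lam) (hl1 : lam ≤ 1) (h0 : 0 < alp) (h1 : alp ≤ 1)
    {F : ℂ → ℂ} (hF : IsLerch lam alp F) : ∃ T1 C : ℝ, 0 < T1 ∧ 0 ≤ C ∧ ∀ s : ℂ, -2 < s.re → s.re ≤ -1 → T1 ≤ s.im →
    F s ≠ 0 ∧ |Real.log ‖F s‖ - (Real.log ‖chiL s‖ - (1 - s.re) * Real.log lam + Real.log ‖dP (-alp) lam (1 - s)‖)| ≤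
      C * Real.exp (- s.im) := by
  obtain ⟨C, hC, hFE⟩ := lerch_FE hl0 hl1 h0 h1 hF
  have hq := dq_lt hl0
  set d := 1 - dq lam with hd
  have hd0 : 0 < d := by linarith
  refine ⟨max 1 (2 * C / d), 3 * (C / d), by positivity, by positivity, ?_⟩
  intro s hs2 hs1 hT
  have hT1 : 1 ≤ s.im := (le_max_left _ _).trans hT
  have hT2 : 2 * C / d ≤ s.im := (le_max_right _ _).trans hT
  obtain ⟨η, hη, hE⟩ := hFE s hs2 hs1 (by linarith)
  have hla : (lam : ℂ) ≠ 0 := by exact_mod_cast hl0.ne'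
  have hw : 1 + lam ≤ (1 - s).re := by simp; linarith
  have hP := dP_ge (lam := -alp) hl0 hl1 hw
  have hPne := dP_ne_zero (lam := -alp) hl0 hl1 hw
  set P := dP (-alp) lam (1 - s) with hPdef
  set z : ℂ := (lam : ℂ) ^ (1 - s) * η / P with hz
  have e1 : lerchSeries (-alp) lam (1 - s) + η = (lam : ℂ) ^ (-(1 - s)) * P * (1 + z) := by
    rw [lerchSeries_eq_dP hl0, ← hPdef, hz]
    have : (lam : ℂ) ^ (-(1 - s)) * (lam : ℂ) ^ (1 - s) = 1 := by rw [← Complex.cpow_add _ _ hla]; simp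
    field_simp
    linear_combination (-η) * this
  have hexp : Real.exp (-Real.pi * s.im) ≤ Real.exp (-s.im) := by
    apply Real.exp_le_exp.mpr
    nlinarith [Real.pi_gt_three]
  have hz1 : ‖z‖ ≤ C / d * Real.exp (-s.im) := by
    rw [hz, norm_div, norm_mul, Complex.norm_cpow_eq_rpow_re_of_pos hl0]
    have a1 : lam ^ (1 - s).re ≤ 1 := Real.rpow_le_one hl0.le hl1 (by linarith)
    calc _ ≤ 1 * (C * Real.exp (-s.im)) / d := by
          gcongr
          exact hη.trans (by gcongr)
      _ = _ := by ring
  have hz2 : ‖z‖ ≤ 1 / 2 := by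
    refine hz1.trans ?_
    have : Real.exp (-s.im) ≤ 1 / s.im := by
      rw [Real.exp_neg, ← one_div]
      exact one_div_le_one_div_of_le (by linarith) (by linarith [Real.add_one_le_exp s.im])
    calc C / d * Real.exp (-s.im) ≤ C / d * (1 / s.im) := by gcongr
      _ ≤ 1 / 2 := by
        rw [mul_one_div, div_le_div_iff₀ (by linarith) (by norm_num)]
        have : 2 * C / d = C / d * 2 := by ring
        linarith
  have h1z : 1 + z ≠ 0 := by
    intro h
    have : z = -1 := by linear_combination h
    rw [this] at hz2; norm_num at hz2
  have hχ := chiL_ne (s := s) (by linarith)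
  have hcp : (lam : ℂ) ^ (-(1 - s)) ≠ 0 := by rw [Ne, Complex.cpow_eq_zero_iff]; tauto
  rw [e1] at hE
  have hne : F s ≠ 0 := by
    intro h
    rw [h, mul_zero] at hE
    exact (mul_ne_zero hχ (mul_ne_zero (mul_ne_zero hcp hPne) h1z)) hE.symm
  refine ⟨hne, ?_⟩
  have hn := congrArg norm hE
  rw [norm_mul, norm_eR, one_mul] at hn
  rw [hn, norm_mul, norm_mul, norm_mul, Complex.norm_cpow_eq_rpow_re_of_pos hl0]
  have p1 : ‖chiL s‖ ≠ 0 := norm_ne_zero_iff.mpr hχ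
  have p2 : ‖P‖ ≠ 0 := norm_ne_zero_iff.mpr hPne
  have p3 : ‖1 + z‖ ≠ 0 := norm_ne_zero_iff.mpr h1z
  have p4 : lam ^ (-(1 - s)).re ≠ 0 := (Real.rpow_pos_of_pos hl0 _).ne'
  rw [Real.log_mul p1 (mul_ne_zero (mul_ne_zero p4 p2) p3), Real.log_mul (mul_ne_zero p4 p2) p3, Real.log_mul p4 p2, Real.log_rpow hl0]
  have e5 : (-(1 - s)).re = -(1 - s.re) := by simp
  rw [e5]
  have e6 : Real.log ‖chiL s‖ + (-(1 - s.re) * Real.log lam + Real.log ‖P‖ + Real.log ‖1 + z‖) -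
      (Real.log ‖chiL s‖ - (1 - s.re) * Real.log lam + Real.log ‖P‖) = Real.log ‖1 + z‖ := by ring
  rw [e6]
  have := abs_log_norm_one_add hz2 (by norm_num)
  norm_num at this
  calc _ ≤ _ := this
    _ ≤ (C / d * Real.exp (-s.im)) * 3 := by gcongr
    _ = _ := by ring

/-- growth on the discs centred at `3 + iT` -/
theorem F_disc {lam alp : ℝ} (hl0 : 0 < lam) (hl1 : lam ≤ 1) (h0 : 0 < alp) (h1 : alp ≤ 1)
    {F : ℂ → ℂ} (hF : IsLerch lam alp F) : ∃ C : ℝ, 0 ≤ C ∧ ∀ T : ℝ, 20 ≤ T →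
      IntegrableOn (fun z => Real.log ‖F z‖) (ball (3 + T * Complex.I) (19/4)) ∧
      ∫ z in ball (3 + T * Complex.I) (19/4), |Real.log ‖F z‖| ≤ C * Real.log T := by
  obtain ⟨k, q, q1, q0, hE⟩ := exists_emc lam hl0 hl1
  obtain ⟨C, hC, hg⟩ := emG_growth (k := k) (q := q) (q1 := q1) (q0 := q0) (norm_eR lam).le h0 h1 (δ := 1/4) (B := 8) (by norm_num)
  set d : ℝ := 1 - dq alp with hd
  have hd0 : 0 < d := by have := dq_lt h0; linarith
  set K : ℝ := 2 * Real.log (C + 1) + 8 * Real.log 2 + |Real.log d| with hK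
  have hK0 : 0 ≤ K := by
    have := Real.log_nonneg (by linarith : 1 ≤ C + 1)
    have := Real.log_nonneg (by norm_num : (1:ℝ) ≤ 2)
    positivity
  refine ⟨19/4 * (19/4) * (2 * Real.pi * (K + 8)), by positivity, ?_⟩
  intro T hT
  have hball : ∀ z ∈ closedBall (3 + T * Complex.I) (19/4), |z.re - 3| ≤ 19/4 ∧ |z.im - T| ≤ 19/4 := by
    intro z hz
    rw [mem_closedBall, dist_eq_norm] at hz
    have a := (Complex.abs_re_le_norm _).trans hz
    have b := (Complex.abs_im_le_norm _).trans hz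
    simp at a b
    exact ⟨a, b⟩
  have hb : ∀ z ∈ closedBall (3 + T * Complex.I) (19/4), ‖F z‖ ≤ (C + 1) * (2 * T) ^ 4 := by
    intro z hz
    obtain ⟨a, b⟩ := hball z hz
    rw [abs_le] at a b
    have him : 1 ≤ z.im := by linarith
    have h3 := lerch_eq_emG h0 h1 hF hE (s := z) (by linarith) (by linarith)
    have h4 := hg z (by linarith) (by linarith)
    rw [← h3, norm_mul] at h4
    have h5 : 1 ≤ ‖z - 1‖ := by
      have := Complex.abs_im_le_norm (z - 1)
      simp at this
      rw [abs_of_pos (by linarith)] at this; linarith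
    have h7 : ‖z‖ + 2 ≤ T + 19/4 + 31/4 + 2 := by
      have : ‖z‖ ≤ |z.re| + |z.im| := Complex.norm_le_abs_re_add_abs_im z
      have h7 : |z.re| ≤ 31/4 := abs_le.mpr ⟨by linarith, by linarith⟩
      have h8 : |z.im| ≤ T + 19/4 := abs_le.mpr ⟨by linarith, by linarith⟩
      linarith
    have h8 : ‖F z‖ ≤ ‖z - 1‖ * ‖F z‖ := by nlinarith [norm_nonneg (F z)]
    calc _ ≤ C * (‖z‖ + 2) ^ 4 := h8.trans h4
      _ ≤ (C + 1) * (2 * T) ^ 4 := by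
        gcongr
        · linarith
        · linarith
  have hF3 : 1 + alp ≤ (3 + T * Complex.I : ℂ).re := by simp; linarith
  have hc : F (3 + T * Complex.I) ≠ 0 := F_right_ne h0 h1 hF hF3
  have hM : 1 ≤ (C + 1) * (2 * T) ^ 4 := by
    have : 1 ≤ (2 * T) ^ 4 := one_le_pow₀ (by linarith)
    nlinarith
  have han : AnalyticOnNhd ℂ F (closedBall (3 + T * Complex.I) (19/4)) := by
    intro z hz
    obtain ⟨a, b⟩ := hball z hz
    rw [abs_le] at a b
    have ho : IsOpen {z : ℂ | 0 < z.im} := isOpen_lt continuous_const Complex.continuous_im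
    have : DifferentiableOn ℂ F {z : ℂ | 0 < z.im} := fun w hw =>
      (hF.1 w (by rintro rfl; simp at hw)).differentiableWithinAt
    exact this.analyticAt (ho.mem_nhds (show 0 < z.im by linarith))
  obtain ⟨I1, I2⟩ := integrableOn_log_disc (by norm_num) han hc hM hb
  refine ⟨I1, I2.trans ?_⟩
  have l1 : Real.log ((C + 1) * (2 * T) ^ 4) = Real.log (C + 1) + 4 * (Real.log 2 + Real.log T) := by
    rw [Real.log_mul (by positivity) (by positivity), Real.log_pow, Real.log_mul (by norm_num) (by linarith)]
    push_cast; ring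
  have l2 : -Real.log ‖F (3 + T * Complex.I)‖ ≤ |Real.log d| := by
    rw [F_right_log h0 h1 hF hF3]
    have a1 : Real.log alp ≤ 0 := Real.log_nonpos h0.le h1
    have a2 : Real.log d ≤ Real.log ‖dP lam alp (3 + T * Complex.I)‖ := Real.log_le_log hd0 (dP_ge h0 h1 hF3)
    have a3 := neg_abs_le (Real.log d)
    simp only [Complex.add_re, Complex.mul_re, Complex.ofReal_re, Complex.I_re, mul_zero, Complex.ofReal_im, Complex.I_im, zero_mul, sub_zero, add_zero, Complex.re_ofNat]
    linarith
  have l3 : 1 ≤ Real.log T := by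
    rw [Real.le_log_iff_exp_le (by linarith)]
    have := Real.exp_one_lt_d9
    linarith
  rw [l1]
  rw [mul_assoc (19/4 * (19/4)), mul_assoc (2 * Real.pi)]
  have : 2 * (Real.log (C + 1) + 4 * (Real.log 2 + Real.log T)) - Real.log ‖F (3 + T * Complex.I)‖ ≤ (K + 8) * Real.log T := by
    nlinarith
  gcongr

end P11

section P12
open Metric Set Filter Topology MeasureTheory Asymptotics

noncomputable def gW (x : ℝ) : ℝ := if x ∈ Icc (-5/4 : ℝ) (9/4) then x - 1/2 else 0

noncomputable def phiW (T0 T : ℝ) (z : ℂ) : ℝ := if z.im ∈ Ioc T0 T then gW z.re else 0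

noncomputable def mW (x : ℝ) : ℝ :=
  (2 * Real.pi)⁻¹ * (∫ θ in (0:ℝ)..(2 * Real.pi), gW (x - 1/8 * Real.cos θ)) - gW x

lemma gW_of_mem {x : ℝ} (h1 : -5/4 ≤ x) (h2 : x ≤ 9/4) : gW x = x - 1/2 := if_pos ⟨h1, h2⟩
lemma gW_of_lt {x : ℝ} (h : x < -5/4) : gW x = 0 := if_neg (fun h' => absurd h'.1 (by linarith))
lemma gW_of_gt {x : ℝ} (h : 9/4 < x) : gW x = 0 := if_neg (fun h' => absurd h'.2 (by linarith))

lemma gW_meas : Measurable gW := by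
  unfold gW
  exact Measurable.ite measurableSet_Icc (by fun_prop) measurable_const

lemma gW_abs (x : ℝ) : |gW x| ≤ 7/4 := by
  unfold gW
  split_ifs with h
  · rw [abs_le]; constructor <;> linarith [h.1, h.2]
  · norm_num

lemma gW_symm (x : ℝ) : gW (1 - x) = - gW x := by
  unfold gW
  by_cases h : x ∈ Icc (-5/4 : ℝ) (9/4)
  · have : 1 - x ∈ Icc (-5/4 : ℝ) (9/4) := ⟨by linarith [h.2], by linarith [h.1]⟩
    rw [if_pos h, if_pos this]; ring
  · have : 1 - x ∉ Icc (-5/4 : ℝ) (9/4) := fun h' => h ⟨by linarith [h'.2], by linarith [h'.1]⟩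
    rw [if_neg h, if_neg this]; ring

lemma phiW_meas (T0 T : ℝ) : Measurable (phiW T0 T) := by
  unfold phiW
  exact Measurable.ite (Complex.measurable_im measurableSet_Ioc) (gW_meas.comp Complex.measurable_re) measurable_const

lemma phiW_abs (T0 T : ℝ) (z : ℂ) : |phiW T0 T z| ≤ 7/4 := by
  unfold phiW
  split_ifs with h
  · exact gW_abs _
  · norm_num

lemma phiW_symm (T0 T : ℝ) (z : ℂ) : phiW T0 T (1 - (starRingEnd ℂ) z) = - phiW T0 T z := by
  unfold phiW
  have e1 : (1 - (starRingEnd ℂ) z).im = z.im := by simp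
  have e2 : (1 - (starRingEnd ℂ) z).re = 1 - z.re := by simp
  rw [e1, e2, gW_symm]
  split_ifs <;> simp

lemma phiW_ne {T0 T : ℝ} {z : ℂ} (h : phiW T0 T z ≠ 0) : z.im ∈ Ioc T0 T ∧ z.re ∈ Icc (-5/4 : ℝ) (9/4) := by
  unfold phiW gW at h
  split_ifs at h with h1 h2
  · exact ⟨h1, h2⟩
  · exact absurd rfl h
  · exact absurd rfl h

lemma wtW_abs {φ : ℂ → ℝ} {C : ℝ} (hC : ∀ z, |φ z| ≤ C) (r : ℝ) (w : ℂ) : |wtW φ r w| ≤ 2 * C := by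
  unfold wtW
  have h1 := intervalIntegral.norm_integral_le_of_norm_le_const (a := 0) (b := 2 * Real.pi)
    (f := fun θ => φ (w - circleMap 0 r θ)) (C := C) (fun θ _ => hC _)
  have hp := Real.pi_pos
  rw [sub_zero, abs_of_pos (by positivity), Real.norm_eq_abs] at h1
  refine (abs_sub _ _).trans ?_
  rw [abs_mul, abs_of_pos (by positivity : 0 < (2 * Real.pi)⁻¹)]
  have : (2 * Real.pi)⁻¹ * |∫ θ in (0:ℝ)..(2 * Real.pi), φ (w - circleMap 0 r θ)| ≤ C := by
    rw [inv_mul_le_iff₀ (by positivity)]; linarith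
  linarith [hC w]

lemma circle_re (r θ : ℝ) : (circleMap 0 r θ).re = r * Real.cos θ := by
  simp [circleMap, Complex.exp_ofReal_mul_I_re]

lemma circle_im (r θ : ℝ) : (circleMap 0 r θ).im = r * Real.sin θ := by
  simp [circleMap, Complex.exp_ofReal_mul_I_im]

lemma wtW_mid {T0 T : ℝ} {w : ℂ} (h1 : T0 + 1/8 < w.im) (h2 : w.im < T - 1/8) :
    wtW (phiW T0 T) (1/8) w = mW w.re := by
  unfold wtW mW
  have e : ∀ θ : ℝ, phiW T0 T (w - circleMap 0 (1/8) θ) = gW (w.re - 1/8 * Real.cos θ) := by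
    intro θ
    unfold phiW
    rw [Complex.sub_im, Complex.sub_re, circle_re, circle_im, if_pos]
    constructor <;> linarith [Real.sin_le_one θ, Real.neg_one_le_sin θ]
  simp_rw [e]
  unfold phiW
  rw [if_pos ⟨by linarith, by linarith⟩]

lemma refl_int {f : ℝ → ℝ} (hf : Function.Periodic f (2 * Real.pi)) :
    ∫ θ in (0:ℝ)..(2 * Real.pi), f (Real.pi - θ) = ∫ θ in (0:ℝ)..(2 * Real.pi), f θ := by
  rw [intervalIntegral.integral_comp_sub_left]
  have := hf.intervalIntegral_add_eq (Real.pi - 2 * Real.pi) 0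
  rw [zero_add] at this
  rw [← this]
  congr 1; ring

lemma mW_symm (x : ℝ) : mW (1 - x) = - mW x := by
  unfold mW
  rw [gW_symm]
  have e : ∀ θ : ℝ, gW (1 - x - 1/8 * Real.cos θ) = - gW (x - 1/8 * Real.cos (Real.pi - θ)) := by
    intro θ
    rw [← gW_symm, Real.cos_pi_sub]; congr 1; ring
  simp_rw [e]
  rw [intervalIntegral.integral_neg, refl_int (f := fun θ => gW (x - 1/8 * Real.cos θ))
    (fun θ => by simp only [Real.cos_add_two_pi])]
  ring

lemma wtW_symm (T0 T r : ℝ) (w : ℂ) : wtW (phiW T0 T) r (1 - (starRingEnd ℂ) w) = - wtW (phiW T0 T) r w := by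
  unfold wtW
  rw [phiW_symm]
  have e : ∀ θ : ℝ, phiW T0 T (1 - (starRingEnd ℂ) w - circleMap 0 r θ) = - phiW T0 T (w - circleMap 0 r (Real.pi - θ)) := by
    intro θ
    rw [← phiW_symm]; congr 1
    apply Complex.ext
    · simp [circle_re]; ring
    · simp [circle_im]; ring
  simp_rw [e]
  rw [intervalIntegral.integral_neg, refl_int (f := fun θ => phiW T0 T (w - circleMap 0 r θ))
    (fun θ => by simp only [periodic_circleMap 0 r θ])]
  ring

lemma mW_abs (x : ℝ) : |mW x| ≤ 7/2 := by
  unfold mW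
  have h1 := intervalIntegral.norm_integral_le_of_norm_le_const (a := 0) (b := 2 * Real.pi)
    (f := fun θ => gW (x - 1/8 * Real.cos θ)) (C := 7/4) (fun θ _ => gW_abs _)
  have hp := Real.pi_pos
  rw [sub_zero, abs_of_pos (by positivity), Real.norm_eq_abs] at h1
  refine (abs_sub _ _).trans ?_
  rw [abs_mul, abs_of_pos (by positivity : 0 < (2 * Real.pi)⁻¹)]
  have : (2 * Real.pi)⁻¹ * |∫ θ in (0:ℝ)..(2 * Real.pi), gW (x - 1/8 * Real.cos θ)| ≤ 7/4 := by
    rw [inv_mul_le_iff₀ (by positivity)]; linarith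
  linarith [gW_abs x]

lemma gW_comp_meas : Measurable (fun p : ℝ × ℝ => gW (p.1 - 1/8 * Real.cos p.2)) :=
  gW_meas.comp (by fun_prop)

lemma mW_meas : Measurable mW := by
  unfold mW
  refine Measurable.sub (Measurable.const_mul ?_ _) gW_meas
  have := (StronglyMeasurable.integral_prod_right (f := fun x θ : ℝ => gW (x - 1/8 * Real.cos θ)) gW_comp_meas.stronglyMeasurable (ν := volume.restrict (Ioc 0 (2 * Real.pi)))).measurable
  simp_rw [intervalIntegral.integral_of_le (by positivity : (0:ℝ) ≤ 2 * Real.pi)]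
  exact this

lemma mW_zero_mid {x : ℝ} (h1 : -9/8 < x) (h2 : x < 17/8) : mW x = 0 := by
  unfold mW
  have e : ∀ θ : ℝ, gW (x - 1/8 * Real.cos θ) = (x - 1/2) - 1/8 * Real.cos θ := by
    intro θ
    rw [gW_of_mem (by linarith [Real.cos_le_one θ]) (by linarith [Real.neg_one_le_cos θ])]; ring
  simp_rw [e]
  rw [intervalIntegral.integral_sub (by simp) (Continuous.intervalIntegrable (by fun_prop) _ _), gW_of_mem (by linarith) (by linarith)]
  simp
  have := Real.pi_ne_zero
  field_simp
  ring

lemma mW_zero_left {x : ℝ} (h1 : x < -11/8) : mW x = 0 := by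
  unfold mW
  have e : ∀ θ : ℝ, gW (x - 1/8 * Real.cos θ) = 0 := by
    intro θ
    rw [gW_of_lt (by linarith [Real.neg_one_le_cos θ])]
  simp_rw [e]
  rw [gW_of_lt (by linarith)]; simp

lemma mW_zero_right {x : ℝ} (h1 : 19/8 < x) : mW x = 0 := by
  have := mW_symm x
  rw [mW_zero_left (by linarith)] at this
  linarith

lemma ii_mul {f g : ℝ → ℝ} (hf : Continuous f) (hg : Measurable g) {C : ℝ} (hC : ∀ x, |g x| ≤ C) (a b : ℝ) :
    IntervalIntegrable (fun x => f x * g x) volume a b :=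
  ⟨(hf.intervalIntegrable a b).1.mul_bdd (c := C) hg.aestronglyMeasurable (Eventually.of_forall hC),
   (hf.intervalIntegrable a b).2.mul_bdd (c := C) hg.aestronglyMeasurable (Eventually.of_forall hC)⟩

lemma inner_int {u : ℝ} (hu : |u| ≤ 1/8) :
    ∫ x in (17/8 : ℝ)..(19/8), x * gW (x - u) =
      ((9/4 + u) ^ 3 - (17/8) ^ 3) / 3 - (u + 1/2) * ((9/4 + u) ^ 2 - (17/8) ^ 2) / 2 := by
  rw [abs_le] at hu
  have hii : ∀ a b : ℝ, IntervalIntegrable (fun x => x * gW (x - u)) volume a b := fun a b =>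
    ii_mul continuous_id (gW_meas.comp (by fun_prop)) (fun x => gW_abs (x - u)) a b
  rw [← intervalIntegral.integral_add_adjacent_intervals (hii (17/8) (9/4 + u)) (hii _ (19/8))]
  have e1 : ∫ x in (17/8 : ℝ)..(9/4 + u), x * gW (x - u) = ∫ x in (17/8 : ℝ)..(9/4 + u), (x ^ 2 - (u + 1/2) * x) := by
    apply intervalIntegral.integral_congr
    intro x hx
    rw [uIcc_of_le (by linarith)] at hx
    simp only
    rw [gW_of_mem (by linarith [hx.1]) (by linarith [hx.2])]; ring
  have e2 : ∫ x in (9/4 + u)..(19/8), x * gW (x - u) = 0 := by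
    rw [intervalIntegral.integral_of_le (by linarith)]
    apply setIntegral_eq_zero_of_forall_eq_zero
    intro x hx
    rw [gW_of_gt (by linarith [hx.1])]; simp
  rw [e1, e2, intervalIntegral.integral_sub (by simp) (Continuous.intervalIntegrable (by fun_prop) _ _), intervalIntegral.integral_const_mul]
  simp
  ring

theorem mR_val : ∫ x in (17/8 : ℝ)..(19/8), x * mW x = -1/512 := by
  have hswap : ∫ x in (17/8 : ℝ)..(19/8), ∫ θ in (0:ℝ)..(2 * Real.pi), x * gW (x - 1/8 * Real.cos θ) =
      ∫ θ in (0:ℝ)..(2 * Real.pi), ∫ x in (17/8 : ℝ)..(19/8), x * gW (x - 1/8 * Real.cos θ) := by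
    apply intervalIntegral_intervalIntegral_swap
    have h1 : IntegrableOn (fun p : ℝ × ℝ => p.1) (uIoc (17/8 : ℝ) (19/8) ×ˢ uIoc 0 (2 * Real.pi)) :=
      (continuous_fst.continuousOn.integrableOn_compact (isCompact_uIcc.prod isCompact_uIcc)).mono_set
        (prod_mono uIoc_subset_uIcc uIoc_subset_uIcc)
    exact h1.mul_bdd (c := 7/4) gW_comp_meas.aestronglyMeasurable (Eventually.of_forall fun p => gW_abs _)
  have hcos : ∀ θ : ℝ, |1/8 * Real.cos θ| ≤ 1/8 := by
    intro θ
    rw [abs_le]; constructor <;> linarith [Real.cos_le_one θ, Real.neg_one_le_cos θ]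
  have e1 : ∀ θ : ℝ, ∫ x in (17/8 : ℝ)..(19/8), x * gW (x - 1/8 * Real.cos θ) =
     (∫ x in (17/8 : ℝ)..(19/8), x * gW x) + 1/8 * (9/4 * (9/4) - 9/4 * (1/2) - ((9/4) ^ 2 - (17/8) ^ 2) / 2) * Real.cos θ - 1/256 * Real.cos θ ^ 2 - 1/3072 * Real.cos θ ^ 3 := by
    intro θ
    have h0 := inner_int (u := 0) (by norm_num)
    simp only [sub_zero] at h0
    rw [inner_int (hcos θ), h0]; ring
  have c3 : ∫ θ in (0:ℝ)..(2 * Real.pi), Real.cos θ ^ 3 = 0 := by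
    rw [integral_cos_pow]; simp
  have hsplit : ∫ x in (17/8 : ℝ)..(19/8), x * mW x =
      (2 * Real.pi)⁻¹ * (∫ x in (17/8 : ℝ)..(19/8), ∫ θ in (0:ℝ)..(2 * Real.pi), x * gW (x - 1/8 * Real.cos θ)) -
        ∫ x in (17/8 : ℝ)..(19/8), x * gW x := by
    have hx : ∀ x : ℝ, (2 * Real.pi)⁻¹ * (∫ θ in (0:ℝ)..(2 * Real.pi), x * gW (x - 1/8 * Real.cos θ)) = x * mW x + x * gW x := by
      intro x
      rw [intervalIntegral.integral_const_mul]; unfold mW; ring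
    rw [← intervalIntegral.integral_const_mul]
    simp_rw [hx]
    rw [intervalIntegral.integral_add (ii_mul (f := fun x => x) continuous_id mW_meas mW_abs _ _) (ii_mul (f := fun x => x) continuous_id gW_meas gW_abs _ _)]
    ring
  rw [hsplit, hswap]
  simp_rw [e1]
  rw [intervalIntegral.integral_sub, intervalIntegral.integral_sub, intervalIntegral.integral_add]
  · simp only [intervalIntegral.integral_const, intervalIntegral.integral_const_mul, c3, integral_cos_sq, integral_cos]
    simp
    have := Real.pi_ne_zero
    field_simp
    ring
  all_goals exact Continuous.intervalIntegrable (by fun_prop) _ _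

theorem mL_val : ∫ x in (-11/8 : ℝ)..(-9/8), (1 - x) * mW x = 1/512 := by
  have e : ∀ x : ℝ, (1 - x) * mW x = (fun u => -(u * mW u)) (1 - x) := by
    intro x; simp only; rw [mW_symm]; ring
  simp_rw [e]
  rw [intervalIntegral.integral_comp_sub_left (fun u => -(u * mW u)), intervalIntegral.integral_neg,
    show (1 - (-9/8) : ℝ) = 17/8 by norm_num, show (1 - (-11/8) : ℝ) = 19/8 by norm_num, mR_val]
  norm_num

lemma ker_int_shift (ρ : ℂ) : Integrable (fun z => kerK (1/8) (z - ρ)) ∧ ∫ z, kerK (1/8) (z - ρ) = Real.pi / 128 := by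
  obtain ⟨h1, h2⟩ := kerK_integral (r := 1/8) (by norm_num)
  refine ⟨h1.comp_sub_right ρ, ?_⟩
  rw [integral_sub_right_eq_self (fun z => kerK (1/8) z), h2]; ring

lemma ker_abs {φ : ℂ → ℝ} (hφ : Measurable φ) {C : ℝ} (hC : ∀ z, |φ z| ≤ C) (ρ : ℂ) :
    |∫ z, φ z * kerK (1/8) (z - ρ)| ≤ C * (Real.pi / 128) := by
  obtain ⟨h1, h2⟩ := ker_int_shift ρ
  rw [← h2, ← integral_const_mul, ← Real.norm_eq_abs]
  refine norm_integral_le_of_norm_le (f := fun z => φ z * kerK (1/8) (z - ρ)) (h1.const_mul C) (Eventually.of_forall fun z => ?_)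
  rw [norm_mul, Real.norm_eq_abs, Real.norm_eq_abs, abs_of_nonneg (kerK_nonneg _ _)]
  exact mul_le_mul_of_nonneg_right (hC z) (kerK_nonneg _ _)

lemma kerK_neg (r : ℝ) (u : ℂ) : kerK r (-u) = kerK r u := by unfold kerK; rw [norm_neg]

lemma ker_mid {T0 T : ℝ} {ρ : ℂ} (h1 : T0 + 1/8 ≤ ρ.im) (h2 : ρ.im ≤ T - 1/8) (h3 : -1 ≤ ρ.re) (h4 : ρ.re ≤ 2) :
    ∫ z, phiW T0 T z * kerK (1/8) (z - ρ) = Real.pi / 128 * (ρ.re - 1/2) := by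
  obtain ⟨i1, i2⟩ := ker_int_shift ρ
  have e : ∀ z, phiW T0 T z * kerK (1/8) (z - ρ) = (fun u : ℂ => u.re * kerK (1/8) u) (z - ρ) + (ρ.re - 1/2) * kerK (1/8) (z - ρ) := by
    intro z
    simp only
    by_cases h : 1/8 ≤ ‖z - ρ‖
    · rw [kerK_eq_zero (by norm_num) h]; ring
    · push Not at h
      have a := (Complex.abs_re_le_norm _).trans_lt h
      have b := (Complex.abs_im_le_norm _).trans_lt h
      rw [Complex.sub_re, abs_lt] at a
      rw [Complex.sub_im, abs_lt] at b
      unfold phiW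
      rw [if_pos ⟨by linarith [b.1], by linarith [b.2]⟩, gW_of_mem (by linarith [a.1]) (by linarith [a.2]), Complex.sub_re]
      ring
  have hInt : Integrable (fun u : ℂ => u.re * kerK (1/8) u) := by
    obtain ⟨h1, h2⟩ := kerK_integral (r := 1/8) (by norm_num)
    refine Integrable.mono h1 ((Complex.measurable_re.mul (kerK_measurable _)).aestronglyMeasurable) (Eventually.of_forall fun u => ?_)
    by_cases h : 1/8 ≤ ‖u‖
    · rw [kerK_eq_zero (by norm_num) h]; simp
    · push Not at h
      have a := (Complex.abs_re_le_norm u).trans_lt h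
      rw [norm_mul, Real.norm_eq_abs]
      nlinarith [norm_nonneg (kerK (1/8) u)]
  have hodd : ∫ u : ℂ, u.re * kerK (1/8) u = 0 := by
    have := integral_neg_eq_self (fun u : ℂ => u.re * kerK (1/8) u) volume
    simp only [Complex.neg_re, kerK_neg, neg_mul] at this
    rw [integral_neg] at this
    linarith
  simp_rw [e]
  rw [integral_add (hInt.comp_sub_right ρ) (i1.const_mul _), integral_sub_right_eq_self (fun u : ℂ => u.re * kerK (1/8) u), hodd, integral_const_mul, i2]
  ring

end P12

section P13
open Metric Set Filter Topology MeasureTheory Asymptotics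

lemma F_analytic {lam alp : ℝ} {F : ℂ → ℂ} (hF : IsLerch lam alp F) {z : ℂ} (hz : z ≠ 1) : AnalyticAt ℂ F z := by
  have : DifferentiableOn ℂ F {z : ℂ | z ≠ 1} := fun w hw => (hF.1 w hw).differentiableWithinAt
  exact this.analyticAt (isOpen_ne.mem_nhds hz)

lemma F_analytic_im {lam alp : ℝ} {F : ℂ → ℂ} (hF : IsLerch lam alp F) {z : ℂ} (hz : 0 < z.im) : AnalyticAt ℂ F z :=
  F_analytic hF (by rintro rfl; simp at hz)

theorem zeros_finite {lam alp : ℝ} (hl0 : 0 < lam) (hl1 : lam ≤ 1) (h0 : 0 < alp) (h1 : alp ≤ 1)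
    {F : ℂ → ℂ} (hF : IsLerch lam alp F) (T : ℝ) :
    {z : ℂ | F z = 0 ∧ -3/2 ≤ z.re ∧ 0 < z.im ∧ z.im ≤ T}.Finite := by
  obtain ⟨k, q, q1, q0, hE⟩ := exists_emc lam hl0 hl1
  by_contra hinf
  have hK : IsCompact (Icc (-3/2 : ℝ) 2 ×ℂ Icc (0:ℝ) T) := isCompact_Icc.reProdIm isCompact_Icc
  obtain ⟨x, hxK, hx⟩ := Set.Infinite.exists_accPt_of_subset_isCompact hinf hK (by
    rintro z ⟨a, b, c, d⟩
    refine Complex.mem_reProdIm.mpr ⟨⟨b, ?_⟩, c.le, d⟩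
    by_contra hh
    exact F_right_ne h0 h1 hF (s := z) (by linarith) a)
  rw [accPt_iff_frequently] at hx
  have hU : IsOpen {s : ℂ | -2 < s.re} := isOpen_lt continuous_const Complex.continuous_re
  have hG := (emG_differentiable (e := eR lam) (k := k) (q := q) (q1 := q1) (q0 := q0) (norm_eR lam).le h0 h1).analyticOnNhd hU
  have hc : IsPreconnected {s : ℂ | -2 < s.re} := (convex_halfSpace_re_gt (-2)).isPreconnected
  have hx2 : x ∈ {s : ℂ | -2 < s.re} := by
    have := (Complex.mem_reProdIm.mp hxK).1.1
    show -2 < x.re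
    linarith
  have := hG.eqOn_zero_of_preconnected_of_frequently_eq_zero hc hx2 (by
    rw [frequently_nhdsWithin_iff]
    refine hx.mono ?_
    rintro y ⟨hy, a, b, c, d⟩
    refine ⟨?_, hy⟩
    rw [← lerch_eq_emG h0 h1 hF hE (by linarith) c, a, mul_zero])
  have h2 := this (show (2 + Complex.I) ∈ {s : ℂ | -2 < s.re} by simp)
  rw [← lerch_eq_emG h0 h1 hF hE (by simp) (by simp)] at h2
  rcases mul_eq_zero.mp h2 with h | h
  · have := congrArg Complex.im h
    simp at this
  · exact F_right_ne h0 h1 hF (s := 2 + Complex.I) (by simp; linarith) h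

/-- The compact box carrying the integration. -/
def bS (T0 T : ℝ) : Set ℂ := Icc (-11/8 : ℝ) (19/8) ×ℂ Icc (T0 - 1/8) (T + 1/8)

lemma mem_bS {T0 T : ℝ} {z : ℂ} : z ∈ bS T0 T ↔ (-11/8 ≤ z.re ∧ z.re ≤ 19/8) ∧ T0 - 1/8 ≤ z.im ∧ z.im ≤ T + 1/8 := by
  unfold bS; rw [Complex.mem_reProdIm]; rfl

lemma bS_compact (T0 T : ℝ) : IsCompact (bS T0 T) := isCompact_Icc.reProdIm isCompact_Icc
lemma bS_meas (T0 T : ℝ) : MeasurableSet (bS T0 T) := (bS_compact T0 T).measurableSet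

lemma ball_mem {z : ℂ} {T : ℝ} (h1 : -11/8 ≤ z.re) (h2 : z.re ≤ 19/8) (h3 : |z.im - T| ≤ 9/8) :
    z ∈ ball (3 + T * Complex.I : ℂ) (19/4) := by
  rw [mem_ball, dist_eq_norm, ← sq_lt_sq₀ (norm_nonneg _) (by norm_num), Complex.sq_norm, Complex.normSq_apply]
  simp
  rw [abs_le] at h3
  nlinarith [h3.1, h3.2]

lemma F_intS {lam alp : ℝ} (hl0 : 0 < lam) (hl1 : lam ≤ 1) (h0 : 0 < alp) (h1 : alp ≤ 1)
    {F : ℂ → ℂ} (hF : IsLerch lam alp F) {T0 : ℝ} (hT0 : 25 ≤ T0) (T : ℝ) :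
    IntegrableOn (fun z => Real.log ‖F z‖) (bS T0 T) := by
  obtain ⟨C, hC, hd⟩ := F_disc hl0 hl1 h0 h1 hF
  refine LocallyIntegrableOn.integrableOn_isCompact ?_ (bS_compact T0 T)
  intro x hx
  rw [mem_bS] at hx
  refine ⟨ball (3 + x.im * Complex.I : ℂ) (19/4), mem_nhdsWithin_of_mem_nhds (isOpen_ball.mem_nhds ?_), (hd x.im (by linarith)).1⟩
  exact ball_mem hx.1.1 hx.1.2 (by simp; norm_num)

/-- rectangle indicator -/
noncomputable def phiR (T : ℝ) (z : ℂ) : ℝ := (Icc (-5/4 : ℝ) (9/4) ×ℂ Icc (T-1) (T+1)).indicator (fun _ => 1) z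

lemma phiR_meas (T : ℝ) : Measurable (phiR T) :=
  measurable_const.indicator (isCompact_Icc.reProdIm isCompact_Icc).measurableSet
lemma phiR_abs (T : ℝ) (z : ℂ) : |phiR T z| ≤ 1 := by
  unfold phiR indicator; split_ifs <;> simp
lemma phiR_nonneg (T : ℝ) (z : ℂ) : 0 ≤ phiR T z := by
  unfold phiR indicator; split_ifs <;> simp

theorem zero_count {lam alp : ℝ} (hl0 : 0 < lam) (hl1 : lam ≤ 1) (h0 : 0 < alp) (h1 : alp ≤ 1)
    {F : ℂ → ℂ} (hF : IsLerch lam alp F) : ∃ C : ℝ, 0 ≤ C ∧ ∀ T : ℝ, 25 ≤ T → ∀ Z : Finset ℂ,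
      (∀ z ∈ Z, F z = 0 ∧ -1 ≤ z.re ∧ |z.im - T| ≤ 7/8) → ∑ ρ ∈ Z, (zeroOrder F ρ : ℝ) ≤ C * Real.log T := by
  obtain ⟨C, hC, hd⟩ := F_disc hl0 hl1 h0 h1 hF
  refine ⟨2 * C * (128 / Real.pi), by positivity, ?_⟩
  intro T hT Z hZ
  obtain ⟨i1, i2⟩ := hd T (by linarith)
  have hfin := zeros_finite hl0 hl1 h0 h1 hF (T + 5)
  -- shrink the domain to a box
  set S : Set ℂ := Icc (-11/8 : ℝ) (19/8) ×ℂ Icc (T - 9/8) (T + 9/8) with hS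
  have hSm : MeasurableSet S := (isCompact_Icc.reProdIm isCompact_Icc).measurableSet
  have hSb : S ⊆ ball (3 + T * Complex.I : ℂ) (19/4) := by
    intro z hz
    obtain ⟨a, b⟩ := Complex.mem_reProdIm.mp hz
    exact ball_mem a.1 a.2 (abs_le.mpr ⟨by linarith [b.1], by linarith [b.2]⟩)
  obtain ⟨k1, k2⟩ := key_identity (f := F) hSm (fun z hz => F_analytic_im hF (by
      have := (Complex.mem_reProdIm.mp hz).2.1; linarith)) (phiR_meas T) (phiR_abs T) (r := 1/8) (by norm_num)
    (by
      intro z hz w hw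
      have hz' : z ∈ Icc (-5/4 : ℝ) (9/4) ×ℂ Icc (T-1) (T+1) := by
        by_contra h; exact hz (indicator_of_notMem h _)
      obtain ⟨a, b⟩ := Complex.mem_reProdIm.mp hz'
      rw [mem_closedBall, dist_eq_norm] at hw
      have c := (Complex.abs_re_le_norm _).trans hw
      have d := (Complex.abs_im_le_norm _).trans hw
      rw [Complex.sub_re, abs_le] at c
      rw [Complex.sub_im, abs_le] at d
      exact Complex.mem_reProdIm.mpr ⟨⟨by linarith [a.1, c.1], by linarith [a.2, c.2]⟩, by linarith [b.1, d.1], by linarith [b.2, d.2]⟩)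
    (i1.mono_set hSb) (hfin.toFinset ∪ Z) (by
      intro z hz h
      obtain ⟨a, b⟩ := Complex.mem_reProdIm.mp hz
      refine Finset.mem_union_left _ (hfin.mem_toFinset.mpr ⟨h, by linarith [a.1], by linarith [b.1], by linarith [b.2]⟩))
  have up : ∫ w in S, Real.log ‖F w‖ * wtW (phiR T) (1/8) w ≤ 2 * (C * Real.log T) := by
    calc _ ≤ ∫ w in S, 2 * |Real.log ‖F w‖| := by
          refine setIntegral_mono_on k1 ((i1.mono_set hSb).abs.const_mul 2) hSm fun w _ => ?_
          have := wtW_abs (phiR_abs T) (1/8) w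
          calc _ ≤ |Real.log ‖F w‖ * wtW (phiR T) (1/8) w| := le_abs_self _
            _ = |Real.log ‖F w‖| * |wtW (phiR T) (1/8) w| := abs_mul _ _
            _ ≤ |Real.log ‖F w‖| * (2 * 1) := by gcongr
            _ = _ := by ring
      _ ≤ ∫ w in ball (3 + T * Complex.I : ℂ) (19/4), 2 * |Real.log ‖F w‖| :=
          setIntegral_mono_set (i1.abs.const_mul 2) (Eventually.of_forall fun w => by positivity) hSb.eventuallyLE
      _ = 2 * ∫ w in ball (3 + T * Complex.I : ℂ) (19/4), |Real.log ‖F w‖| := integral_const_mul _ _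
      _ ≤ _ := by gcongr
  have kn : ∀ ρ, 0 ≤ (zeroOrder F ρ : ℝ) * ∫ z, phiR T z * kerK (1/8) (z - ρ) := fun ρ =>
    mul_nonneg (by positivity) (integral_nonneg fun z => mul_nonneg (phiR_nonneg T z) (kerK_nonneg _ _))
  have low : ∑ ρ ∈ Z, (zeroOrder F ρ : ℝ) * (Real.pi / 128) ≤ ∫ w in S, Real.log ‖F w‖ * wtW (phiR T) (1/8) w := by
    rw [k2]
    refine le_trans (Finset.sum_le_sum fun ρ hρ => ?_)
      (Finset.sum_le_sum_of_subset_of_nonneg (Finset.subset_union_right (s₁ := hfin.toFinset)) fun ρ _ _ => kn ρ)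
    obtain ⟨z1, z2, z3⟩ := hZ ρ hρ
    refine le_of_eq ?_
    congr 1
    rw [← (ker_int_shift ρ).2]
    congr 1
    ext z
    by_cases h : 1/8 ≤ ‖z - ρ‖
    · rw [kerK_eq_zero (by norm_num) h]; ring
    · push Not at h
      have hρ2 : ρ.re < 2 := by
        by_contra hh
        exact F_right_ne h0 h1 hF (s := ρ) (by linarith) z1
      have a := (Complex.abs_re_le_norm _).trans_lt h
      have b := (Complex.abs_im_le_norm _).trans_lt h
      rw [Complex.sub_re, abs_lt] at a
      rw [Complex.sub_im, abs_lt] at b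
      rw [abs_le] at z3
      have : z ∈ Icc (-5/4 : ℝ) (9/4) ×ℂ Icc (T-1) (T+1) :=
        Complex.mem_reProdIm.mpr ⟨⟨by linarith [a.1], by linarith [a.2]⟩, by linarith [b.1, z3.1], by linarith [b.2, z3.2]⟩
      rw [phiR, indicator_of_mem this, one_mul]
  rw [← Finset.sum_mul] at low
  have hpi := Real.pi_pos
  have := low.trans up
  calc _ = (∑ ρ ∈ Z, (zeroOrder F ρ : ℝ)) * (Real.pi / 128) * (128 / Real.pi) := by field_simp
    _ ≤ 2 * (C * Real.log T) * (128 / Real.pi) := by gcongr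
    _ = _ := by ring

end P13

section P14
open Metric Set Filter Topology MeasureTheory Asymptotics

lemma meas_reProdIm {s t : Set ℝ} (hs : MeasurableSet s) (ht : MeasurableSet t) : MeasurableSet (s ×ℂ t) :=
  (hs.preimage Complex.measurable_re).inter (ht.preimage Complex.measurable_im)

lemma box_int {h : ℂ → ℝ} {a b c d : ℝ} (hab : a ≤ b) (hcd : c ≤ d) (hh : ContinuousOn h (Icc a b ×ℂ Icc c d)) :
    IntegrableOn (fun w => h w * mW w.re) (Icc a b ×ℂ Ioo c d) ∧
    ∫ w in Icc a b ×ℂ Ioo c d, h w * mW w.re = ∫ x in a..b, mW x * ∫ y in c..d, h (x + y * Complex.I) := by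
  have hsub : Icc a b ×ℂ Ioo c d ⊆ Icc a b ×ℂ Icc c d := fun z hz => by
    obtain ⟨h1, h2⟩ := Complex.mem_reProdIm.mp hz
    exact Complex.mem_reProdIm.mpr ⟨h1, Ioo_subset_Icc_self h2⟩
  have hK : IsCompact (Icc a b ×ℂ Icc c d) := isCompact_Icc.reProdIm isCompact_Icc
  have i0 : IntegrableOn h (Icc a b ×ℂ Ioo c d) := (hh.integrableOn_compact hK).mono_set hsub
  have i1 : IntegrableOn (fun w => h w * mW w.re) (Icc a b ×ℂ Ioo c d) :=
    Integrable.mul_bdd (c := 7/2) i0 (mW_meas.comp Complex.measurable_re).aestronglyMeasurable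
      (Eventually.of_forall fun w => mW_abs _)
  refine ⟨i1, ?_⟩
  set g : ℝ × ℝ → ℝ := fun p => h (p.1 + p.2 * Complex.I) * mW p.1 with hg
  have e1 : ∀ w : ℂ, h w * mW w.re = g (Complex.measurableEquivRealProd w) := by
    intro w; simp [hg, Complex.measurableEquivRealProd_apply, Complex.re_add_im]
  have e2 : (Icc a b ×ℂ Ioo c d) = Complex.measurableEquivRealProd ⁻¹' (Icc a b ×ˢ Ioo c d) := by
    ext w; simp [Complex.mem_reProdIm, Complex.measurableEquivRealProd_apply]
  have i2 : IntegrableOn g (Icc a b ×ˢ Ioo c d) := by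
    rw [← Complex.volume_preserving_equiv_real_prod.integrableOn_comp_preimage Complex.measurableEquivRealProd.measurableEmbedding, ← e2]
    exact i1.congr (Eventually.of_forall fun w => e1 w)
  simp_rw [e1]
  rw [e2, Complex.volume_preserving_equiv_real_prod.setIntegral_preimage_emb Complex.measurableEquivRealProd.measurableEmbedding g]
  have : (volume : Measure (ℝ × ℝ)) = (volume : Measure ℝ).prod volume := rfl
  rw [this] at i2 ⊢
  rw [setIntegral_prod g i2, intervalIntegral.integral_of_le hab, integral_Icc_eq_integral_Ioc]
  congr 1
  ext x
  rw [intervalIntegral.integral_of_le hcd, ← integral_Ioc_eq_integral_Ioo, ← integral_const_mul]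
  congr 1
  ext y
  simp [hg, mul_comm]

lemma box_const {g : ℝ → ℝ} (hg : Continuous g) {a b c d : ℝ} (hab : a ≤ b) (hcd : c ≤ d) :
    ∫ w in Icc a b ×ℂ Ioo c d, g w.re * mW w.re = (d - c) * ∫ x in a..b, g x * mW x := by
  rw [(box_int (h := fun w => g w.re) hab hcd (hg.comp Complex.continuous_re).continuousOn).2, ← intervalIntegral.integral_const_mul]
  congr 1
  ext x
  simp
  ring

lemma box_bound {h : ℂ → ℝ} {a b c d C : ℝ} (hab : a ≤ b) (hb : b ≤ a + 1/4) (hcd : c ≤ d) (hC : 0 ≤ C) (hh : ContinuousOn h (Icc a b ×ℂ Icc c d))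
    (hC : ∀ x, a ≤ x → x ≤ b → |∫ y in c..d, h (x + y * Complex.I)| ≤ C) :
    |∫ w in Icc a b ×ℂ Ioo c d, h w * mW w.re| ≤ C := by
  rw [(box_int hab hcd hh).2]
  have := intervalIntegral.norm_integral_le_of_norm_le_const (a := a) (b := b) (C := 7/2 * C)
    (f := fun x => mW x * ∫ y in c..d, h (x + y * Complex.I)) (fun x hx => by
      rw [uIoc_of_le hab] at hx
      rw [norm_mul]
      exact mul_le_mul (mW_abs x) (hC x hx.1.le hx.2) (norm_nonneg _) (by norm_num))
  rw [Real.norm_eq_abs, abs_of_nonneg (sub_nonneg.mpr hab)] at this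
  refine this.trans ?_
  nlinarith

lemma chiL_cont {s : ℂ} (hs : s.re < 1) : ContinuousAt chiL s := by
  unfold chiL
  have h1 : DifferentiableAt ℂ (fun s : ℂ => Complex.Gamma (1 - s)) s := by
    refine DifferentiableAt.comp s (g := Complex.Gamma) (f := fun s : ℂ => 1 - s) (Complex.differentiableAt_Gamma _ ?_) (by fun_prop)
    intro m hm
    have := congrArg Complex.re hm
    simp at this
    have : (0:ℝ) ≤ m := by positivity
    linarith
  have hp : ((2 * Real.pi : ℝ) : ℂ) ≠ 0 := by exact_mod_cast (by positivity)
  have h2 : ContinuousAt (fun s : ℂ => ((2 * Real.pi : ℝ) : ℂ) ^ (s - 1)) s :=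
    ContinuousAt.const_cpow (by fun_prop) (Or.inl hp)
  exact (h1.continuousAt.mul h2).mul (by fun_prop)

lemma log_norm_cont {f : ℂ → ℂ} {s : ℂ} (h : ContinuousAt f s) (h0 : f s ≠ 0) : ContinuousAt (fun s => Real.log ‖f s‖) s :=
  h.norm.log (norm_ne_zero_iff.mpr h0)

/-- right side -/
theorem right_box {lam alp : ℝ} (h0 : 0 < alp) (h1 : alp ≤ 1)
    {F : ℂ → ℂ} (hF : IsLerch lam alp F) : ∃ C, 0 ≤ C ∧ ∀ c d : ℝ, c ≤ d →
    |(∫ w in Icc (17/8 : ℝ) (19/8) ×ℂ Ioo c d, Real.log ‖F w‖ * mW w.re) - (d - c) * (1/512) * Real.log alp| ≤ C := by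
  obtain ⟨C, hC, hJ⟩ := J_bound lam h0 h1
  refine ⟨C, hC, fun c d hcd => ?_⟩
  have hab : (17/8 : ℝ) ≤ 19/8 := by norm_num
  have hm : MeasurableSet (Icc (17/8 : ℝ) (19/8) ×ℂ Ioo c d) := meas_reProdIm measurableSet_Icc measurableSet_Ioo
  have hc1 : ContinuousOn (fun s => Real.log ‖dP lam alp s‖) (Icc (17/8 : ℝ) (19/8) ×ℂ Icc c d) := by
    intro s hs
    obtain ⟨a, b⟩ := Complex.mem_reProdIm.mp hs
    refine (log_norm_cont (dP_diff lam h0 h1 (by linarith [a.1])).continuousAt (dP_ne_zero h0 h1 (by linarith [a.1]))).continuousWithinAt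
  have e : ∫ w in Icc (17/8 : ℝ) (19/8) ×ℂ Ioo c d, Real.log ‖F w‖ * mW w.re =
     ∫ w in Icc (17/8 : ℝ) (19/8) ×ℂ Ioo c d, ((fun x : ℝ => -Real.log alp * x) w.re * mW w.re + Real.log ‖dP lam alp w‖ * mW w.re) := by
    refine setIntegral_congr_fun hm fun w hw => ?_
    obtain ⟨a, b⟩ := Complex.mem_reProdIm.mp hw
    simp only
    rw [F_right_log h0 h1 hF (by linarith [a.1])]; ring
  have hcx : Continuous (fun x : ℝ => -Real.log alp * x) := by fun_prop
  rw [e, integral_add (box_int (h := fun w => (fun x : ℝ => -Real.log alp * x) w.re) hab hcd (hcx.comp Complex.continuous_re).continuousOn).1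
    (box_int hab hcd hc1).1, box_const hcx hab hcd]
  have e2 : ∫ x in (17/8 : ℝ)..(19/8), -Real.log alp * x * mW x = Real.log alp * (1/512) := by
    simp_rw [mul_assoc]
    rw [intervalIntegral.integral_const_mul, mR_val]; ring
  rw [e2]
  have := box_bound hab (by norm_num) hcd hC hc1 (fun x hx _ => hJ x (by linarith) c d hcd)
  convert this using 2
  ring

/-- left side -/
theorem left_box {lam alp : ℝ} (hl0 : 0 < lam) (hl1 : lam ≤ 1) (h0 : 0 < alp) (h1 : alp ≤ 1)
    {F : ℂ → ℂ} (hF : IsLerch lam alp F) : ∃ T1 C, 0 < T1 ∧ 0 ≤ C ∧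
    (∀ s : ℂ, -2 < s.re → s.re ≤ -1 → T1 ≤ s.im → F s ≠ 0) ∧ ∀ c d : ℝ, T1 ≤ c → c ≤ d →
    |(∫ w in Icc (-11/8 : ℝ) (-9/8) ×ℂ Ioo c d, Real.log ‖F w‖ * mW w.re) -
      ((∫ w in Icc (-11/8 : ℝ) (-9/8) ×ℂ Ioo c d, Real.log ‖chiL w‖ * mW w.re) - (d - c) * (1/512) * Real.log lam)| ≤ C := by
  obtain ⟨T1, C1, hT1, hC1, hL⟩ := F_left hl0 hl1 h0 h1 hF
  obtain ⟨C, hC, hJ⟩ := J_bound (-alp) hl0 hl1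
  refine ⟨T1, C1 + C, hT1, by positivity, fun s a b c => (hL s a b c).1, fun c d hc hcd => ?_⟩
  have hab : (-11/8 : ℝ) ≤ -9/8 := by norm_num
  have hm : MeasurableSet (Icc (-11/8 : ℝ) (-9/8) ×ℂ Ioo c d) := meas_reProdIm measurableSet_Icc measurableSet_Ioo
  have hc1 : ContinuousOn (fun s => Real.log ‖dP (-alp) lam (1 - s)‖) (Icc (-11/8 : ℝ) (-9/8) ×ℂ Icc c d) := by
    intro s hs
    obtain ⟨a, b⟩ := Complex.mem_reProdIm.mp hs
    have hr : 2 ≤ (1 - s).re := by simp; linarith [a.2]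
    refine (log_norm_cont (f := fun s => dP (-alp) lam (1 - s)) ?_ (dP_ne_zero hl0 hl1 (by linarith))).continuousWithinAt
    exact ContinuousAt.comp (g := dP (-alp) lam) (f := fun s => 1 - s) (dP_diff (-alp) hl0 hl1 (by linarith)).continuousAt (by fun_prop)
  have hc2 : ContinuousOn (fun s => Real.log ‖chiL s‖) (Icc (-11/8 : ℝ) (-9/8) ×ℂ Icc c d) := by
    intro s hs
    obtain ⟨a, b⟩ := Complex.mem_reProdIm.mp hs
    exact (log_norm_cont (chiL_cont (by linarith [a.2])) (chiL_ne (by linarith [a.2]))).continuousWithinAt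
  have hc3 : ContinuousOn (fun s => Real.log ‖F s‖) (Icc (-11/8 : ℝ) (-9/8) ×ℂ Icc c d) := by
    intro s hs
    obtain ⟨a, b⟩ := Complex.mem_reProdIm.mp hs
    exact (log_norm_cont (F_analytic_im hF (by linarith [b.1])).continuousAt
      (hL s (by linarith [a.1]) (by linarith [a.2]) (by linarith [b.1])).1).continuousWithinAt
  have hcx : Continuous (fun x : ℝ => Real.log lam * (1 - x)) := by fun_prop
  have hcx' : ContinuousOn (fun w : ℂ => (fun x : ℝ => Real.log lam * (1 - x)) w.re) (Icc (-11/8 : ℝ) (-9/8) ×ℂ Icc c d) :=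
    (hcx.comp Complex.continuous_re).continuousOn
  set er : ℂ → ℝ := fun s => Real.log ‖F s‖ - (Real.log ‖chiL s‖ - (1 - s.re) * Real.log lam + Real.log ‖dP (-alp) lam (1 - s)‖) with her
  have hc4 : ContinuousOn er (Icc (-11/8 : ℝ) (-9/8) ×ℂ Icc c d) := by
    refine hc3.sub ((hc2.sub ?_).add hc1)
    exact Continuous.continuousOn (by have := Complex.continuous_re; fun_prop)
  have e : ∫ w in Icc (-11/8 : ℝ) (-9/8) ×ℂ Ioo c d, Real.log ‖F w‖ * mW w.re =
     ∫ w in Icc (-11/8 : ℝ) (-9/8) ×ℂ Ioo c d, ((Real.log ‖chiL w‖ * mW w.re - (fun x : ℝ => Real.log lam * (1 - x)) w.re * mW w.re)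
      + (Real.log ‖dP (-alp) lam (1 - w)‖ * mW w.re + er w * mW w.re)) := by
    refine setIntegral_congr_fun hm fun w hw => ?_
    simp only [her]
    ring
  have I1 := (box_int hab hcd hc1).1
  have I2 := (box_int hab hcd hc2).1
  have I4 := (box_int hab hcd hc4).1
  have I5 := (box_int hab hcd hcx').1
  have e2 : ∫ x in (-11/8 : ℝ)..(-9/8), Real.log lam * (1 - x) * mW x = Real.log lam * (1/512) := by
    simp_rw [mul_assoc]
    rw [intervalIntegral.integral_const_mul, mL_val]
  have e3 := integral_add (I2.sub I5) (I1.add I4)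
  simp only [Pi.sub_apply, Pi.add_apply] at e3
  rw [e, e3, integral_sub I2 I5, integral_add I1 I4, box_const hcx hab hcd, e2]
  have b1 := box_bound hab (by norm_num) hcd hC hc1 (fun x hx hx2 => by
    have := hJ (1 - x) (by linarith) (-d) (-c) (by linarith)
    rw [← intervalIntegral.integral_comp_neg] at this
    convert this using 7
    push_cast
    ring_nf)
  have b2 := box_bound hab (by norm_num) hcd hC1 hc4 (fun x hx hx2 => by
    have := intervalIntegral.norm_integral_le_of_norm_le (a := c) (b := d) (f := fun y : ℝ => er (x + y * Complex.I)) (g := fun y => C1 * Real.exp (-y)) (μ := volume) hcd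
      (Eventually.of_forall fun y hy => by
        have := (hL (x + y * Complex.I) (by simp; linarith) (by simp; linarith) (by simp; linarith [hy.1])).2
        simpa [her] using this) (Continuous.intervalIntegrable (by fun_prop) _ _)
    rw [intervalIntegral.integral_const_mul, intervalIntegral.integral_comp_neg (fun y => Real.exp y), integral_exp] at this
    refine this.trans ?_
    have a1 : Real.exp (-c) ≤ 1 := Real.exp_le_one_iff.mpr (by linarith)
    have a2 := Real.exp_pos (-d)
    nlinarith)
  rw [abs_le] at *
  constructor <;> linarith [b1.1, b1.2, b2.1, b2.2]

end P14

section P15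
open Metric Set Filter Topology MeasureTheory Asymptotics

lemma phiW_sub {T0 T : ℝ} {z : ℂ} (hz : phiW T0 T z ≠ 0) : closedBall z (1/8) ⊆ bS T0 T := by
  obtain ⟨⟨a1, a2⟩, b1, b2⟩ := phiW_ne hz
  intro w hw
  rw [mem_closedBall, dist_eq_norm] at hw
  have c := (Complex.abs_re_le_norm _).trans hw
  have d := (Complex.abs_im_le_norm _).trans hw
  rw [Complex.sub_re, abs_le] at c
  rw [Complex.sub_im, abs_le] at d
  exact mem_bS.mpr ⟨⟨by linarith, by linarith⟩, by linarith, by linarith⟩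

lemma keyF {lam alp : ℝ} (hl0 : 0 < lam) (hl1 : lam ≤ 1) (h0 : 0 < alp) (h1 : alp ≤ 1)
    {F : ℂ → ℂ} (hF : IsLerch lam alp F) {T0 : ℝ} (hT0 : 25 ≤ T0) (T : ℝ) (Z : Finset ℂ)
    (hZ : ∀ z ∈ bS T0 T, F z = 0 → z ∈ Z) :
    IntegrableOn (fun w => Real.log ‖F w‖ * wtW (phiW T0 T) (1/8) w) (bS T0 T) ∧
    ∫ w in bS T0 T, Real.log ‖F w‖ * wtW (phiW T0 T) (1/8) w =
      ∑ ρ ∈ Z, (zeroOrder F ρ : ℝ) * ∫ z, phiW T0 T z * kerK (1/8) (z - ρ) :=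
  key_identity (bS_meas T0 T) (fun z hz => F_analytic_im hF (by have := (mem_bS.mp hz).2.1; linarith))
    (phiW_meas T0 T) (phiW_abs T0 T) (by norm_num) (fun z hz => phiW_sub hz) (F_intS hl0 hl1 h0 h1 hF hT0 T) Z hZ

/-- the archimedean contribution -/
noncomputable def eArch (T0 T : ℝ) : ℝ :=
  ∫ w in Icc (-11/8 : ℝ) (-9/8) ×ℂ Ioo (T0 + 1/8) (T - 1/8), Real.log ‖chiL w‖ * mW w.re

lemma strip_bound {f W : ℂ → ℝ} {A : Set ℂ} (hA : MeasurableSet A) (hW : ∀ w, |W w| ≤ 7/2)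
    (hf : IntegrableOn f A) : |∫ w in A, f w * W w| ≤ 7/2 * ∫ w in A, |f w| := by
  rw [← integral_const_mul, ← Real.norm_eq_abs]
  refine norm_integral_le_of_norm_le (f := fun w => f w * W w) (hf.abs.const_mul (7/2)) (Eventually.of_forall fun w => ?_)
  rw [norm_mul, Real.norm_eq_abs, Real.norm_eq_abs, mul_comm]
  exact mul_le_mul_of_nonneg_right (hW w) (abs_nonneg _)

theorem main_lemma {lam alp : ℝ} (hl0 : 0 < lam) (hl1 : lam ≤ 1) (h0 : 0 < alp) (h1 : alp ≤ 1)
    {F : ℂ → ℂ} (hF : IsLerch lam alp F) : ∃ Tm : ℝ, 25 ≤ Tm ∧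
    (∀ s : ℂ, -2 < s.re → s.re ≤ -1 → Tm - 1 ≤ s.im → F s ≠ 0) ∧ ∀ T0, Tm ≤ T0 → ∃ C, 0 ≤ C ∧ ∀ T, T0 + 1 ≤ T →
    |(∫ w in bS T0 T, Real.log ‖F w‖ * wtW (phiW T0 T) (1/8) w) - (1/512) * (T - T0) * Real.log (alp / lam) - eArch T0 T|
      ≤ C * Real.log T := by
  obtain ⟨CR, hCR, hR⟩ := right_box h0 h1 hF
  obtain ⟨T1, CL, hT1, hCL, hne, hL⟩ := left_box hl0 hl1 h0 h1 hF
  obtain ⟨CD, hCD, hD⟩ := F_disc hl0 hl1 h0 h1 hF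
  refine ⟨max 25 (T1 + 1), le_max_left _ _, fun s a b c => hne s a b (by linarith [le_max_right 25 (T1 + 1)]), ?_⟩
  intro T0 hT0
  have hT25 : 25 ≤ T0 := (le_max_left _ _).trans hT0
  have hT1' : T1 + 1 ≤ T0 := (le_max_right _ _).trans hT0
  set A : Set ℂ := Icc (-11/8 : ℝ) (19/8) ×ℂ Icc (T0 - 1/8) (T0 + 1/8) with hA
  have hAm : MeasurableSet A := meas_reProdIm measurableSet_Icc measurableSet_Icc
  set K : ℝ := 7/2 * ∫ w in A, |Real.log ‖F w‖| with hK
  have hK0 : 0 ≤ K := by have := integral_nonneg (μ := volume.restrict A) (f := fun w => |Real.log ‖F w‖|) (fun w => abs_nonneg _); positivity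
  refine ⟨K + CR + CL + 7/2 * CD + 1/4 * (1/512) * |Real.log (alp / lam)|, by positivity, fun T hT => ?_⟩
  have hlogT : 1 ≤ Real.log T := by
    rw [Real.le_log_iff_exp_le (by linarith)]
    have := Real.exp_one_lt_d9
    linarith
  set B : Set ℂ := Icc (-11/8 : ℝ) (19/8) ×ℂ Icc (T - 1/8) (T + 1/8) with hB
  set M : Set ℂ := Icc (-11/8 : ℝ) (19/8) ×ℂ Ioo (T0 + 1/8) (T - 1/8) with hM
  set R : Set ℂ := Icc (17/8 : ℝ) (19/8) ×ℂ Ioo (T0 + 1/8) (T - 1/8) with hRd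
  set L : Set ℂ := Icc (-11/8 : ℝ) (-9/8) ×ℂ Ioo (T0 + 1/8) (T - 1/8) with hLd
  have hBm : MeasurableSet B := meas_reProdIm measurableSet_Icc measurableSet_Icc
  have hMm : MeasurableSet M := meas_reProdIm measurableSet_Icc measurableSet_Ioo
  have hRm : MeasurableSet R := meas_reProdIm measurableSet_Icc measurableSet_Ioo
  have hLm : MeasurableSet L := meas_reProdIm measurableSet_Icc measurableSet_Ioo
  set W := wtW (phiW T0 T) (1/8) with hW
  have hWb : ∀ w, |W w| ≤ 7/2 := fun w => by
    have := wtW_abs (phiW_abs T0 T) (1/8) w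
    linarith
  have hSeq : bS T0 T = A ∪ (M ∪ B) := by
    ext z
    rw [mem_bS, mem_union, mem_union, hA, hM, hB, Complex.mem_reProdIm, Complex.mem_reProdIm, Complex.mem_reProdIm]
    simp only [mem_Icc, mem_Ioo]
    constructor
    · rintro ⟨a, b, c⟩
      rcases le_or_gt z.im (T0 + 1/8) with h | h
      · exact Or.inl ⟨a, b, h⟩
      · rcases le_or_gt (T - 1/8) z.im with h' | h'
        · exact Or.inr (Or.inr ⟨a, h', c⟩)
        · exact Or.inr (Or.inl ⟨a, h, h'⟩)
    · rintro (⟨a, b, c⟩ | ⟨a, b, c⟩ | ⟨a, b, c⟩) <;> exact ⟨a, by linarith, by linarith⟩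
  have d1 : Disjoint A (M ∪ B) := by
    rw [Set.disjoint_left]
    intro z hz hz'
    have a := (Complex.mem_reProdIm.mp hz).2.2
    rcases hz' with h | h
    · have := (Complex.mem_reProdIm.mp h).2.1; linarith
    · have := (Complex.mem_reProdIm.mp h).2.1; linarith
  have d2 : Disjoint M B := by
    rw [Set.disjoint_left]
    intro z hz h
    have a := (Complex.mem_reProdIm.mp hz).2.2
    have := (Complex.mem_reProdIm.mp h).2.1; linarith
  have d3 : Disjoint L R := by
    rw [Set.disjoint_left]
    intro z hz h
    have a := (Complex.mem_reProdIm.mp hz).1.2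
    have := (Complex.mem_reProdIm.mp h).1.1; linarith
  have hfin := zeros_finite hl0 hl1 h0 h1 hF (T + 1/8)
  have I := (keyF hl0 hl1 h0 h1 hF hT25 T hfin.toFinset (fun z hz h => by
    rw [mem_bS] at hz
    exact hfin.mem_toFinset.mpr ⟨h, by linarith, by linarith, by linarith⟩)).1
  have IF := F_intS hl0 hl1 h0 h1 hF hT25 T
  rw [hSeq] at I IF
  have e1 : ∫ w in bS T0 T, Real.log ‖F w‖ * W w = (∫ w in A, Real.log ‖F w‖ * W w) +
      ((∫ w in M, Real.log ‖F w‖ * W w) + ∫ w in B, Real.log ‖F w‖ * W w) := by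
    rw [hSeq, setIntegral_union d1 (hMm.union hBm) (I.mono_set subset_union_left) (I.mono_set subset_union_right),
      setIntegral_union d2 hBm (I.mono_set (subset_union_left.trans subset_union_right)) (I.mono_set (subset_union_right.trans subset_union_right))]
  have e2 : ∫ w in M, Real.log ‖F w‖ * W w = ∫ w in M, Real.log ‖F w‖ * mW w.re :=
    setIntegral_congr_fun hMm fun w hw => by
      obtain ⟨a, b⟩ := Complex.mem_reProdIm.mp hw
      rw [hW, wtW_mid b.1 b.2]
  have IM : IntegrableOn (fun w => Real.log ‖F w‖ * mW w.re) M :=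
    (I.mono_set (subset_union_left.trans subset_union_right)).congr_fun (fun w hw => by
      obtain ⟨a, b⟩ := Complex.mem_reProdIm.mp hw
      simp only
      rw [wtW_mid b.1 b.2]) hMm
  have sLR : L ∪ R ⊆ M := by
    rintro z (hz | hz) <;> obtain ⟨a, b⟩ := Complex.mem_reProdIm.mp hz
    · exact Complex.mem_reProdIm.mpr ⟨⟨a.1, by linarith [a.2]⟩, b⟩
    · exact Complex.mem_reProdIm.mpr ⟨⟨by linarith [a.1], a.2⟩, b⟩
  have e3 : ∫ w in M, Real.log ‖F w‖ * mW w.re = (∫ w in L, Real.log ‖F w‖ * mW w.re) + ∫ w in R, Real.log ‖F w‖ * mW w.re := by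
    rw [← setIntegral_union d3 hRm (IM.mono_set (subset_union_left.trans sLR)) (IM.mono_set (subset_union_right.trans sLR))]
    refine setIntegral_eq_of_subset_of_forall_sdiff_eq_zero hMm sLR fun w hw => ?_
    obtain ⟨hw1, hw2⟩ := hw
    obtain ⟨a, b⟩ := Complex.mem_reProdIm.mp hw1
    rw [mW_zero_mid, mul_zero]
    · by_contra h
      push Not at h
      exact hw2 (Or.inl (Complex.mem_reProdIm.mpr ⟨⟨a.1, by linarith⟩, b⟩))
    · by_contra h
      push Not at h
      exact hw2 (Or.inr (Complex.mem_reProdIm.mpr ⟨⟨by linarith, a.2⟩, b⟩))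
  have bA : |∫ w in A, Real.log ‖F w‖ * W w| ≤ K := strip_bound hAm hWb (IF.mono_set subset_union_left)
  have bB : |∫ w in B, Real.log ‖F w‖ * W w| ≤ 7/2 * (CD * Real.log T) := by
    refine (strip_bound hBm hWb (IF.mono_set (subset_union_right.trans subset_union_right))).trans ?_
    obtain ⟨q1, q2⟩ := hD T (by linarith)
    refine mul_le_mul_of_nonneg_left (le_trans ?_ q2) (by norm_num)
    refine setIntegral_mono_set q1.abs (Eventually.of_forall fun w => abs_nonneg _) (LE.le.eventuallyLE fun z hz => ?_)
    obtain ⟨a, b⟩ := Complex.mem_reProdIm.mp hz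
    exact ball_mem a.1 a.2 (abs_le.mpr ⟨by linarith [b.1], by linarith [b.2]⟩)
  have bR := hR (T0 + 1/8) (T - 1/8) (by linarith)
  have bL := hL (T0 + 1/8) (T - 1/8) (by linarith) (by linarith)
  rw [← hRd] at bR
  rw [← hLd] at bL
  rw [e1, e2, e3, eArch, ← hLd]
  have hlog : Real.log (alp / lam) = Real.log alp - Real.log lam := Real.log_div h0.ne' hl0.ne'
  rw [hlog]
  have q1 := le_abs_self (Real.log alp - Real.log lam)
  have q2 := neg_abs_le (Real.log alp - Real.log lam)
  set Q := |Real.log alp - Real.log lam|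
  have hQ : 0 ≤ Q := abs_nonneg _
  have fin : K + CR + CL + 7/2 * (CD * Real.log T) + 1/4 * (1/512) * Q ≤ (K + CR + CL + 7/2 * CD + 1/4 * (1/512) * Q) * Real.log T := by
    have : 0 ≤ K + CR + CL + 1/4 * (1/512) * Q := by positivity
    nlinarith
  refine le_trans ?_ fin
  rw [abs_le] at bA bB bR bL ⊢
  constructor <;> linarith [bA.1, bA.2, bB.1, bB.2, bR.1, bR.2, bL.1, bL.2]

end P15

section P16
open Metric Set Filter Topology MeasureTheory Asymptotics

lemma isLerch_zeta : IsLerch 1 1 riemannZeta := by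
  refine ⟨fun s hs => differentiableAt_riemannZeta hs, fun s hs => ?_⟩
  rw [zeta_eq_tsum_one_div_nat_add_one_cpow hs]
  unfold lerchSeries
  congr 1
  ext m
  have : Complex.exp (2 * Real.pi * Complex.I * (1:ℝ) * m) = 1 :=
    Complex.exp_eq_one_iff.mpr ⟨m, by push_cast; ring⟩
  rw [this]
  norm_num

lemma gammaR_norm_conj {w : ℂ} : ‖Complex.Gammaℝ ((starRingEnd ℂ) w)‖ = ‖Complex.Gammaℝ w‖ := by
  rw [Complex.Gammaℝ_def, Complex.Gammaℝ_def, norm_mul, norm_mul]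
  have e : (starRingEnd ℂ) w / 2 = (starRingEnd ℂ) (w / 2) := by rw [map_div₀, map_ofNat]
  rw [e, Complex.Gamma_conj, Complex.norm_conj, Complex.norm_cpow_eq_rpow_re_of_pos Real.pi_pos,
    Complex.norm_cpow_eq_rpow_re_of_pos Real.pi_pos]
  simp

lemma gammaR_ne {w : ℂ} (hw : w.im ≠ 0) : Complex.Gammaℝ w ≠ 0 := by
  rw [Ne, Complex.Gammaℝ_eq_zero_iff]
  rintro ⟨n, rfl⟩
  simp at hw

lemma lam_eq {w : ℂ} (hw : w.im ≠ 0) : completedRiemannZeta w = riemannZeta w * Complex.Gammaℝ w := by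
  rw [riemannZeta_def_of_ne_zero (by rintro rfl; simp at hw), div_mul_cancel₀ _ (gammaR_ne hw)]

lemma lam_norm {w : ℂ} (hw : w.im ≠ 0) : ‖completedRiemannZeta (1 - (starRingEnd ℂ) w)‖ = ‖completedRiemannZeta w‖ := by
  rw [completedRiemannZeta_one_sub, lam_eq (by simpa using hw), lam_eq hw, norm_mul, norm_mul, riemannZeta_conj,
    Complex.norm_conj, gammaR_norm_conj]

lemma zeta_S_zero {T0 : ℝ} (hT0 : 25 ≤ T0) (T : ℝ) :
    ∫ w in bS T0 T, Real.log ‖riemannZeta w‖ * wtW (phiW T0 T) (1/8) w = 0 := by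
  have him : ∀ w ∈ bS T0 T, w.im ≠ 0 := fun w hw => by
    have := (mem_bS.mp hw).2.1
    intro h
    linarith
  -- the completed function
  have hLam : ∫ w in bS T0 T, Real.log ‖completedRiemannZeta w‖ * wtW (phiW T0 T) (1/8) w = 0 := by
    have mp : MeasurePreserving (fun w : ℂ => 1 - (starRingEnd ℂ) w) volume volume :=
      (Measure.measurePreserving_sub_left (volume : Measure ℂ) 1).comp (Complex.conjLIE.measurePreserving)
    have em : MeasurableEmbedding (fun w : ℂ => 1 - (starRingEnd ℂ) w) := by
      have : Function.Involutive (fun w : ℂ => 1 - (starRingEnd ℂ) w) := fun w => by simp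
      have hm : Measurable (fun w : ℂ => 1 - (starRingEnd ℂ) w) := mp.measurable
      exact (MeasurableEquiv.mk this.toPerm hm hm).measurableEmbedding
    have hpre : (fun w : ℂ => 1 - (starRingEnd ℂ) w) ⁻¹' (bS T0 T) = bS T0 T := by
      ext w
      rw [mem_preimage, mem_bS, mem_bS]
      simp only [Complex.sub_re, Complex.sub_im, Complex.one_re, Complex.one_im, Complex.conj_re, Complex.conj_im]
      constructor
      · rintro ⟨⟨a, b⟩, c, d⟩; exact ⟨⟨by linarith, by linarith⟩, by linarith, by linarith⟩
      · rintro ⟨⟨a, b⟩, c, d⟩; exact ⟨⟨by linarith, by linarith⟩, by linarith, by linarith⟩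
    have := mp.setIntegral_preimage_emb em (fun w => Real.log ‖completedRiemannZeta w‖ * wtW (phiW T0 T) (1/8) w) (bS T0 T)
    rw [hpre] at this
    have e : ∫ w in bS T0 T, Real.log ‖completedRiemannZeta (1 - (starRingEnd ℂ) w)‖ * wtW (phiW T0 T) (1/8) (1 - (starRingEnd ℂ) w)
        = ∫ w in bS T0 T, - (Real.log ‖completedRiemannZeta w‖ * wtW (phiW T0 T) (1/8) w) :=
      setIntegral_congr_fun (bS_meas T0 T) fun w hw => by
        rw [lam_norm (him w hw), wtW_symm]; ring
    rw [e, integral_neg] at this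
    linarith
  have hGan : AnalyticOnNhd ℂ (fun s => (Complex.Gammaℝ s)⁻¹) (bS T0 T) := fun z _ =>
    Complex.differentiable_Gammaℝ_inv.analyticAt z
  have hGc : ContinuousOn (fun z => Real.log ‖(Complex.Gammaℝ z)⁻¹‖) (bS T0 T) := fun z hz =>
    (log_norm_cont (hGan z hz).continuousAt (inv_ne_zero (gammaR_ne (him z hz)))).continuousWithinAt
  obtain ⟨g1, g2⟩ := key_identity (bS_meas T0 T) hGan (phiW_meas T0 T) (phiW_abs T0 T) (r := 1/8) (by norm_num) (fun z hz => phiW_sub hz)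
    (hGc.integrableOn_compact (bS_compact T0 T)) ∅ (fun z hz h => absurd h (inv_ne_zero (gammaR_ne (him z hz))))
  rw [Finset.sum_empty] at g2
  have hfin := zeros_finite (lam := 1) (alp := 1) one_pos le_rfl one_pos le_rfl isLerch_zeta (T + 1/8)
  obtain ⟨z1, -⟩ := keyF (lam := 1) (alp := 1) one_pos le_rfl one_pos le_rfl isLerch_zeta hT0 T hfin.toFinset (fun z hz h => by
    rw [mem_bS] at hz
    exact hfin.mem_toFinset.mpr ⟨h, by linarith, by linarith, by linarith⟩)
  have e : ∫ w in bS T0 T, Real.log ‖completedRiemannZeta w‖ * wtW (phiW T0 T) (1/8) w =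
      ∫ w in bS T0 T, (Real.log ‖riemannZeta w‖ * wtW (phiW T0 T) (1/8) w - Real.log ‖(Complex.Gammaℝ w)⁻¹‖ * wtW (phiW T0 T) (1/8) w) := by
    refine setIntegral_congr_ae (bS_meas T0 T) ?_
    filter_upwards [measure_eq_zero_iff_ae_notMem.mp (hfin.measure_zero volume)] with w hw hwS
    have hz : riemannZeta w ≠ 0 := fun h => hw (by
      rw [mem_bS] at hwS
      exact ⟨h, by linarith, by linarith, by linarith⟩)
    rw [lam_eq (him w hwS), norm_mul, norm_inv, Real.log_inv,
      Real.log_mul (norm_ne_zero_iff.mpr hz) (norm_ne_zero_iff.mpr (gammaR_ne (him w hwS)))]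
    ring
  rw [hLam, integral_sub z1 g1, g2] at e
  linarith

theorem arch_bound : ∃ Tm : ℝ, 25 ≤ Tm ∧ ∀ T0, Tm ≤ T0 → ∃ C, 0 ≤ C ∧ ∀ T, T0 + 1 ≤ T → |eArch T0 T| ≤ C * Real.log T := by
  obtain ⟨Tm, h25, -, h⟩ := main_lemma (lam := 1) (alp := 1) one_pos le_rfl one_pos le_rfl isLerch_zeta
  refine ⟨Tm, h25, fun T0 hT0 => ?_⟩
  obtain ⟨C, hC, hb⟩ := h T0 hT0
  refine ⟨C, hC, fun T hT => ?_⟩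
  have := hb T hT
  rw [zeta_S_zero (h25.trans hT0)] at this
  simpa using this

end P16

section P17
open Metric Set Filter Topology MeasureTheory Asymptotics

theorem final_bound {lam alp : ℝ} (hl0 : 0 < lam) (hl1 : lam ≤ 1) (h0 : 0 < alp) (h1 : alp ≤ 1)
    {F : ℂ → ℂ} (hF : IsLerch lam alp F) : ∃ T0 C : ℝ, ∀ T, T0 ≤ T →
    |(∑ᶠ ρ ∈ {ρ : ℂ | F ρ = 0 ∧ -1 ≤ ρ.re ∧ ρ.re < 1 + alp ∧ 0 < ρ.im ∧ ρ.im ≤ T},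
          (zeroOrder F ρ : ℝ) * (ρ.re - 1 / 2)) - T / (4 * Real.pi) * Real.log (alp / lam)| ≤ C * Real.log T := by
  obtain ⟨Tm, h25, hne, hmain⟩ := main_lemma hl0 hl1 h0 h1 hF
  obtain ⟨Ta, h25a, harch⟩ := arch_bound
  obtain ⟨Cz, hCz, hcount⟩ := zero_count hl0 hl1 h0 h1 hF
  set T0 : ℝ := max Tm Ta with hT0
  have hTm : Tm ≤ T0 := le_max_left _ _
  have hT25 : 25 ≤ T0 := h25.trans hTm
  obtain ⟨C1, hC1, hb1⟩ := hmain T0 hTm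
  obtain ⟨C2, hC2, hb2⟩ := harch T0 (le_max_right _ _)
  set Q : ℂ → ℝ := fun ρ => (zeroOrder F ρ : ℝ) * (ρ.re - 1/2) with hQ
  set P : Finset ℂ := (zeros_finite hl0 hl1 h0 h1 hF T0).toFinset.filter (fun ρ => -1 ≤ ρ.re ∧ ρ.im < T0 - 1/8) with hP
  set c0 : ℝ := ∑ ρ ∈ P, Q ρ with hc0
  set B : ℝ := T0 / (4 * Real.pi) * Real.log (alp / lam) with hB
  set lg : ℝ := Real.log (alp / lam) with hlg
  refine ⟨T0 + 1, |c0| + |B| + (C1 + C2) * (128 / Real.pi) + 13/4 * (Cz * Real.log T0 + Cz), fun T hT => ?_⟩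
  have hpi := Real.pi_pos
  have hlogT : 1 ≤ Real.log T := by
    rw [Real.le_log_iff_exp_le (by linarith)]
    have := Real.exp_one_lt_d9
    linarith
  have hlogT0 : 0 ≤ Real.log T0 := Real.log_nonneg (by linarith)
  have hfin := zeros_finite hl0 hl1 h0 h1 hF (T + 1/8)
  set D := hfin.toFinset with hD
  have memD : ∀ z, z ∈ D ↔ F z = 0 ∧ -3/2 ≤ z.re ∧ 0 < z.im ∧ z.im ≤ T + 1/8 := fun z => by
    rw [hD, hfin.mem_toFinset]; rfl
  have memP : ∀ z, z ∈ P ↔ (F z = 0 ∧ -3/2 ≤ z.re ∧ 0 < z.im ∧ z.im ≤ T0) ∧ (-1 ≤ z.re ∧ z.im < T0 - 1/8) := fun z => by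
    rw [hP, Finset.mem_filter, Set.Finite.mem_toFinset]; rfl
  set Z : Finset ℂ := D.filter (fun ρ => T0 - 1/8 ≤ ρ.im) with hZ
  have memZ : ∀ z, z ∈ Z ↔ (F z = 0 ∧ -3/2 ≤ z.re ∧ 0 < z.im ∧ z.im ≤ T + 1/8) ∧ T0 - 1/8 ≤ z.im := fun z => by
    rw [hZ, Finset.mem_filter, memD]
  clear_value P Z
  have hright : ∀ z, F z = 0 → z.re < 1 + alp := fun z hz => by
    by_contra h
    exact F_right_ne h0 h1 hF (s := z) (by linarith) hz
  have hleft : ∀ z ∈ Z, -1 ≤ z.re := fun z hz => by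
    rw [memZ] at hz
    by_contra h
    exact hne z (by linarith) (by linarith) (by linarith) hz.1.1
  -- the finsum
  have hset : {ρ : ℂ | F ρ = 0 ∧ -1 ≤ ρ.re ∧ ρ.re < 1 + alp ∧ 0 < ρ.im ∧ ρ.im ≤ T} =
      ((P ∪ Z.filter (fun ρ => ρ.im ≤ T) : Finset ℂ) : Set ℂ) := by
    ext z
    rw [Finset.mem_coe, Finset.mem_union, Finset.mem_filter, memP, memZ]
    constructor
    · rintro ⟨a, b, c, d, e⟩
      rcases lt_or_ge z.im (T0 - 1/8) with h | h
      · exact Or.inl ⟨⟨a, by linarith, d, by linarith⟩, b, h⟩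
      · exact Or.inr ⟨⟨⟨a, by linarith, d, by linarith⟩, h⟩, e⟩
    · rintro (⟨⟨a, b, c, d⟩, e, f⟩ | ⟨h, e⟩)
      · exact ⟨a, e, hright z a, c, by linarith⟩
      · exact ⟨h.1.1, hleft z ((memZ z).mpr h), hright z h.1.1, h.1.2.2.1, e⟩
  have hdis : Disjoint P (Z.filter (fun ρ => ρ.im ≤ T)) := by
    rw [Finset.disjoint_left]
    intro z hz hz'
    rw [memP] at hz
    rw [Finset.mem_filter, memZ] at hz'
    linarith [hz.2.2, hz'.1.2]
  have hsum : (∑ᶠ ρ ∈ {ρ : ℂ | F ρ = 0 ∧ -1 ≤ ρ.re ∧ ρ.re < 1 + alp ∧ 0 < ρ.im ∧ ρ.im ≤ T}, Q ρ) =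
      c0 + ∑ ρ ∈ Z, if ρ.im ≤ T then Q ρ else 0 := by
    rw [hset, finsum_mem_coe_finset, Finset.sum_union hdis, Finset.sum_filter]
  obtain ⟨-, k2⟩ := keyF hl0 hl1 h0 h1 hF hT25 T Z (fun z hz h => by
    rw [mem_bS] at hz
    exact (memZ z).mpr ⟨⟨h, by linarith, by linarith, by linarith⟩, by linarith⟩)
  have m1 := hb1 T hT
  have m2 := hb2 T hT
  rw [k2] at m1
  set k : ℂ → ℝ := fun ρ => ∫ z, phiW T0 T z * kerK (1/8) (z - ρ) with hk
  have hkb : ∀ ρ, |k ρ| ≤ 7/4 * (Real.pi / 128) := fun ρ => ker_abs (phiW_meas T0 T) (phiW_abs T0 T) ρ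
  have hterm : ∀ ρ ∈ Z, |(zeroOrder F ρ : ℝ) * k ρ - Real.pi / 128 * (if ρ.im ≤ T then Q ρ else 0)| ≤
      13/4 * (Real.pi / 128) * ((if ρ.im < T0 + 1/8 then (zeroOrder F ρ : ℝ) else 0) + (if T - 1/8 < ρ.im then (zeroOrder F ρ : ℝ) else 0)) := by
    intro ρ hρ
    have hre := hleft ρ hρ
    have hre2 := hright ρ ((memZ ρ).mp hρ).1.1
    have hN : (0:ℝ) ≤ zeroOrder F ρ := by positivity
    have big : |(zeroOrder F ρ : ℝ) * k ρ - Real.pi / 128 * (if ρ.im ≤ T then Q ρ else 0)| ≤ 13/4 * (Real.pi / 128) * (zeroOrder F ρ : ℝ) := by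
      have q : |(if ρ.im ≤ T then Q ρ else 0)| ≤ 3/2 * (zeroOrder F ρ : ℝ) := by
        split_ifs
        · rw [hQ]
          simp only
          rw [abs_mul, abs_of_nonneg hN, mul_comm]
          exact mul_le_mul_of_nonneg_right (abs_le.mpr ⟨by linarith, by linarith⟩) hN
        · rw [abs_zero]; positivity
      calc _ ≤ |(zeroOrder F ρ : ℝ) * k ρ| + |Real.pi / 128 * (if ρ.im ≤ T then Q ρ else 0)| := abs_sub _ _
        _ = (zeroOrder F ρ : ℝ) * |k ρ| + Real.pi / 128 * |(if ρ.im ≤ T then Q ρ else 0)| := by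
          rw [abs_mul, abs_mul, abs_of_nonneg hN, abs_of_pos (by positivity : 0 < Real.pi / 128)]
        _ ≤ (zeroOrder F ρ : ℝ) * (7/4 * (Real.pi / 128)) + Real.pi / 128 * (3/2 * (zeroOrder F ρ : ℝ)) := by
          gcongr
          exact hkb ρ
        _ = _ := by ring
    by_cases c1 : ρ.im < T0 + 1/8
    · rw [if_pos c1]
      refine big.trans (mul_le_mul_of_nonneg_left ?_ (by positivity))
      split_ifs <;> linarith
    · by_cases c2 : T - 1/8 < ρ.im
      · rw [if_pos c2]
        refine big.trans (mul_le_mul_of_nonneg_left ?_ (by positivity))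
        split_ifs <;> linarith
      · push Not at c1 c2
        rw [if_neg (not_lt.mpr c1), if_neg (not_lt.mpr c2), if_pos (by linarith), hk]
        simp only
        rw [ker_mid c1 c2 hre (by linarith), hQ]
        simp only
        rw [show (zeroOrder F ρ : ℝ) * (Real.pi / 128 * (ρ.re - 1/2)) - Real.pi / 128 * ((zeroOrder F ρ : ℝ) * (ρ.re - 1/2)) = 0 by ring]
        simp
  have n1 : ∑ ρ ∈ Z, (if ρ.im < T0 + 1/8 then (zeroOrder F ρ : ℝ) else 0) ≤ Cz * Real.log T0 := by
    rw [← Finset.sum_filter]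
    refine hcount T0 hT25 _ fun z hz => ?_
    rw [Finset.mem_filter] at hz
    have := (memZ z).mp hz.1
    exact ⟨this.1.1, hleft z hz.1, abs_le.mpr ⟨by linarith, by linarith⟩⟩
  have n2 : ∑ ρ ∈ Z, (if T - 1/8 < ρ.im then (zeroOrder F ρ : ℝ) else 0) ≤ Cz * Real.log T := by
    rw [← Finset.sum_filter]
    refine hcount T (by linarith) _ fun z hz => ?_
    rw [Finset.mem_filter] at hz
    have := (memZ z).mp hz.1
    exact ⟨this.1.1, hleft z hz.1, abs_le.mpr ⟨by linarith, by linarith⟩⟩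
  set SZ := ∑ ρ ∈ Z, (if ρ.im ≤ T then Q ρ else 0) with hSZ
  set KZ := ∑ ρ ∈ Z, (zeroOrder F ρ : ℝ) * k ρ with hKZ
  have hdiff : |KZ - Real.pi / 128 * SZ| ≤ 13/4 * (Real.pi / 128) * (Cz * Real.log T0 + Cz * Real.log T) := by
    rw [hKZ, hSZ, Finset.mul_sum, ← Finset.sum_sub_distrib]
    refine (Finset.abs_sum_le_sum_abs _ _).trans ((Finset.sum_le_sum hterm).trans ?_)
    rw [← Finset.mul_sum, Finset.sum_add_distrib]
    gcongr
  change |(∑ᶠ ρ ∈ {ρ : ℂ | F ρ = 0 ∧ -1 ≤ ρ.re ∧ ρ.re < 1 + alp ∧ 0 < ρ.im ∧ ρ.im ≤ T}, Q ρ) - T / (4 * Real.pi) * lg| ≤ _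
  rw [hsum]
  have hX : |Real.pi / 128 * SZ - 1/512 * (T - T0) * lg| ≤ 13/4 * (Real.pi / 128) * (Cz * Real.log T0 + Cz * Real.log T) + (C1 + C2) * Real.log T := by
    rw [abs_le] at *
    constructor <;> linarith [m1.1, m1.2, m2.1, m2.2, hdiff.1, hdiff.2]
  have hY : |SZ - (T - T0) / (4 * Real.pi) * lg| ≤ 13/4 * (Cz * Real.log T0 + Cz * Real.log T) + (C1 + C2) * (128 / Real.pi) * Real.log T := by
    have e : SZ - (T - T0) / (4 * Real.pi) * lg = 128 / Real.pi * (Real.pi / 128 * SZ - 1/512 * (T - T0) * lg) := by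
      field_simp
      ring
    rw [e, abs_mul, abs_of_pos (by positivity : 0 < 128 / Real.pi)]
    calc _ ≤ 128 / Real.pi * (13/4 * (Real.pi / 128) * (Cz * Real.log T0 + Cz * Real.log T) + (C1 + C2) * Real.log T) := by gcongr
      _ = _ := by field_simp
  have e2 : c0 + SZ - T / (4 * Real.pi) * lg = c0 - B + (SZ - (T - T0) / (4 * Real.pi) * lg) := by
    rw [hB]; ring
  rw [e2]
  have t1 : |c0 - B + (SZ - (T - T0) / (4 * Real.pi) * lg)| ≤ |c0| + |B| + |SZ - (T - T0) / (4 * Real.pi) * lg| :=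
    (abs_add_le _ _).trans (by gcongr; exact abs_sub _ _)
  have p1 : |c0| ≤ |c0| * Real.log T := le_mul_of_one_le_right (abs_nonneg _) hlogT
  have p2 : |B| ≤ |B| * Real.log T := le_mul_of_one_le_right (abs_nonneg _) hlogT
  have p3 : Cz * Real.log T0 ≤ Cz * Real.log T0 * Real.log T := le_mul_of_one_le_right (by positivity) hlogT
  nlinarith

end P17

/-- average symmetry of nontrivial zeros of the Lerch zeta-function. -/
theorem lerch_sum_of_zeros_symmetry (lam alp : ℝ) (hlam0 : 0 < lam) (hlam1 : lam ≤ 1)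
    (halp0 : 0 < alp) (halp1 : alp ≤ 1) (F : ℂ → ℂ) (hF : IsLerch lam alp F) :
    (fun T : ℝ =>
        (∑ᶠ ρ ∈ {ρ : ℂ | F ρ = 0 ∧ -1 ≤ ρ.re ∧ ρ.re < 1 + alp ∧ 0 < ρ.im ∧ ρ.im ≤ T},
          (zeroOrder F ρ : ℝ) * (ρ.re - 1 / 2))
        - T / (4 * Real.pi) * Real.log (alp / lam))
      =O[Filter.atTop] Real.log := by
  obtain ⟨T0, C, h⟩ := final_bound hlam0 hlam1 halp0 halp1 hF
  refine Asymptotics.IsBigO.of_bound C ?_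
  filter_upwards [Filter.eventually_ge_atTop T0, Filter.eventually_ge_atTop 1] with T hT hT1
  rw [Real.norm_eq_abs, Real.norm_of_nonneg (Real.log_nonneg hT1)]
  exact h T hT
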